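/- arXiv:math/9905083 — 2 statements merged into one kernel-verified Lean document; each statement's English description precedes it below -/
import Mathlib

section
/- For all nonnegative integers n and l, f^u_{n,2l} = binom(2n,n) · f_{n,l}; that is, the number of permutations π of {1,…,4n} satisfying π = π⁻¹ and π = ι∘π⁻¹∘ι, with π(x) ≠ x and π(x) ≠ ι(x) for all x, and longest increasing subsequence of length at most 2l, equals the central binomial coefficient binom(2n,n) times the number of permutations of {1,…,n} with longest increasing subsequence of length at most l. -/
noncomputable section

/-- `lisLE π l` means the longest increasing subsequence of the permutation `π`
has length at most `l`. -/
def lisLE {N : ℕ} (π : Equiv.Perm (Fin N)) (l : ℕ) : Prop :=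
  ∀ (k : ℕ) (f : Fin k → Fin N), StrictMono f → StrictMono (fun i => π (f i)) → k ≤ l

/-- `f_{n,l}`: the number of permutations of `{1,…,n}` whose longest increasing
subsequence has length at most `l`. -/
def permCount (n l : ℕ) : ℕ :=
  Nat.card {π : Equiv.Perm (Fin n) // lisLE π l}

/-- `f^u_{n,l}`: the number of permutations `π` of `{1,…,4n}` with `π = π⁻¹`,
`π = ι∘π⁻¹∘ι` (where `ι(x) = 4n+1-x`), `π(x) ≠ x` and `π(x) ≠ ι(x)` for all `x`,
whose longest increasing subsequence has length at most `l`. -/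
def fuCount (n l : ℕ) : ℕ :=
  Nat.card {π : Equiv.Perm (Fin (4 * n)) //
    π = π⁻¹ ∧ π = Fin.revPerm * π⁻¹ * Fin.revPerm ∧
    (∀ x, π x ≠ x) ∧ (∀ x, π x ≠ Fin.revPerm x) ∧ lisLE π l}

namespace WeylWalk

variable {l : ℕ}

/-- Integer vectors with `l` coordinates. -/
abbrev Pt (l : ℕ) := Fin l → ℤ

/-- Laurent polynomials in `l` variables. -/
abbrev LP (l : ℕ) := AddMonoidAlgebra ℤ (Pt l)


/-- The Laurent monomial with exponent `m`. -/
def mon (m : Pt l) : LP l := AddMonoidAlgebra.single m 1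

/-- The `i`-th unit vector. -/
def e (i : Fin l) : Pt l := Pi.single i 1

theorem e_self (i : Fin l) : e i i = 1 := by simp [e]

theorem e_of_ne {i j : Fin l} (h : j ≠ i) : e i j = 0 := by simp [e, h]

theorem mon_mul (a b : Pt l) : mon a * mon b = mon (a + b) := by
  simp [mon, AddMonoidAlgebra.single_mul_single]

theorem mon_zero : mon (0 : Pt l) = 1 := rfl

theorem mon_prod {ι : Type*} (s : Finset ι) (f : ι → Pt l) :
    ∏ i ∈ s, mon (f i) = mon (∑ i ∈ s, f i) := by
  classical
  induction s using Finset.induction_on with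
  | empty => simp [mon_zero]
  | insert a s ha ih => rw [Finset.prod_insert ha, Finset.sum_insert ha, ih, mon_mul]

theorem mon_pow (a : Pt l) (k : ℕ) : mon a ^ k = mon (k • a) := by
  induction k with
  | zero => simp [mon_zero]
  | succ k ih => rw [pow_succ, ih, mon_mul, succ_nsmul]

@[simp] theorem coeff_mon_mul (m z : Pt l) (F : LP l) :
    (mon m * F).coeff z = F.coeff (z - m) := by
  rw [mon, AddMonoidAlgebra.coeff_single_mul_apply, one_mul, neg_add_eq_sub]

theorem coeff_mon [DecidableEq (Pt l)] (m z : Pt l) :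
    (mon m).coeff z = if m = z then 1 else 0 := by
  simp [mon, Finsupp.single_apply]

/-- The variable `x_i`. -/
def X (i : Fin l) : LP l := mon (e i)

/-- The inverse variable `x_i⁻¹`. -/
def Y (i : Fin l) : LP l := mon (-e i)

theorem X_mul_Y (i : Fin l) : X i * Y i = 1 := by
  rw [X, Y, mon_mul, add_neg_cancel, mon_zero]

/-- Permutation of the variables. -/
def permAct (σ : Equiv.Perm (Fin l)) : LP l ≃ₐ[ℤ] LP l :=
  AddMonoidAlgebra.domCongr ℤ ℤ (LinearEquiv.funCongrLeft ℤ ℤ σ.symm).toAddEquiv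

theorem coeff_permAct (σ : Equiv.Perm (Fin l)) (F : LP l) (z : Pt l) :
    (permAct σ F).coeff z = F.coeff (z ∘ σ) := by
  rw [permAct, AddMonoidAlgebra.coeff_domCongr]
  rfl

theorem permAct_mon (σ : Equiv.Perm (Fin l)) (m : Pt l) :
    permAct σ (mon m) = mon (m ∘ σ.symm) := by
  rw [permAct, mon, AddMonoidAlgebra.domCongr_single]
  rfl

theorem e_comp_symm (σ : Equiv.Perm (Fin l)) (i : Fin l) : e i ∘ σ.symm = e (σ i) := by
  funext k
  by_cases h : k = σ i
  · subst h; simp [e]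
  · have : σ.symm k ≠ i := fun h' => h (by simp [← h'])
    simp [e, h, this]

theorem permAct_X (σ : Equiv.Perm (Fin l)) (i : Fin l) : permAct σ (X i) = X (σ i) := by
  rw [X, permAct_mon, e_comp_symm, X]

theorem permAct_Y (σ : Equiv.Perm (Fin l)) (i : Fin l) : permAct σ (Y i) = Y (σ i) := by
  rw [Y, permAct_mon, Y, ← e_comp_symm]
  rfl

/-- Negation of the `i`-th coordinate. -/
def flipEquiv (i : Fin l) : Pt l ≃+ Pt l where
  toFun z := Function.update z i (-z i)
  invFun z := Function.update z i (-z i)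
  left_inv z := by simp
  right_inv z := by simp
  map_add' a b := by
    funext k
    by_cases h : k = i
    · subst h; simp [add_comm]
    · simp [h]

/-- The substitution `x_i ↦ x_i⁻¹`. -/
def flipAct (i : Fin l) : LP l ≃ₐ[ℤ] LP l := AddMonoidAlgebra.domCongr ℤ ℤ (flipEquiv i)

theorem coeff_flipAct (i : Fin l) (F : LP l) (z : Pt l) :
    (flipAct i F).coeff z = F.coeff (Function.update z i (-z i)) := by
  rw [flipAct, AddMonoidAlgebra.coeff_domCongr]
  rfl

theorem flipAct_mon (i : Fin l) (m : Pt l) :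
    flipAct i (mon m) = mon (Function.update m i (-m i)) := by
  rw [flipAct, mon, AddMonoidAlgebra.domCongr_single]
  rfl

theorem flipAct_X_self (i : Fin l) : flipAct i (X i) = Y i := by
  rw [X, flipAct_mon, Y]
  congr 1
  funext k
  by_cases h : k = i
  · subst h; simp
  · simp [h, e]

theorem flipAct_Y_self (i : Fin l) : flipAct i (Y i) = X i := by
  rw [Y, flipAct_mon, X]
  congr 1
  funext k
  by_cases h : k = i
  · subst h; simp
  · simp [h, e]

theorem flipAct_X_of_ne {i j : Fin l} (h : j ≠ i) : flipAct i (X j) = X j := by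
  rw [X, flipAct_mon]
  congr 1
  funext k
  by_cases h' : k = i
  · subst h'; simp [e, h]
  · simp [h']

theorem flipAct_Y_of_ne {i j : Fin l} (h : j ≠ i) : flipAct i (Y j) = Y j := by
  rw [Y, flipAct_mon]
  congr 1
  funext k
  by_cases h' : k = i
  · subst h'; simp [e, h]
  · simp [h']

/-- The step polynomial `∑ x_i`. -/
def upStep (l : ℕ) : LP l := ∑ i, X i

/-- The step polynomial `∑ x_i⁻¹`. -/
def downStep (l : ℕ) : LP l := ∑ i, Y i

theorem coeff_X_mul (i : Fin l) (F : LP l) (z : Pt l) :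
    (X i * F).coeff z = F.coeff (z - e i) := coeff_mon_mul _ _ _

theorem coeff_Y_mul (i : Fin l) (F : LP l) (z : Pt l) :
    (Y i * F).coeff z = F.coeff (z + e i) := by
  rw [Y, coeff_mon_mul, sub_neg_eq_add]

theorem coeff_sum' {ι : Type*} (s : Finset ι) (f : ι → LP l) (z : Pt l) :
    (∑ i ∈ s, f i).coeff z = ∑ i ∈ s, (f i).coeff z := by
  classical
  induction s using Finset.induction_on with
  | empty => simp
  | insert a s ha ih => rw [Finset.sum_insert ha, Finset.sum_insert ha, ← ih]; simp

theorem coeff_upStep_mul (F : LP l) (z : Pt l) :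
    (upStep l * F).coeff z = ∑ i, F.coeff (z - e i) := by
  simp only [upStep, Finset.sum_mul, coeff_sum', coeff_X_mul]

theorem coeff_downStep_mul (F : LP l) (z : Pt l) :
    (downStep l * F).coeff z = ∑ i, F.coeff (z + e i) := by
  simp only [downStep, Finset.sum_mul, coeff_sum', coeff_Y_mul]

theorem permAct_upStep (σ : Equiv.Perm (Fin l)) : permAct σ (upStep l) = upStep l := by
  simp only [upStep, map_sum, permAct_X]
  exact Equiv.sum_comp σ X

theorem permAct_downStep (σ : Equiv.Perm (Fin l)) : permAct σ (downStep l) = downStep l := by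
  simp only [downStep, map_sum, permAct_Y]
  exact Equiv.sum_comp σ Y

theorem flipAct_step (i : Fin l) :
    flipAct i (upStep l + downStep l) = upStep l + downStep l := by
  simp only [upStep, downStep, ← Finset.sum_add_distrib, map_sum]
  refine Finset.sum_congr rfl fun j _ => ?_
  by_cases h : j = i
  · subst h; rw [map_add, flipAct_X_self, flipAct_Y_self, add_comm]
  · rw [map_add, flipAct_X_of_ne h, flipAct_Y_of_ne h]

/-- The vector `(1, 2, …, l)`. -/
def rho (l : ℕ) : Pt l := fun i => (i : ℤ) + 1

/-- The alternant `det (x_i ^ (j + 1))`. -/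
def alt (l : ℕ) : LP l := (Matrix.of fun i j : Fin l => (X i : LP l) ^ ((j : ℕ) + 1)).det

theorem alt_eq_sum (l : ℕ) :
    alt l = ∑ σ : Equiv.Perm (Fin l), (Equiv.Perm.sign σ : ℤ) • mon (rho l ∘ σ) := by
  rw [alt, ← Matrix.det_transpose, Matrix.det_apply]
  refine Finset.sum_congr rfl fun σ _ => ?_
  rw [Units.smul_def]
  congr 1
  simp only [Matrix.transpose_apply, Matrix.of_apply, X, mon_pow, mon_prod]
  congr 1
  funext k
  rw [Finset.sum_apply, Finset.sum_eq_single k]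
  · simp [e, rho]
  · intro b _ hb; simp [e, hb.symm]
  · simp

theorem permAct_alt (σ : Equiv.Perm (Fin l)) :
    permAct σ (alt l) = (Equiv.Perm.sign σ : ℤ) • alt l := by
  rw [alt, AlgEquiv.map_det]
  have := Matrix.det_permute σ (Matrix.of fun i j : Fin l => (X i : LP l) ^ ((j : ℕ) + 1))
  rw [zsmul_eq_mul, ← this]
  congr 1
  ext i j : 2
  simp [permAct_X]

theorem coeff_alt [DecidableEq (Pt l)] (z : Pt l) : (alt l).coeff z =
    ∑ σ : Equiv.Perm (Fin l), if rho l ∘ σ = z then (Equiv.Perm.sign σ : ℤ) else 0 := by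
  rw [alt_eq_sum, coeff_sum']
  refine Finset.sum_congr rfl fun σ _ => ?_
  rw [AddMonoidAlgebra.coeff_smul, Finsupp.smul_apply, coeff_mon]
  simp

theorem coeff_alt_of_strictMono [DecidableEq (Pt l)] {z : Pt l} (hz : StrictMono z) :
    (alt l).coeff z = if rho l = z then 1 else 0 := by
  rw [coeff_alt, Finset.sum_eq_single 1]
  · simp
  · intro σ _ hσ
    rw [if_neg]
    rintro rfl
    apply hσ
    have : StrictMono σ := fun i j hij => by
      have := hz hij
      simp only [rho, Function.comp] at this
      exact_mod_cast (add_lt_add_iff_right _).1 this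
    ext i
    have h2 := Subsingleton.elim (this.orderIsoOfSurjective σ σ.surjective) (OrderIso.refl _)
    have h3 := congrArg (fun f : Fin l ≃o Fin l => f i) h2
    simpa using congrArg Fin.val h3
  · simp

theorem coeff_alt_eq_zero_of_sum_ne {z : Pt l} (hz : ∑ i, z i ≠ ∑ i, rho l i) :
    (alt l).coeff z = 0 := by
  classical
  rw [coeff_alt]
  refine Finset.sum_eq_zero fun σ _ => if_neg ?_
  rintro rfl
  exact hz (Equiv.sum_comp σ (rho l))

theorem coeff_alt_eq_zero_of_nonpos {z : Pt l} {i : Fin l} (hz : z i ≤ 0) :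
    (alt l).coeff z = 0 := by
  classical
  rw [coeff_alt]
  refine Finset.sum_eq_zero fun σ _ => if_neg ?_
  rintro rfl
  simp only [rho, Function.comp] at hz
  omega

theorem alt_eq_prod (l : ℕ) :
    alt l = (∏ i, X i) * ∏ i : Fin l, ∏ j ∈ Finset.Ioi i, (X j - X i) := by
  rw [alt, ← Matrix.det_vandermonde, ← Matrix.det_mul_column]
  refine congrArg Matrix.det (Matrix.ext fun i j => ?_)
  simp [Matrix.vandermonde, pow_succ']

/-- The product `∏ (1 - x_i⁻¹ x_j⁻¹)` over `a ≤ i ≤ j`. -/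
def kerFrom (l a : ℕ) : LP l :=
  ∏ i ∈ (Finset.univ.filter fun i : Fin l => a ≤ (i : ℕ)), ∏ j ∈ Finset.Ici i, (1 - Y i * Y j)

/-- The Weyl denominator of type `C`. -/
def weylDenom (l : ℕ) : LP l := kerFrom l 0 * alt l

theorem weylDenom_eq (l : ℕ) : weylDenom l =
    (∏ i, (X i - Y i)) * ∏ i : Fin l, ∏ j ∈ Finset.Ioi i, ((X j + Y j) - (X i + Y i)) := by
  rw [weylDenom, alt_eq_prod, kerFrom]
  simp only [zero_le, Finset.filter_true]
  rw [← mul_assoc, ← Finset.prod_mul_distrib, ← Finset.prod_mul_distrib, ← Finset.prod_mul_distrib]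
  refine Finset.prod_congr rfl fun i _ => ?_
  rw [← Finset.Ioi_insert, Finset.prod_insert (by simp)]
  have h : ∀ j, (1 - Y i * Y j) * (X j - X i) = (X j + Y j) - (X i + Y i) := fun j => by
    linear_combination (Y j) * X_mul_Y i - (Y i) * X_mul_Y j
  simp only [← h, Finset.prod_mul_distrib]
  linear_combination (-(Y i) * (∏ x ∈ Finset.Ioi i, (1 - Y i * Y x)) *
    ∏ x ∈ Finset.Ioi i, (X x - X i)) * X_mul_Y i

theorem permAct_weylDenom (σ : Equiv.Perm (Fin l)) :
    permAct σ (weylDenom l) = (Equiv.Perm.sign σ : ℤ) • weylDenom l := by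
  rw [weylDenom_eq, ← Matrix.det_vandermonde, map_mul, AlgEquiv.map_det, map_prod]
  have := Matrix.det_permute σ (Matrix.vandermonde fun i : Fin l => (X i + Y i : LP l))
  have h2 : (permAct σ).mapMatrix (Matrix.vandermonde fun i : Fin l => (X i + Y i : LP l)) =
      (Matrix.vandermonde fun i : Fin l => (X i + Y i : LP l)).submatrix σ id := by
    ext i j : 2
    simp [Matrix.vandermonde, permAct_X, permAct_Y]
  rw [h2, this, zsmul_eq_mul]
  simp only [map_sub, permAct_X, permAct_Y]
  rw [Equiv.prod_comp σ (fun i => X i - Y i)]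
  ring

theorem flipAct_weylDenom (i : Fin l) : flipAct i (weylDenom l) = -weylDenom l := by
  have h : ∀ j, flipAct i (X j + Y j) = X j + Y j := fun j => by
    by_cases h : j = i
    · subst h; rw [map_add, flipAct_X_self, flipAct_Y_self, add_comm]
    · rw [map_add, flipAct_X_of_ne h, flipAct_Y_of_ne h]
  rw [weylDenom_eq, map_mul, map_prod, map_prod]
  simp only [map_prod, map_sub (flipAct i) (X _ + Y _), h]
  rw [← neg_mul]
  congr 1
  rw [← Finset.mul_prod_erase _ _ (Finset.mem_univ i), ← Finset.mul_prod_erase _ _ (Finset.mem_univ i),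
    ← neg_mul, map_sub, flipAct_X_self, flipAct_Y_self, neg_sub]
  congr 1
  refine Finset.prod_congr rfl fun j hj => ?_
  rw [map_sub, flipAct_X_of_ne (Finset.ne_of_mem_erase hj), flipAct_Y_of_ne (Finset.ne_of_mem_erase hj)]

theorem coeff_weylDenom {z : Pt l} (hz : ∑ i, rho l i ≤ ∑ i, z i) :
    (weylDenom l).coeff z = (alt l).coeff z := by
  have key : ∀ F : LP l, (∀ z, ∑ i, rho l i ≤ ∑ i, z i → F.coeff z = (alt l).coeff z) →
      ∀ i j : Fin l, ∀ z, ∑ i, rho l i ≤ ∑ i, z i →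
        ((1 - Y i * Y j) * F).coeff z = (alt l).coeff z := by
    intro F hF i j z hz
    have hs : ∑ k, rho l k < ∑ k, (z + e i + e j) k := by
      simp only [Pi.add_apply, Finset.sum_add_distrib, e, Finset.sum_pi_single', Finset.mem_univ,
        if_true]
      omega
    rw [sub_mul, one_mul, mul_assoc, AddMonoidAlgebra.coeff_sub, Finsupp.sub_apply, coeff_Y_mul,
      coeff_Y_mul, hF z hz, hF _ hs.le, coeff_alt_eq_zero_of_sum_ne hs.ne', sub_zero]
  have h2 : ∀ K : LP l, K ∈ Submonoid.closure (Set.range fun p : Fin l × Fin l => 1 - Y p.1 * Y p.2)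
      → ∀ F : LP l, (∀ z, ∑ i, rho l i ≤ ∑ i, z i → F.coeff z = (alt l).coeff z) →
      (∀ z, ∑ i, rho l i ≤ ∑ i, z i → (K * F).coeff z = (alt l).coeff z) := by
    intro K hK
    induction hK using Submonoid.closure_induction with
    | mem x hx => obtain ⟨p, rfl⟩ := hx; intro F hF; exact key F hF p.1 p.2
    | one => intro F hF; simpa using hF
    | mul x y _ _ hx hy => intro F hF; rw [mul_assoc]; exact hx _ (hy _ hF)
  refine h2 _ ?_ _ (fun _ _ => rfl) z hz
  refine Submonoid.prod_mem _ fun i _ => Submonoid.prod_mem _ fun j _ => ?_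
  exact Submonoid.subset_closure ⟨(i, j), rfl⟩

/-- The pairing of a function on the lattice with a Laurent polynomial. -/
def pair (v : Pt l → ℤ) : LP l →ₗ[ℤ] ℤ :=
  Finsupp.linearCombination ℤ v ∘ₗ (AddMonoidAlgebra.coeffLinearEquiv ℤ).toLinearMap

theorem pair_mon (v : Pt l → ℤ) (m : Pt l) : pair v (mon m) = v m := by
  simp [pair, mon, AddMonoidAlgebra.coeffLinearEquiv]

theorem pair_apply (v : Pt l → ℤ) (F : LP l) :
    pair v F = ∑ z ∈ F.coeff.support, F.coeff z * v z := by
  simp only [pair, LinearMap.comp_apply, Finsupp.linearCombination_apply, Finsupp.sum, smul_eq_mul]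
  rfl

theorem pair_congr {v w : Pt l → ℤ} {F : LP l} (h : ∀ z, F.coeff z ≠ 0 → v z = w z) :
    pair v F = pair w F := by
  rw [pair_apply, pair_apply]
  refine Finset.sum_congr rfl fun z hz => ?_
  rw [h z (Finsupp.mem_support_iff.1 hz)]

theorem pair_add_left (v w : Pt l → ℤ) (F : LP l) :
    pair (fun z => v z + w z) F = pair v F + pair w F := by
  simp only [pair_apply, mul_add, Finset.sum_add_distrib]

theorem pair_sub_left (v w : Pt l → ℤ) (F : LP l) :
    pair (fun z => v z - w z) F = pair v F - pair w F := by
  simp only [pair_apply, mul_sub, Finset.sum_sub_distrib]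

theorem pair_sum_left {ι : Type*} (s : Finset ι) (v : ι → Pt l → ℤ) (F : LP l) :
    pair (fun z => ∑ i ∈ s, v i z) F = ∑ i ∈ s, pair (v i) F := by
  simp only [pair_apply, Finset.mul_sum]
  exact Finset.sum_comm

theorem pair_mon_mul (v : Pt l → ℤ) (m : Pt l) (F : LP l) :
    pair v (mon m * F) = pair (fun z => v (z + m)) F := by
  induction F using AddMonoidAlgebra.induction_linear with
  | zero => simp
  | add f g hf hg => rw [mul_add, map_add, map_add, hf, hg]
  | single a b =>
    have h : (AddMonoidAlgebra.single a b : LP l) = b • mon a := by simp [mon]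
    rw [h, mul_smul_comm, mon_mul, map_smul, map_smul, pair_mon, pair_mon, add_comm]

theorem pair_indicator [DecidableEq (Pt l)] (w : Pt l) (F : LP l) :
    pair (fun z => if w = z then 1 else 0) F = F.coeff w := by
  rw [pair_apply]
  simp only [mul_ite, mul_one, mul_zero, Finset.sum_ite_eq]
  split_ifs with h
  · rfl
  · exact (Finsupp.notMem_support_iff.1 h).symm

/-- Points of the chamber whose shape has even columns, the first `a` of them zero. -/
def EvenFrom (a : ℕ) (z : Pt l) : Prop :=
  (∀ i : Fin l, (i : ℕ) < a → z i = i + 1) ∧ (∀ i : Fin l, (i : ℤ) + 1 ≤ z i) ∧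
    (∀ i : Fin l, Even (z i - (i + 1))) ∧ ∀ i j : Fin l, i ≤ j → z i - i ≤ z j - j

open Classical in
/-- The indicator function of `EvenFrom`. -/
def evenFrom (a : ℕ) (z : Pt l) : ℤ := if EvenFrom a z then 1 else 0

/-- The indicator vector of the coordinates `i ≥ a`. -/
def tail (l a : ℕ) : Pt l := fun i => if a ≤ (i : ℕ) then 1 else 0

theorem evenFrom_sub {a : ℕ} (ha : a < l) (z : Pt l) :
    evenFrom a z - evenFrom a (z + -(2 • tail l a)) = evenFrom (a + 1) z := by
  have hE : EvenFrom (a + 1) z ↔ EvenFrom a z ∧ z ⟨a, ha⟩ = a + 1 := by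
    constructor
    · rintro ⟨h1, h2, h3, h4⟩
      exact ⟨⟨fun i hi => h1 i (by omega), h2, h3, h4⟩, h1 ⟨a, ha⟩ (by simp)⟩
    · rintro ⟨⟨h1, h2, h3, h4⟩, h5⟩
      refine ⟨fun i hi => ?_, h2, h3, h4⟩
      rcases Nat.lt_succ_iff_lt_or_eq.1 hi with h | h
      · exact h1 i h
      · have : i = ⟨a, ha⟩ := Fin.ext h
        subst this; exact h5
  have hS : EvenFrom a (z + -(2 • tail l a)) ↔ EvenFrom a z ∧ z ⟨a, ha⟩ ≠ a + 1 := by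
    have hz : ∀ i : Fin l, (z + -(2 • tail l a)) i = if a ≤ (i : ℕ) then z i - 2 else z i := by
      intro i
      by_cases h : a ≤ (i : ℕ) <;> simp [tail, h]; ring
    simp only [EvenFrom, hz]
    constructor
    · rintro ⟨h1, h2, h3, h4⟩
      refine ⟨⟨fun i hi => ?_, fun i => ?_, fun i => ?_, fun i j hij => ?_⟩, ?_⟩
      · have := h1 i hi; rwa [if_neg (by omega)] at this
      · have := h2 i; split_ifs at this <;> omega
      · have := h3 i
        split_ifs at this
        · rw [Int.even_iff] at *; omega
        · exact this
      · have := h4 i j hij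
        have hij' : (i : ℕ) ≤ j := hij
        split_ifs at this <;> omega
      · have := h2 ⟨a, ha⟩
        simp only [le_refl, if_true] at this
        omega
    · rintro ⟨⟨h1, h2, h3, h4⟩, h5⟩
      have h6 := h2 ⟨a, ha⟩
      have h7 := h3 ⟨a, ha⟩
      rw [Int.even_iff] at h7
      simp only at h6 h7
      have h8 : ∀ i : Fin l, a ≤ (i : ℕ) → (i : ℤ) + 3 ≤ z i := by
        intro i hi
        have := h4 ⟨a, ha⟩ i hi
        simp only at this
        omega
      refine ⟨fun i hi => ?_, fun i => ?_, fun i => ?_, fun i j hij => ?_⟩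
      · rw [if_neg (by omega)]; exact h1 i hi
      · split_ifs with h
        · have := h8 i h; omega
        · exact h2 i
      · have := h3 i
        split_ifs
        · rw [Int.even_iff] at *; omega
        · exact this
      · have hij' : (i : ℕ) ≤ j := hij
        have h9 := h4 i j hij
        split_ifs with hi hj
        · omega
        · omega
        · have := h1 i (by omega)
          have := h8 j (by assumption)
          omega
        · exact h9
  classical
  unfold evenFrom
  rw [if_congr hE rfl rfl, if_congr hS rfl rfl]
  by_cases h : EvenFrom a z <;> by_cases h' : z ⟨a, ha⟩ = a + 1 <;> simp [h, h']

/-- Antisymmetry under permutations of the variables `x_i` with `i ≥ a`. -/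
def AntiFrom (a : ℕ) (G : LP l) : Prop :=
  ∀ τ : Equiv.Perm (Fin l), (∀ i : Fin l, (i : ℕ) < a → τ i = i) →
    permAct τ G = (Equiv.Perm.sign τ : ℤ) • G

theorem AntiFrom.mul {a : ℕ} {G K : LP l} (hG : AntiFrom a G)
    (hK : ∀ τ : Equiv.Perm (Fin l), (∀ i : Fin l, (i : ℕ) < a → τ i = i) → permAct τ K = K) :
    AntiFrom a (K * G) := fun τ hτ => by
  rw [map_mul, hK τ hτ, hG τ hτ, mul_smul_comm]

theorem AntiFrom.coeff_comp {a : ℕ} {G : LP l} (hG : AntiFrom a G) (τ : Equiv.Perm (Fin l))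
    (hτ : ∀ i : Fin l, (i : ℕ) < a → τ i = i) (z : Pt l) :
    G.coeff (z ∘ τ) = (Equiv.Perm.sign τ : ℤ) * G.coeff z := by
  rw [← coeff_permAct, hG τ hτ, AddMonoidAlgebra.coeff_smul, Finsupp.smul_apply, smul_eq_mul]

theorem AntiFrom.coeff_eq_zero {a : ℕ} {G : LP l} (hG : AntiFrom a G) {i j : Fin l}
    (hi : a ≤ (i : ℕ)) (hj : a ≤ (j : ℕ)) (hij : i ≠ j) {z : Pt l} (hz : z i = z j) :
    G.coeff z = 0 := by
  have h := hG.coeff_comp (Equiv.swap i j)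
    (fun k hk => Equiv.swap_apply_of_ne_of_ne (by rintro rfl; omega) (by rintro rfl; omega)) z
  have h2 : z ∘ Equiv.swap i j = z := by
    funext k
    by_cases hk : k = i
    · subst hk; simp [hz]
    · by_cases hk' : k = j
      · subst hk'; simp [hz]
      · simp [Equiv.swap_apply_of_ne_of_ne hk hk']
  rw [h2, Equiv.Perm.sign_swap hij] at h
  simp at h
  omega

theorem perm_le_apply {a : ℕ} {τ : Equiv.Perm (Fin l)}
    (hτ : ∀ i : Fin l, (i : ℕ) < a → τ i = i) (i : Fin l) : a ≤ ((τ i : Fin l) : ℕ) ↔ a ≤ (i : ℕ) := by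
  constructor
  · intro h
    by_contra h'
    rw [hτ i (by omega)] at h
    exact h' h
  · intro h
    by_contra h'
    have := τ.injective (hτ (τ i) (by omega))
    rw [this] at h'
    exact h' h

/-- The elementary symmetric polynomials in the variables `x_i⁻¹`, `i ≥ a`. -/
def elem (l a r : ℕ) : LP l :=
  ∑ t ∈ (Finset.univ.filter fun i : Fin l => a ≤ (i : ℕ)).powersetCard r, ∏ j ∈ t, Y j

theorem map_filter_perm {a : ℕ} {τ : Equiv.Perm (Fin l)}
    (hτ : ∀ i : Fin l, (i : ℕ) < a → τ i = i) :
    (Finset.univ.filter fun i : Fin l => a ≤ (i : ℕ)).map τ.toEmbedding =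
      Finset.univ.filter fun i : Fin l => a ≤ (i : ℕ) := by
  ext i
  simp only [Finset.mem_map_equiv, Finset.mem_filter, Finset.mem_univ, true_and]
  rw [← perm_le_apply hτ (τ.symm i), Equiv.apply_symm_apply]

theorem permAct_elem {a : ℕ} (r : ℕ) {τ : Equiv.Perm (Fin l)}
    (hτ : ∀ i : Fin l, (i : ℕ) < a → τ i = i) : permAct τ (elem l a r) = elem l a r := by
  conv_rhs => rw [elem, ← map_filter_perm hτ, Finset.powersetCard_map, Finset.sum_map]
  simp only [elem, map_sum, map_prod, permAct_Y]
  refine Finset.sum_congr rfl fun t _ => ?_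
  simp

/-- The factor of the kernel attached to the index `a`. -/
def kerAt (l a : ℕ) (i : Fin l) : LP l :=
  ∏ j ∈ Finset.univ.filter fun j : Fin l => a ≤ (j : ℕ), (1 - Y i * Y j)

theorem kerFrom_eq_mul {a : ℕ} (ha : a < l) :
    kerFrom l a = kerFrom l (a + 1) * kerAt l a ⟨a, ha⟩ := by
  have h : (Finset.univ.filter fun i : Fin l => a ≤ (i : ℕ)) =
      insert ⟨a, ha⟩ (Finset.univ.filter fun i : Fin l => a + 1 ≤ (i : ℕ)) := by
    ext i
    simp only [Finset.mem_insert, Finset.mem_filter, Finset.mem_univ, true_and, Fin.ext_iff]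
    omega
  have h2 : Finset.Ici (⟨a, ha⟩ : Fin l) = Finset.univ.filter fun i : Fin l => a ≤ (i : ℕ) := by
    ext i; simp [Fin.le_def]
  rw [kerFrom, h, Finset.prod_insert (by simp), mul_comm, h2]
  rfl

theorem permAct_kerAt {a : ℕ} (ha : a < l) {τ : Equiv.Perm (Fin l)}
    (hτ : ∀ i : Fin l, (i : ℕ) < a + 1 → τ i = i) :
    permAct τ (kerAt l a ⟨a, ha⟩) = kerAt l a ⟨a, ha⟩ := by
  conv_rhs => rw [kerAt, ← map_filter_perm (a := a) (τ := τ) (fun i hi => hτ i (by omega)),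
    Finset.prod_map]
  simp only [kerAt, map_prod, map_sub, map_mul, map_one, permAct_Y]
  rw [hτ ⟨a, ha⟩ (by simp)]
  rfl

theorem kerAt_eq_sum (a : ℕ) (i : Fin l) :
    kerAt l a i = ∑ r ∈ Finset.range (l - a + 1), (-1) ^ r * (mon (-(r • e i)) * elem l a r) := by
  have hc : (Finset.univ.filter fun j : Fin l => a ≤ (j : ℕ)).card = l - a := by
    have h := Fin.card_filter_val_lt (n := l) (m := a)
    have h2 := Finset.card_filter_add_card_filter_not (s := (Finset.univ : Finset (Fin l)))
      (fun j : Fin l => (j : ℕ) < a)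
    simp only [not_lt, Finset.card_univ, Fintype.card_fin] at h2
    omega
  simp only [kerAt, sub_eq_add_neg, Finset.prod_one_add, Finset.sum_powerset, hc]
  refine Finset.sum_congr rfl fun r _ => ?_
  rw [elem, Finset.mul_sum, Finset.mul_sum]
  refine Finset.sum_congr rfl fun t ht => ?_
  rw [Finset.mem_powersetCard] at ht
  rw [Finset.prod_neg, Finset.prod_mul_distrib, Finset.prod_const, ht.2, Y, mon_pow, smul_neg]

theorem coeff_neg_one_pow_mul (r : ℕ) (F : LP l) (z : Pt l) :
    ((-1) ^ r * F).coeff z = (-1) ^ r * F.coeff z := by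
  rcases neg_one_pow_eq_or ℤ r with h | h <;>
    rcases Nat.even_or_odd r with h2 | h2 <;> simp [h2.neg_one_pow]

theorem coeff_kerAt_mul {a : ℕ} (ha : a < l) {G : LP l} (hG : AntiFrom a G) :
    (kerAt l a ⟨a, ha⟩ * G).coeff (rho l) =
      G.coeff (rho l) - G.coeff (rho l + 2 • tail l a) := by
  have hterm : ∀ r, ((-1) ^ r * (mon (-(r • e (⟨a, ha⟩ : Fin l))) * elem l a r) * G).coeff (rho l) =
      (-1) ^ r * (elem l a r * G).coeff (rho l + r • e (⟨a, ha⟩ : Fin l)) := by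
    intro r
    rw [mul_assoc, mul_assoc, coeff_neg_one_pow_mul, coeff_mon_mul, sub_neg_eq_add]
  have hcard : (Finset.univ.filter fun j : Fin l => a ≤ (j : ℕ)).card = l - a := by
    have h := Fin.card_filter_val_lt (n := l) (m := a)
    have h2 := Finset.card_filter_add_card_filter_not (s := (Finset.univ : Finset (Fin l)))
      (fun j : Fin l => (j : ℕ) < a)
    simp only [not_lt, Finset.card_univ, Fintype.card_fin] at h2
    omega
  obtain ⟨k, hk⟩ : ∃ k, l = a + k + 1 := ⟨l - a - 1, by omega⟩
  have hk' : l - a = k + 1 := by omega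
  rw [kerAt_eq_sum, Finset.sum_mul, coeff_sum', Finset.sum_congr rfl fun r _ => hterm r, hk',
    Finset.sum_range_succ, Finset.sum_range_succ', Finset.sum_eq_zero, zero_add]
  · have h0 : elem l a 0 = 1 := by simp [elem]
    have h1 : elem l a (k + 1) = mon (-tail l a) := by
      rw [← hk', elem, ← hcard, Finset.powersetCard_self, Finset.sum_singleton]
      simp only [Y, mon_prod]
      congr 1
      funext i
      rw [Finset.sum_apply]
      simp [tail, e, Finset.sum_neg_distrib, Pi.single_apply, Finset.sum_ite_eq]
    rw [h0, h1, one_mul, coeff_mon_mul]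
    have : NeZero l := ⟨by omega⟩
    have hc := hG.coeff_comp (Fin.cycleIcc ⟨a, ha⟩ ⟨l - 1, by omega⟩)
      (fun i hi => Fin.cycleIcc_of_lt hi)
      (rho l + (k + 1) • e (⟨a, ha⟩ : Fin l) - -tail l a)
    have hpt : (rho l + (k + 1) • e (⟨a, ha⟩ : Fin l) - -tail l a) ∘
        Fin.cycleIcc ⟨a, ha⟩ ⟨l - 1, by omega⟩ = rho l + 2 • tail l a := by
      funext i
      by_cases hi : (i : ℕ) < a
      · have : i ≠ ⟨a, ha⟩ := by rintro rfl; simp at hi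
        rw [Function.comp, Fin.cycleIcc_of_lt hi]
        simp [tail, e, this, not_le.2 hi]
      · by_cases hi2 : (i : ℕ) < l - 1
        · rw [Function.comp, Fin.cycleIcc_of_ge_of_lt (not_lt.1 hi) hi2]
          have hv : ((i + 1 : Fin l) : ℕ) = i + 1 := Fin.val_add_one_of_lt' (by omega)
          have : i + 1 ≠ (⟨a, ha⟩ : Fin l) := by
            intro h; rw [Fin.ext_iff, hv] at h; simp at h; omega
          simp [tail, e, this, rho, hv, show a ≤ (i : ℕ) + 1 by omega, show a ≤ (i : ℕ) by omega]
          ring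
        · have : i = ⟨l - 1, by omega⟩ := Fin.ext (by simp; omega)
          rw [this, Function.comp, Fin.cycleIcc_of_last (by simp [Fin.le_def]; omega)]
          simp [tail, e, rho, show a ≤ l - 1 by omega]
          omega
    rw [hpt, Fin.sign_cycleIcc_of_le (by simp [Fin.le_def]; omega)] at hc
    simp only [show l - 1 - a = k by omega] at hc
    push_cast at hc
    rw [hc]
    simp only [zero_smul, add_zero, pow_zero, one_mul]
    ring
  · intro r hr
    rw [Finset.mem_range] at hr
    rw [AntiFrom.coeff_eq_zero (hG.mul fun τ hτ => permAct_elem _ hτ) (i := ⟨a, ha⟩)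
      (j := ⟨a + (r + 1), by omega⟩) (by simp) (by simp) (by simp), mul_zero]
    simp [rho, e]
    ring

theorem AntiFrom.mon_mul {a : ℕ} {G : LP l} (hG : AntiFrom a G) (c : ℤ) :
    AntiFrom a (mon (c • tail l a) * G) := by
  refine hG.mul fun τ hτ => ?_
  rw [permAct_mon]
  congr 1
  funext i
  have := perm_le_apply hτ (τ.symm i)
  simp only [Equiv.apply_symm_apply] at this
  simp [tail, this]

theorem littlewood (a : ℕ) (ha : a ≤ l) {G : LP l} (hG : AntiFrom a G) :
    pair (evenFrom a) (kerFrom l a * G) = G.coeff (rho l) := by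
  classical
  induction hd : l - a generalizing a G with
  | zero =>
    obtain rfl : a = l := by omega
    have h1 : kerFrom a a = 1 := by
      rw [kerFrom, Finset.filter_false_of_mem, Finset.prod_empty]
      intro i _; have := i.2; omega
    have h2 : evenFrom a = fun z : Pt a => if rho a = z then (1 : ℤ) else 0 := by
      funext z
      unfold evenFrom
      refine if_congr ⟨fun h => funext fun i => (h.1 i i.2).symm, ?_⟩ rfl rfl
      rintro rfl
      exact ⟨fun i _ => rfl, fun i => le_rfl, fun i => by simp [rho], fun i j _ => by simp [rho]⟩
    rw [h1, one_mul, h2, pair_indicator]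
  | succ d ih =>
    have ha' : a < l := by omega
    have step : ∀ G : LP l, AntiFrom a G →
        pair (evenFrom a) (kerFrom l a * G) - G.coeff (rho l) =
        pair (evenFrom a) (kerFrom l a * (mon ((-2 : ℤ) • tail l a) * G)) -
          (mon ((-2 : ℤ) • tail l a) * G).coeff (rho l) := by
      intro G hG
      have h1 : pair (evenFrom a) (kerFrom l a * G) -
          pair (evenFrom a) (kerFrom l a * (mon ((-2 : ℤ) • tail l a) * G)) =
          pair (evenFrom (a + 1)) (kerFrom l a * G) := by
        rw [mul_left_comm, pair_mon_mul, ← pair_sub_left]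
        refine pair_congr fun z _ => ?_
        rw [← evenFrom_sub ha']
        simp
      have h2 : AntiFrom (a + 1) (kerAt l a ⟨a, ha'⟩ * G) :=
        AntiFrom.mul (fun τ hτ => hG τ fun i hi => hτ i (by omega))
          fun τ hτ => permAct_kerAt ha' hτ
      have h3 := ih (a + 1) (by omega) h2 (by omega)
      rw [← mul_assoc, ← kerFrom_eq_mul ha', coeff_kerAt_mul ha' hG] at h3
      rw [coeff_mon_mul]
      have h4 : rho l - (-2 : ℤ) • tail l a = rho l + 2 • tail l a := by
        funext i; simp
      rw [h4]
      linarith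
    have iter : ∀ m : ℕ, pair (evenFrom a) (kerFrom l a * G) - G.coeff (rho l) =
        pair (evenFrom a) (kerFrom l a * (mon ((-(2 * m) : ℤ) • tail l a) * G)) -
          (mon ((-(2 * m) : ℤ) • tail l a) * G).coeff (rho l) := by
      intro m
      induction m with
      | zero => simp [mon_zero]
      | succ m ihm =>
        rw [ihm, step _ (hG.mon_mul _), ← mul_assoc (mon _) (mon _), WeylWalk.mon_mul, ← add_smul]
        have : (-2 : ℤ) + -(2 * m) = -(2 * ((m + 1 : ℕ) : ℤ)) := by push_cast; ring
        rw [this]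
    obtain ⟨m, hm⟩ : ∃ m : ℕ, ∀ z : Pt l, z ∈ G.coeff.support ∪ (kerFrom l a * G).coeff.support →
        z ⟨a, ha'⟩ ≤ m := by
      refine ⟨((G.coeff.support ∪ (kerFrom l a * G).coeff.support).sup
        fun z => (z ⟨a, ha'⟩).toNat), fun z hz => ?_⟩
      have := Finset.le_sup (f := fun z : Pt l => (z ⟨a, ha'⟩).toNat) hz
      omega
    have hi := iter m
    rw [mul_left_comm, pair_mon_mul, coeff_mon_mul] at hi
    have h1 : G.coeff (rho l - (-(2 * m) : ℤ) • tail l a) = 0 := by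
      by_contra h
      have := hm _ (Finset.mem_union_left _ (Finsupp.mem_support_iff.2 h))
      simp [rho, tail] at this
      omega
    have h2 : pair (fun z => evenFrom a (z + (-(2 * m) : ℤ) • tail l a)) (kerFrom l a * G) = 0 := by
      rw [pair_congr (w := fun _ => 0), pair_apply]
      · simp
      · intro z hz
        have h3 := hm _ (Finset.mem_union_right _ (Finsupp.mem_support_iff.2 hz))
        refine if_neg fun h => ?_
        have := h.2.1 ⟨a, ha'⟩
        simp [tail] at this
        omega
    rw [h1, h2] at hi
    linarith

/-- The open Weyl chamber of type `C`. -/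
def IsCh (z : Pt l) : Prop := StrictMono z ∧ ∀ i, 0 < z i

/-- The points of the chamber whose shape has at most `c` nonzero columns. -/
def IsChLE (c : ℕ) (z : Pt l) : Prop := IsCh z ∧ ∀ i : Fin l, (i : ℕ) + c < l → z i = i + 1

open Classical in
/-- Sum over the neighbours obtained by adding a cell in the first `c` columns. -/
def up (c : ℕ) (v : Pt l → ℤ) (z : Pt l) : ℤ := ∑ i, if IsChLE c (z + e i) then v (z + e i) else 0

open Classical in
/-- Sum over the neighbours obtained by removing a cell. -/
def down (v : Pt l → ℤ) (z : Pt l) : ℤ := ∑ i, if IsCh (z - e i) then v (z - e i) else 0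

/-- One step of the walk in the chamber. -/
def step (v : Pt l → ℤ) (z : Pt l) : ℤ := up l v z + down v z

open Classical in
/-- The indicator function of the point `rho`. -/
def delta (z : Pt l) : ℤ := if rho l = z then 1 else 0

theorem isChLE_self {z : Pt l} : IsChLE l z ↔ IsCh z :=
  ⟨fun h => h.1, fun h => ⟨h, fun i hi => by omega⟩⟩

theorem isCh_iff {z : Pt l} :
    IsCh z ↔ (∀ i : Fin l, (i : ℤ) + 1 ≤ z i) ∧ ∀ i j : Fin l, i ≤ j → z i - i ≤ z j - j := by
  constructor
  · rintro ⟨h1, h2⟩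
    have h3 : ∀ i j : Fin l, i ≤ j → z i - i ≤ z j - j := by
      intro i j hij
      obtain ⟨k, hk⟩ : ∃ k : ℕ, (j : ℕ) = i + k := ⟨j - i, by have : (i : ℕ) ≤ j := hij; omega⟩
      induction k generalizing j with
      | zero => rw [Fin.ext (by omega : (j : ℕ) = i)]
      | succ k ih =>
        have h4 := ih ⟨i + k, by omega⟩ (Fin.le_def.2 (by simp)) rfl
        have h5 := h1 (show (⟨i + k, by omega⟩ : Fin l) < j from Fin.lt_def.2 (by simp; omega))
        simp only at h4
        push_cast at h4
        omega
    refine ⟨fun i => ?_, h3⟩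
    have h4 := h3 ⟨0, i.pos⟩ i (Fin.le_def.2 (by simp))
    have h5 := h2 ⟨0, i.pos⟩
    simp only at h4
    push_cast at h4
    omega
  · rintro ⟨h1, h2⟩
    refine ⟨fun i j hij => ?_, fun i => ?_⟩
    · have := h2 i j hij.le
      have hij' : (i : ℕ) < j := hij
      omega
    · have := h1 i; omega

theorem isCh_rho : IsCh (rho l) :=
  isCh_iff.2 ⟨fun _ => le_rfl, fun i j _ => by simp [rho]⟩

theorem up_congr {c : ℕ} {v w : Pt l → ℤ} (h : ∀ z, IsChLE c z → v z = w z) (z : Pt l) :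
    up c v z = up c w z := by
  refine Finset.sum_congr rfl fun i _ => ?_
  split_ifs with h'
  · exact h _ h'
  · rfl

theorem down_congr {v w : Pt l → ℤ} (h : ∀ z, IsCh z → v z = w z) (z : Pt l) :
    down v z = down w z := by
  refine Finset.sum_congr rfl fun i _ => ?_
  split_ifs with h'
  · exact h _ h'
  · rfl

/-- Antisymmetry under the Weyl group of type `C`. -/
def Anti (F : LP l) : Prop := AntiFrom 0 F ∧ ∀ i, flipAct i F = -F

theorem Anti.weylDenom : Anti (weylDenom l) :=
  ⟨fun σ _ => permAct_weylDenom σ, flipAct_weylDenom⟩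

theorem AntiFrom.alt : AntiFrom 0 (alt l) := fun σ _ => permAct_alt σ

theorem AntiFrom.upStep {F : LP l} (h : AntiFrom 0 F) : AntiFrom 0 (upStep l * F) :=
  h.mul fun σ _ => permAct_upStep σ

theorem AntiFrom.downStep {F : LP l} (h : AntiFrom 0 F) : AntiFrom 0 (downStep l * F) :=
  h.mul fun σ _ => permAct_downStep σ

theorem Anti.step {F : LP l} (h : Anti F) : Anti ((upStep l + downStep l) * F) := by
  refine ⟨h.1.mul fun σ _ => ?_, fun i => ?_⟩
  · rw [map_add, permAct_upStep, permAct_downStep]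
  · rw [map_mul, flipAct_step, h.2, mul_neg]

theorem Anti.coeff_eq_zero {F : LP l} (h : Anti F) {i : Fin l} {z : Pt l} (hz : z i = 0) :
    F.coeff z = 0 := by
  have h1 := coeff_flipAct i F z
  rw [h.2 i, hz, neg_zero, ← hz, Function.update_eq_self, AddMonoidAlgebra.coeff_neg,
    Finsupp.neg_apply] at h1
  omega

theorem e_apply_mem (i j : Fin l) : 0 ≤ e i j ∧ e i j ≤ 1 := by
  by_cases h : j = i
  · subst h; simp [e_self]
  · simp [e_of_ne h]

theorem wall_of_not_isCh {z w : Pt l} (hz : ¬ IsCh z) (hw : IsCh w)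
    (h : (∃ i, w = z + e i) ∨ ∃ i, w = z - e i) :
    (∃ i j, i ≠ j ∧ z i = z j) ∨ ∃ i, z i = 0 := by
  by_contra! hcon
  refine hz ⟨fun i j hij => lt_of_le_of_ne ?_ (hcon.1 i j hij.ne), fun i =>
    lt_of_le_of_ne ?_ (hcon.2 i).symm⟩
  · have h1 := hw.1 hij
    rcases h with ⟨k, rfl⟩ | ⟨k, rfl⟩ <;> simp only [Pi.add_apply, Pi.sub_apply] at h1 <;>
      by_cases hi : i = k <;> by_cases hj : j = k
    all_goals first
      | (exact absurd (hi.trans hj.symm) hij.ne)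
      | (subst hi; rw [e_self, e_of_ne hj] at h1; omega)
      | (subst hj; rw [e_self, e_of_ne hi] at h1; omega)
      | (rw [e_of_ne hj, e_of_ne hi] at h1; omega)
  · have h1 := hw.2 i
    rcases h with ⟨k, rfl⟩ | ⟨k, rfl⟩ <;> simp only [Pi.add_apply, Pi.sub_apply] at h1 <;>
      have := e_apply_mem k i <;> omega

open Classical in
/-- Restriction of a function to the chamber. -/
def ch (v : Pt l → ℤ) (z : Pt l) : ℤ := if IsCh z then v z else 0

theorem pair_ch_step (v : Pt l → ℤ) {F : LP l} (hF : Anti F) :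
    pair (ch v) ((upStep l + downStep l) * F) = pair (ch (step v)) F := by
  have h1 : pair (ch v) ((upStep l + downStep l) * F) =
      pair (fun z => (∑ i, ch v (z + e i)) + ∑ i, ch v (z + -e i)) F := by
    rw [pair_add_left, pair_sum_left, pair_sum_left, add_mul, map_add, upStep, downStep,
      Finset.sum_mul, Finset.sum_mul, map_sum, map_sum]
    simp only [X, Y, pair_mon_mul]
  rw [h1]
  refine pair_congr fun z hz => ?_
  by_cases hc : IsCh z
  · rw [ch, if_pos hc]
    refine congrArg₂ (· + ·) (Finset.sum_congr rfl fun i _ => ?_)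
      (Finset.sum_congr rfl fun i _ => ?_)
    · by_cases h : IsCh (z + e i) <;> simp [ch, isChLE_self, h]
    · rw [sub_eq_add_neg]; rfl
  · have hw : ∀ w, ((∃ i, w = z + e i) ∨ ∃ i, w = z - e i) → ch v w = 0 := by
      intro w hw
      refine if_neg fun hw' => hz ?_
      rcases wall_of_not_isCh hc hw' hw with ⟨i, j, hij, h⟩ | ⟨i, h⟩
      · exact hF.1.coeff_eq_zero (Nat.zero_le _) (Nat.zero_le _) hij h
      · exact hF.coeff_eq_zero h
    rw [Finset.sum_eq_zero fun i _ => hw _ (Or.inl ⟨i, rfl⟩),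
      Finset.sum_eq_zero fun i _ => hw _ (Or.inr ⟨i, (sub_eq_add_neg z (e i)).symm⟩), ch, if_neg hc,
      add_zero]

theorem pair_ch_step_pow (k : ℕ) (v : Pt l → ℤ) {F : LP l} (hF : Anti F) :
    pair (ch v) ((upStep l + downStep l) ^ k * F) = pair (ch (step^[k] v)) F := by
  induction k generalizing v with
  | zero => simp
  | succ k ih =>
    have hA : ∀ k, Anti ((upStep l + downStep l) ^ k * F) := by
      intro k
      induction k with
      | zero => simpa using hF
      | succ k ih => rw [pow_succ', mul_assoc]; exact ih.step
    rw [pow_succ', mul_assoc, pair_ch_step _ (hA k), ih, Function.iterate_succ_apply]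

theorem sum_rho_le {z : Pt l} (hz : IsCh z) : ∑ i, rho l i ≤ ∑ i, z i :=
  Finset.sum_le_sum fun i _ => (isCh_iff.1 hz).1 i

theorem pair_ch_weylDenom (w : Pt l → ℤ) : pair (ch w) (weylDenom l) = w (rho l) := by
  classical
  have h1 : (weylDenom l).coeff (rho l) = 1 := by
    rw [coeff_weylDenom le_rfl, coeff_alt_of_strictMono isCh_rho.1, if_pos rfl]
  have h2 : pair (ch w) (weylDenom l) =
      pair (w (rho l) • fun z => if rho l = z then (1 : ℤ) else 0) (weylDenom l) := by
    refine pair_congr fun z hz => ?_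
    by_cases hc : IsCh z
    · rw [coeff_weylDenom (sum_rho_le hc), coeff_alt_of_strictMono hc.1] at hz
      have : rho l = z := by by_contra h; exact hz (if_neg h)
      subst this
      simp [ch, hc]
    · have : rho l ≠ z := by rintro rfl; exact hc isCh_rho
      simp [ch, hc, this]
  rw [h2, pair_apply]
  have h3 := pair_indicator (rho l) (weylDenom l)
  rw [pair_apply, h1] at h3
  simp only [Pi.smul_apply, smul_eq_mul, mul_left_comm _ (w (rho l)), ← Finset.mul_sum, h3, mul_one]

theorem ch_evenFrom : ch (evenFrom 0 : Pt l → ℤ) = evenFrom 0 := by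
  funext z
  unfold ch
  split_ifs with h
  · rfl
  · exact (if_neg fun h' => h (isCh_iff.2 ⟨h'.2.1, h'.2.2.2⟩)).symm

theorem step_iterate_evenFrom (k : ℕ) :
    step^[k] (evenFrom 0) (rho l) = ((upStep l + downStep l) ^ k * alt l).coeff (rho l) := by
  have hA : ∀ k, AntiFrom 0 ((upStep l + downStep l) ^ k * alt l) := by
    intro k
    induction k with
    | zero => simpa using AntiFrom.alt
    | succ k ih =>
      rw [pow_succ', mul_assoc]
      exact ih.mul fun σ _ => by rw [map_add, permAct_upStep, permAct_downStep]
  rw [← littlewood 0 (Nat.zero_le _) (hA k), ← pair_ch_weylDenom (step^[k] (evenFrom 0)),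
    ← pair_ch_step_pow k _ Anti.weylDenom, ch_evenFrom, weylDenom, mul_left_comm]

theorem coeff_homogeneous (a b : ℕ) (z : Pt l) (hz : ∑ i, z i ≠ ∑ i, rho l i + a - b) :
    (upStep l ^ a * downStep l ^ b * alt l).coeff z = 0 := by
  have hsum : ∀ i : Fin l, ∑ k, e i k = 1 := fun i => by simp [e]
  induction a generalizing z with
  | zero =>
    induction b generalizing z with
    | zero => simpa using coeff_alt_eq_zero_of_sum_ne (by simpa using hz)
    | succ b ih =>
      rw [pow_zero, one_mul] at ih ⊢
      rw [pow_succ', mul_assoc, coeff_downStep_mul]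
      refine Finset.sum_eq_zero fun i _ => ih _ ?_
      simp only [Pi.add_apply, Finset.sum_add_distrib, hsum]
      push_cast at hz ⊢
      omega
  | succ a ih =>
    rw [pow_succ', mul_assoc, mul_assoc, coeff_upStep_mul]
    refine Finset.sum_eq_zero fun i _ => ?_
    rw [← mul_assoc]
    refine ih _ ?_
    simp only [Pi.sub_apply, Finset.sum_sub_distrib, hsum]
    push_cast at hz ⊢
    omega

theorem coeff_step_pow (n : ℕ) : ((upStep l + downStep l) ^ (2 * n) * alt l).coeff (rho l) =
    ((2 * n).choose n : ℤ) * (downStep l ^ n * (upStep l ^ n * alt l)).coeff (rho l) := by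
  have hc : ∀ (c : ℕ) (F : LP l) (z : Pt l), (F * c).coeff z = c * F.coeff z := by
    intro c F z
    rw [mul_comm, ← nsmul_eq_mul, AddMonoidAlgebra.coeff_smul, Finsupp.smul_apply, nsmul_eq_mul]
  rw [add_pow, Finset.sum_mul, coeff_sum', Finset.sum_eq_single n]
  · rw [mul_right_comm, hc, show 2 * n - n = n by omega]
    rw [← mul_assoc, mul_comm (downStep l ^ n)]
  · intro m hm hmn
    rw [Finset.mem_range] at hm
    rw [mul_right_comm, hc, coeff_homogeneous, mul_zero]
    omega
  · intro h
    simp only [Finset.mem_range] at h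
    omega

theorem down_iterate_delta (n : ℕ) :
    (∀ z : Pt l, IsCh z → down^[n] delta z = (upStep l ^ n * alt l).coeff z) ∧
      AntiFrom 0 (upStep l ^ n * alt l) ∧
      ∀ (z : Pt l) (i : Fin l), z i ≤ 0 → (upStep l ^ n * alt l).coeff z = 0 := by
  classical
  induction n with
  | zero =>
    refine ⟨fun z hz => ?_, by simpa using AntiFrom.alt, fun z i hz => ?_⟩
    · rw [pow_zero, one_mul, coeff_alt_of_strictMono hz.1, Function.iterate_zero_apply, delta]
    · rw [pow_zero, one_mul, coeff_alt_eq_zero_of_nonpos hz]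
  | succ n ih =>
    obtain ⟨h1, h2, h3⟩ := ih
    rw [pow_succ', mul_assoc]
    refine ⟨fun z hz => ?_, h2.upStep, fun z i hz => ?_⟩
    · rw [Function.iterate_succ_apply', down_congr h1, coeff_upStep_mul]
      refine Finset.sum_congr rfl fun i _ => ?_
      split_ifs with h
      · rfl
      · rcases wall_of_not_isCh h hz (Or.inl ⟨i, by simp⟩) with ⟨j, k, hjk, h'⟩ | ⟨j, h'⟩
        · exact (h2.coeff_eq_zero (Nat.zero_le _) (Nat.zero_le _) hjk h').symm
        · exact (h3 _ j h'.le).symm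
    · rw [coeff_upStep_mul]
      refine Finset.sum_eq_zero fun j _ => h3 _ i ?_
      have := e_apply_mem j i
      simp only [Pi.sub_apply]
      omega

theorem up_iterate_coeff (n : ℕ) {F : LP l} (hF : AntiFrom 0 F) :
    (∀ z : Pt l, IsCh z → (up l)^[n] (fun z => F.coeff z) z = (downStep l ^ n * F).coeff z) ∧
      AntiFrom 0 (downStep l ^ n * F) := by
  induction n with
  | zero => simpa using hF
  | succ n ih =>
    obtain ⟨h1, h2⟩ := ih
    rw [pow_succ', mul_assoc]
    refine ⟨fun z hz => ?_, h2.downStep⟩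
    rw [Function.iterate_succ_apply', up_congr (fun z hz => h1 z hz.1), coeff_downStep_mul]
    refine Finset.sum_congr rfl fun i _ => ?_
    split_ifs with h
    · rfl
    · rw [isChLE_self] at h
      rcases wall_of_not_isCh h hz (Or.inr ⟨i, by simp⟩) with ⟨j, k, hjk, h'⟩ | ⟨j, h'⟩
      · exact (h2.coeff_eq_zero (Nat.zero_le _) (Nat.zero_le _) hjk h').symm
      · have h3 := hz.2 j
        have := e_apply_mem i j
        simp only [Pi.add_apply] at h'
        omega

theorem up_iterate_congr (n : ℕ) {v w : Pt l → ℤ} (h : ∀ z, IsCh z → v z = w z) :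
    ∀ z, IsCh z → (up l)^[n] v z = (up l)^[n] w z := by
  induction n with
  | zero => exact h
  | succ n ih =>
    intro z _
    rw [Function.iterate_succ_apply', Function.iterate_succ_apply', up_congr fun z hz => ih z hz.1]

theorem step_iterate_eq (n : ℕ) : step^[2 * n] (evenFrom 0) (rho l) =
    ((2 * n).choose n : ℤ) * (up l)^[n] (down^[n] delta) (rho l) := by
  obtain ⟨h1, h2, _⟩ := down_iterate_delta (l := l) n
  rw [step_iterate_evenFrom, coeff_step_pow, ← (up_iterate_coeff n h2).1 _ isCh_rho,
    up_iterate_congr n h1 _ isCh_rho]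

theorem e_add_le_one_of_ne {i j : Fin l} (h : i ≠ j) (k : Fin l) : e i k + e j k ≤ 1 := by
  by_cases hi : k = i
  · subst hi; rw [e_self, e_of_ne h]; omega
  · have := e_apply_mem j k; rw [e_of_ne hi]; omega

theorem isChLE_add_iff {c : ℕ} {z : Pt l} (hz : IsChLE c z) (i : Fin l) :
    IsChLE c (z + e i) ↔ IsCh (z + e i) ∧ l ≤ i + c := by
  refine and_congr_right fun _ => ⟨fun h => ?_, fun h k hk => ?_⟩
  · by_contra hi
    have h1 := h i (by omega)
    have h2 := hz.2 i (by omega)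
    simp [e_self] at h1
    omega
  · have : k ≠ i := by rintro rfl; omega
    rw [Pi.add_apply, e_of_ne this, add_zero, hz.2 k hk]

theorem le_of_isCh_sub {c : ℕ} {z : Pt l} (hz : IsChLE c z) {j : Fin l} (h : IsCh (z - e j)) :
    l ≤ j + c := by
  by_contra hj
  have h1 := (isCh_iff.1 h).1 j
  have h2 := hz.2 j (by omega)
  simp [e_self] at h1
  omega

theorem isChLE_add_sub_iff {c : ℕ} {z : Pt l} (hz : IsChLE c z) {i j : Fin l} (hij : i ≠ j) :
    IsChLE c (z + e i) ∧ IsCh (z + e i - e j) ↔ IsCh (z - e j) ∧ IsChLE c (z - e j + e i) := by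
  have hcomm : z - e j + e i = z + e i - e j := by abel
  rw [hcomm]
  constructor
  · rintro ⟨h1, h2⟩
    have h3 : IsCh (z - e j) := by
      refine ⟨fun a b hab => ?_, fun a => ?_⟩
      · have ha := hz.1.1 hab
        have hb := h2.1 hab
        have h5 := e_add_le_one_of_ne hij b
        have h6 := e_apply_mem j a
        have h7 := e_apply_mem j b
        have h8 := e_apply_mem i a
        have h9 := e_apply_mem i b
        simp only [Pi.add_apply, Pi.sub_apply] at *
        omega
      · have ha := hz.1.2 a
        have hb := h2.2 a
        have h5 := e_add_le_one_of_ne hij a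
        have h6 := e_apply_mem j a
        have h8 := e_apply_mem i a
        simp only [Pi.add_apply, Pi.sub_apply] at *
        omega
    refine ⟨h3, h2, fun k hk => ?_⟩
    have h4 := le_of_isCh_sub hz h3
    have : k ≠ j := by rintro rfl; omega
    rw [Pi.sub_apply, e_of_ne this, sub_zero, h1.2 k hk]
  · rintro ⟨h1, h2⟩
    refine ⟨(isChLE_add_iff hz i).2 ⟨⟨fun a b hab => ?_, fun a => ?_⟩, ?_⟩, h2.1⟩
    · have ha := hz.1.1 hab
      have hb := h2.1.1 hab
      have h5 := e_add_le_one_of_ne hij a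
      have h6 := e_apply_mem j a
      have h7 := e_apply_mem j b
      have h8 := e_apply_mem i a
      have h9 := e_apply_mem i b
      simp only [Pi.add_apply, Pi.sub_apply] at *
      omega
    · have ha := hz.1.2 a
      have h8 := e_apply_mem i a
      simp only [Pi.add_apply] at *
      omega
    · by_contra hi
      have h3 := h2.2 i (by omega)
      have h4 := hz.2 i (by omega)
      simp [e_self, e_of_ne hij] at h3
      omega

theorem isCh_add_iff {z : Pt l} (hz : IsCh z) {i j : Fin l} (hij : (j : ℕ) = i + 1) :
    IsCh (z + e i) ↔ z i + 1 < z j := by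
  have hne : j ≠ i := by rintro rfl; omega
  constructor
  · intro h
    have := h.1 (show i < j from Fin.lt_def.2 (by omega))
    simpa [e_self, e_of_ne hne] using this
  · refine fun h => ⟨fun a b hab => ?_, fun a => ?_⟩
    · have h1 := hz.1 hab
      by_cases ha : a = i
      · subst ha
        have h2 := hz.1.monotone (show j ≤ b from Fin.le_def.2 (by have : (a : ℕ) < b := hab; omega))
        rw [Pi.add_apply, Pi.add_apply, e_self, e_of_ne hab.ne']
        omega
      · have := e_apply_mem i b
        rw [Pi.add_apply, Pi.add_apply, e_of_ne ha]
        omega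
    · have := hz.2 a
      have := e_apply_mem i a
      rw [Pi.add_apply]
      omega

theorem isCh_sub_iff {z : Pt l} (hz : IsCh z) {i j : Fin l} (hij : (j : ℕ) = i + 1) :
    IsCh (z - e j) ↔ z i + 1 < z j := by
  have hne : i ≠ j := by rintro rfl; omega
  constructor
  · intro h
    have := h.1 (show i < j from Fin.lt_def.2 (by omega))
    simp [e_self, e_of_ne hne] at this
    omega
  · refine fun h => ⟨fun a b hab => ?_, fun a => ?_⟩
    · have h1 := hz.1 hab
      by_cases hb : b = j
      · subst hb
        have h2 := hz.1.monotone (show a ≤ i from Fin.le_def.2 (by have : (a : ℕ) < b := hab; omega))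
        rw [Pi.sub_apply, Pi.sub_apply, e_self, e_of_ne hab.ne]
        omega
      · have := e_apply_mem j a
        rw [Pi.sub_apply, Pi.sub_apply, e_of_ne hb]
        omega
    · have h1 := hz.2 a
      have h2 := hz.2 i
      by_cases ha : a = j
      · subst ha; rw [Pi.sub_apply, e_self]; omega
      · rw [Pi.sub_apply, e_of_ne ha]; omega

theorem isCh_add_last {z : Pt l} (hz : IsCh z) {i : Fin l} (hi : (i : ℕ) + 1 = l) :
    IsCh (z + e i) := by
  refine ⟨fun a b hab => ?_, fun a => ?_⟩
  · have h1 := hz.1 hab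
    have : a ≠ i := by rintro rfl; have : (a : ℕ) < b := hab; omega
    have := e_apply_mem i b
    rw [Pi.add_apply, Pi.add_apply, e_of_ne ‹a ≠ i›]
    omega
  · have := hz.2 a
    have := e_apply_mem i a
    rw [Pi.add_apply]
    omega

theorem isCh_sub_zero {z : Pt l} (hz : IsCh z) {i : Fin l} (hi : (i : ℕ) = 0) :
    IsCh (z - e i) ↔ 1 < z i := by
  constructor
  · intro h; have := h.2 i; simp [e_self] at this; omega
  · refine fun h => ⟨fun a b hab => ?_, fun a => ?_⟩
    · have h1 := hz.1 hab
      have : b ≠ i := by rintro rfl; have : (a : ℕ) < b := hab; omega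
      have := e_apply_mem i a
      rw [Pi.sub_apply, Pi.sub_apply, e_of_ne ‹b ≠ i›]
      omega
    · have := hz.2 a
      by_cases ha : a = i
      · subst ha; rw [Pi.sub_apply, e_self]; omega
      · rw [Pi.sub_apply, e_of_ne ha]; omega

open Classical in
theorem card_addable {c : ℕ} (hc : c ≤ l) {z : Pt l} (hz : IsChLE c z) :
    (∑ i, if IsChLE c (z + e i) then (1 : ℤ) else 0) =
      (∑ i, if IsCh (z - e i) then (1 : ℤ) else 0) +
        if 1 ≤ c ∧ IsChLE (c - 1) z then 1 else 0 := by
  rcases Nat.eq_zero_or_pos c with rfl | hc0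
  · rw [Finset.sum_eq_zero, Finset.sum_eq_zero]
    · simp
    · intro i _
      exact if_neg fun h => absurd (le_of_isCh_sub hz h) (by omega)
    · intro i _
      exact if_neg fun h => absurd ((isChLE_add_iff hz i).1 h).2 (by omega)
  · obtain ⟨m, rfl⟩ : ∃ m, l = m + 1 := ⟨l - 1, by omega⟩
    let t : Fin (m + 1) → ℤ := fun j =>
      if (j : ℕ) = m + 1 - c then 1 - (if 1 ≤ c ∧ IsChLE (c - 1) z then 1 else 0) else 0
    have hA : ∀ j : Fin (m + 1), (j : ℕ) = m + 1 - c → (IsChLE (c - 1) z ↔ ¬ ((j : ℤ) + 1 < z j)) := by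
      intro j hj
      have h1 := (isCh_iff.1 hz.1).1 j
      constructor
      · intro h
        have := h.2 j (by omega)
        omega
      · refine fun h => ⟨hz.1, fun i hi => ?_⟩
        by_cases hij : (i : ℕ) + c < m + 1
        · exact hz.2 i hij
        · have : i = j := Fin.ext (by omega)
          subst this
          omega
    have ht : ∑ j, t j = 1 - if 1 ≤ c ∧ IsChLE (c - 1) z then 1 else 0 := by
      rw [Finset.sum_eq_single (⟨m + 1 - c, by omega⟩ : Fin (m + 1))]
      · simp [t]
      · intro b _ hb
        exact if_neg fun h => hb (Fin.ext h)
      · simp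
    have h0 : (if IsCh (z - e (0 : Fin (m + 1))) then (1 : ℤ) else 0) = t 0 := by
      by_cases h : m + 1 - c = 0
      · have h1 := hA 0 (by simp [h])
        rw [isCh_sub_zero hz.1 rfl]
        simp only [t, Fin.val_zero, h]
        simp only [Fin.val_zero] at h1
        push_cast at h1
        by_cases h2 : IsChLE (c - 1) z
        · have := h1.1 h2
          simp [h2, show 1 ≤ c by omega]
          omega
        · have := h1.not.1 h2
          simp [h2]
          omega
      · rw [if_neg fun h' => absurd (le_of_isCh_sub hz h') (by simp; omega)]
        exact (if_neg fun h' => h h'.symm).symm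
    have hs : ∀ k : Fin m, (if IsCh (z - e k.succ) then (1 : ℤ) else 0) =
        (if IsChLE c (z + e k.castSucc) then (1 : ℤ) else 0) + t k.succ := by
      intro k
      have hsub := isCh_sub_iff hz.1 (i := k.castSucc) (j := k.succ) (by simp)
      have hadd := isCh_add_iff hz.1 (i := k.castSucc) (j := k.succ) (by simp)
      have haddc := isChLE_add_iff hz k.castSucc
      rw [hadd] at haddc
      by_cases h : m + 1 ≤ (k : ℕ) + c
      · have : t k.succ = 0 := if_neg (by simp; omega)
        rw [this, add_zero]
        refine if_congr ?_ rfl rfl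
        rw [hsub, haddc]
        simp [h]
      · rw [if_neg fun h' => h (haddc.1 h').2, zero_add]
        by_cases h' : (k.succ : ℕ) = m + 1 - c
        · simp only [t, h', if_true, hsub]
          have h1 := hA k.succ h'
          have h2 := hz.2 k.castSucc (by simp at h' ⊢; omega)
          rw [Fin.val_castSucc] at h2
          rw [Fin.val_succ] at h1
          push_cast at h1
          rw [h2]
          by_cases h3 : IsChLE (c - 1) z
          · have := h1.1 h3
            simp [h3, show 1 ≤ c by omega]
            omega
          · have := h1.not.1 h3
            simp [h3]
            omega
        · rw [if_neg fun h'' => absurd (le_of_isCh_sub hz h'') (by simp at h' ⊢; omega)]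
          exact (if_neg h').symm
    have hl : (if IsChLE c (z + e (Fin.last m)) then (1 : ℤ) else 0) = 1 :=
      if_pos ((isChLE_add_iff hz _).2 ⟨isCh_add_last hz.1 (by simp), by simp; omega⟩)
    rw [Fin.sum_univ_succ] at ht
    rw [Fin.sum_univ_castSucc, Fin.sum_univ_succ, hl, h0, Finset.sum_congr rfl fun k _ => hs k,
      Finset.sum_add_distrib]
    linarith

open Classical in
theorem up_down {c : ℕ} (hc : c ≤ l) (v : Pt l → ℤ) {z : Pt l} (hz : IsChLE c z) :
    up c (down v) z = down (up c v) z + if 1 ≤ c ∧ IsChLE (c - 1) z then v z else 0 := by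
  have h1 : up c (down v) z = ∑ i, ∑ j, if IsChLE c (z + e i) ∧ IsCh (z + e i - e j) then
      v (z + e i - e j) else 0 := by
    refine Finset.sum_congr rfl fun i _ => ?_
    by_cases h : IsChLE c (z + e i) <;> simp [h, down]
  have h2 : down (up c v) z = ∑ i, ∑ j, if IsCh (z - e j) ∧ IsChLE c (z - e j + e i) then
      v (z - e j + e i) else 0 := by
    rw [Finset.sum_comm]
    refine Finset.sum_congr rfl fun i _ => ?_
    by_cases h : IsCh (z - e i) <;> simp [h, up]
  have h3 : ∀ i j, (if IsChLE c (z + e i) ∧ IsCh (z + e i - e j) then v (z + e i - e j) else 0) =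
      (if IsCh (z - e j) ∧ IsChLE c (z - e j + e i) then v (z - e j + e i) else 0) +
      if i = j then ((if IsChLE c (z + e i) then (1 : ℤ) else 0) -
        (if IsCh (z - e i) then (1 : ℤ) else 0)) * v z else 0 := by
    intro i j
    by_cases hij : i = j
    · subst hij
      rw [add_sub_cancel_right, sub_add_cancel]
      by_cases ha : IsChLE c (z + e i) <;> by_cases hb : IsCh (z - e i) <;> simp [ha, hb, hz, hz.1]
    · rw [if_congr (isChLE_add_sub_iff hz hij) rfl rfl, if_neg hij, add_zero,
        show z + e i - e j = z - e j + e i by abel]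
  have h4 := card_addable hc hz
  simp only [h1, h3, Finset.sum_add_distrib, ← h2, Finset.sum_ite_eq, Finset.mem_univ, if_true,
    ← Finset.sum_mul, Finset.sum_sub_distrib]
  rw [h4, add_sub_cancel_left, ite_mul, one_mul, zero_mul]

/-- Weighted count of walks from `rho` to the points weighted by `v`; the bound for the last step
is the head of the list. -/
def walkSum : List ℕ → (Pt l → ℤ) → ℤ
  | [], v => v (rho l)
  | c :: cs, v => walkSum cs (up c v)

theorem isChLE_zero {z : Pt l} : IsChLE 0 z ↔ z = rho l := by
  constructor
  · exact fun h => funext fun i => h.2 i (by simp)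
  · rintro rfl; exact ⟨isCh_rho, fun i _ => rfl⟩

theorem IsChLE.mono {c d : ℕ} (h : c ≤ d) {z : Pt l} (hz : IsChLE c z) : IsChLE d z :=
  ⟨hz.1, fun i hi => hz.2 i (by omega)⟩

theorem isChLE_min {c d : ℕ} {z : Pt l} : IsChLE (min c d) z ↔ IsChLE c z ∧ IsChLE d z := by
  refine ⟨fun h => ⟨h.mono (by simp), h.mono (by simp)⟩, fun ⟨h1, h2⟩ => ?_⟩
  rcases le_total c d with h | h
  · rwa [min_eq_left h]
  · rwa [min_eq_right h]

theorem walkSum_congr {cs : List ℕ} {v w : Pt l → ℤ}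
    (h : ∀ z, IsChLE (cs.headD 0) z → v z = w z) : walkSum cs v = walkSum cs w := by
  cases cs with
  | nil => exact h _ (isChLE_zero.2 rfl)
  | cons c cs =>
    rw [walkSum, walkSum]
    congr 1
    exact funext (up_congr h)

theorem walkSum_add (cs : List ℕ) (v w : Pt l → ℤ) :
    walkSum cs (fun z => v z + w z) = walkSum cs v + walkSum cs w := by
  induction cs generalizing v w with
  | nil => rfl
  | cons c cs ih =>
    rw [walkSum, walkSum, walkSum, ← ih]
    congr 1
    funext z
    simp only [up, ← Finset.sum_add_distrib]
    refine Finset.sum_congr rfl fun i _ => ?_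
    split_ifs <;> simp

theorem walkSum_zero (cs : List ℕ) : walkSum cs (fun _ : Pt l => 0) = 0 := by
  have := walkSum_add cs (fun _ : Pt l => 0) (fun _ => 0)
  simp only [add_zero] at this
  omega

open Classical in
theorem walkSum_restrict (d : ℕ) (cs : List ℕ) (v : Pt l → ℤ) :
    walkSum cs (fun z => if IsChLE d z then v z else 0) = walkSum (cs.map (min d)) v := by
  induction cs generalizing v with
  | nil => simp [walkSum, (isChLE_zero.2 rfl).mono (Nat.zero_le d)]
  | cons c cs ih =>
    rw [List.map_cons, walkSum, walkSum, ← ih]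
    refine walkSum_congr fun z hz => ?_
    have h1 : up c (fun z => if IsChLE d z then v z else 0) z = up (min d c) v z := by
      refine Finset.sum_congr rfl fun i _ => ?_
      rw [isChLE_min]
      by_cases h1 : IsChLE c (z + e i) <;> by_cases h2 : IsChLE d (z + e i) <;> simp [h1, h2]
    rw [h1]
    split_ifs with h
    · rfl
    · refine Finset.sum_eq_zero fun i _ => if_neg fun h' => h ⟨hz.1, fun k hk => ?_⟩
      have h2 := (isChLE_min.1 h').1.2 k hk
      have h3 := (isCh_iff.1 hz.1).1 k
      have h4 := e_apply_mem i k
      rw [Pi.add_apply] at h2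
      omega

/-- The sequences of bounds left after deleting one step. -/
def dels : List ℕ → List (List ℕ)
  | [] => []
  | c :: cs => (if 1 ≤ c then [cs.map (min (c - 1))] else []) ++ (dels cs).map (c :: ·)

theorem down_rho (v : Pt l → ℤ) : down v (rho l) = 0 :=
  Finset.sum_eq_zero fun _ _ => if_neg fun h =>
    absurd (le_of_isCh_sub (isChLE_zero.2 rfl) h) (by omega)

theorem isChLE_of_headD {c : ℕ} {cs : List ℕ} (h : (c :: cs).Pairwise (fun a b => b ≤ a))
    {z : Pt l} (hz : IsChLE (cs.headD 0) z) : IsChLE c z := by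
  refine hz.mono ?_
  cases cs with
  | nil => simp
  | cons d cs => exact List.rel_of_pairwise_cons h (by simp)

theorem walkSum_down {cs : List ℕ} (hcs : cs.Pairwise (fun a b => b ≤ a)) (hl : ∀ c ∈ cs, c ≤ l)
    (v : Pt l → ℤ) : walkSum cs (down v) = ((dels cs).map fun cs' => walkSum cs' v).sum := by
  classical
  induction cs generalizing v with
  | nil => simp [dels, walkSum, down_rho]
  | cons c cs ih =>
    have h1 : walkSum cs (up c (down v)) = walkSum cs (down (up c v)) +
        walkSum cs (fun z => if 1 ≤ c ∧ IsChLE (c - 1) z then v z else 0) := by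
      rw [← walkSum_add]
      refine walkSum_congr fun z hz => ?_
      rw [up_down (hl c (by simp)) v (isChLE_of_headD hcs hz)]
    rw [walkSum, h1, ih hcs.of_cons (fun d hd => hl d (by simp [hd])), dels]
    by_cases hc : 1 ≤ c
    · simp only [hc, true_and, if_true]
      rw [walkSum_restrict]
      simp [Function.comp_def, walkSum, add_comm]
    · simp only [hc, false_and, if_false]
      rw [walkSum_zero]
      simp [Function.comp_def, walkSum]

theorem up_evenFrom {c : ℕ} {z : Pt l} (hz : IsChLE c z) :
    up c (evenFrom 0) z = down (evenFrom 0) z := by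
  refine Finset.sum_congr rfl fun i _ => ?_
  have hE : ∀ w : Pt l, EvenFrom 0 w ↔ IsCh w ∧ ∀ k : Fin l, Even (w k - (k + 1)) := by
    intro w
    rw [isCh_iff]
    simp only [EvenFrom, Nat.not_lt_zero, false_imp_iff, implies_true, true_and]
    tauto
  have hpar : (∀ k : Fin l, Even ((z + e i) k - (k + 1))) ↔ ∀ k : Fin l, Even ((z - e i) k - (k + 1)) := by
    refine forall_congr' fun k => ?_
    rw [Pi.add_apply, Pi.sub_apply, Int.even_iff, Int.even_iff]
    omega
  have key : IsChLE c (z + e i) ∧ EvenFrom 0 (z + e i) ↔ IsCh (z - e i) ∧ EvenFrom 0 (z - e i) := by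
    rw [hE, hE, isChLE_add_iff hz, hpar]
    suffices h : (∀ k : Fin l, Even ((z - e i) k - (k + 1))) →
        ((IsCh (z + e i) ∧ l ≤ i + c) ∧ IsCh (z - e i)) by tauto
    intro h
    have h1 : ∀ k, k ≠ i → Even (z k - (k + 1)) := fun k hk => by
      have := h k; rwa [Pi.sub_apply, e_of_ne hk, sub_zero] at this
    have h2 := h i
    obtain ⟨h3, h4⟩ := isCh_iff.1 hz.1
    rw [Pi.sub_apply, e_self, Int.even_iff] at h2
    refine ⟨⟨isCh_iff.2 ⟨fun k => ?_, fun a b hab => ?_⟩, ?_⟩,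
      isCh_iff.2 ⟨fun k => ?_, fun a b hab => ?_⟩⟩
    · have := h3 k
      have := e_apply_mem i k
      rw [Pi.add_apply]; omega
    · have h5 := h4 a b hab
      by_cases ha : a = i
      · by_cases hb : b = i
        · rw [ha, hb]
        · have h6 := h1 b hb
          rw [Int.even_iff] at h6
          subst ha
          rw [Pi.add_apply, Pi.add_apply, e_self, e_of_ne hb]
          omega
      · have := e_apply_mem i b
        rw [Pi.add_apply, Pi.add_apply, e_of_ne ha]
        omega
    · by_contra hi
      have := hz.2 i (by omega)
      omega
    · have := h3 k
      by_cases hk : k = i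
      · subst hk; rw [Pi.sub_apply, e_self]; omega
      · rw [Pi.sub_apply, e_of_ne hk]; omega
    · have h5 := h4 a b hab
      by_cases hb : b = i
      · by_cases ha : a = i
        · rw [ha, hb]
        · have h6 := h1 a ha
          rw [Int.even_iff] at h6
          subst hb
          rw [Pi.sub_apply, Pi.sub_apply, e_self, e_of_ne ha]
          omega
      · have := e_apply_mem i a
        rw [Pi.sub_apply, Pi.sub_apply, e_of_ne hb]
        omega
  simp only [evenFrom, ← ite_and]
  by_cases h : IsCh (z - e i) ∧ EvenFrom 0 (z - e i)
  · rw [if_pos h, if_pos (key.2 h)]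
  · rw [if_neg h, if_neg (key.not.2 h)]

theorem walkSum_cons_evenFrom {c : ℕ} {cs : List ℕ} (hcs : (c :: cs).Pairwise (fun a b => b ≤ a))
    (hl : ∀ d ∈ cs, d ≤ l) : walkSum (c :: cs) (evenFrom 0 : Pt l → ℤ) =
      ((dels cs).map fun cs' => walkSum cs' (evenFrom 0 : Pt l → ℤ)).sum := by
  rw [walkSum, ← walkSum_down hcs.of_cons hl]
  exact walkSum_congr fun z hz => up_evenFrom (isChLE_of_headD hcs hz)

theorem walkSum_step {cs : List ℕ} (hcs : cs.Pairwise (fun a b => b ≤ a)) (hl : ∀ d ∈ cs, d ≤ l)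
    (v : Pt l → ℤ) : walkSum cs (step v) =
      walkSum (l :: cs) v + ((dels cs).map fun cs' => walkSum cs' v).sum := by
  rw [← walkSum_down hcs hl, walkSum, ← walkSum_add]
  rfl

theorem walkSum_replicate (n c : ℕ) (v : Pt l → ℤ) :
    walkSum (List.replicate n c) v = (up c)^[n] v (rho l) := by
  induction n generalizing v with
  | zero => rfl
  | succ n ih => rw [List.replicate_succ, walkSum, ih, Function.iterate_succ_apply]

theorem evenFrom_rho : evenFrom 0 (rho l) = 1 :=
  if_pos ⟨fun _ _ => rfl, fun _ => le_rfl, fun i => by simp [rho], fun i j _ => by simp [rho]⟩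

/-- Truncation of the bounds of the indices after `a` below the bound of `a`. -/
def cut (C : ℤ → ℕ) (a s : ℤ) : ℕ := if a < s then min (C a - 1) (C s) else C s

/-- The points `p ∈ P` can be labelled by `1, …, C p.1`, increasingly towards the north-west. -/
def Good (C : ℤ → ℕ) (P : Finset (ℤ × ℤ)) : Prop :=
  ∃ h : ℤ × ℤ → ℕ, (∀ p ∈ P, 1 ≤ h p ∧ h p ≤ C p.1) ∧
    ∀ p ∈ P, ∀ q ∈ P, q.1 < p.1 → p.2 < q.2 → h p < h q

theorem good_insert {C : ℤ → ℕ} {P : Finset (ℤ × ℤ)} {p₀ : ℤ × ℤ} (h₀ : ∀ p ∈ P, p.2 < p₀.2)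
    (h₁ : ∀ p ∈ P, p.1 ≠ p₀.1) : Good C (insert p₀ P) ↔ 1 ≤ C p₀.1 ∧ Good (cut C p₀.1) P := by
  constructor
  · rintro ⟨h, hb, hi⟩
    have hp₀ := hb p₀ (by simp)
    refine ⟨hp₀.1.trans hp₀.2, h, fun p hp => ?_, fun p hp q hq =>
      hi p (by simp [hp]) q (by simp [hq])⟩
    have h2 := hb p (by simp [hp])
    refine ⟨h2.1, ?_⟩
    unfold cut
    split_ifs with h3
    · have h4 := hi p (by simp [hp]) p₀ (by simp) h3 (h₀ p hp)
      exact le_min (by omega) h2.2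
    · exact h2.2
  · rintro ⟨hC, h, hb, hi⟩
    have hne : ∀ p ∈ P, p ≠ p₀ := fun p hp hpe => h₁ p hp (by rw [hpe])
    have hle : ∀ p ∈ P, h p ≤ C p.1 ∧ (p₀.1 < p.1 → h p < C p₀.1) := by
      intro p hp
      have h2 := (hb p hp).2
      unfold cut at h2
      split_ifs at h2 with h3
      · rw [le_min_iff] at h2
        exact ⟨h2.2, fun _ => by omega⟩
      · exact ⟨h2, fun h4 => absurd h4 h3⟩
    refine ⟨fun p => if p = p₀ then C p₀.1 else h p, fun p hp => ?_, fun p hp q hq hpq hpq' => ?_⟩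
    · dsimp only
      rcases Finset.mem_insert.1 hp with hp' | hp'
      · simp [hp', hC]
      · rw [if_neg (hne p hp')]
        exact ⟨(hb p hp').1, (hle p hp').1⟩
    · dsimp only
      rcases Finset.mem_insert.1 hp with hp' | hp' <;>
        rcases Finset.mem_insert.1 hq with hq' | hq'
      · rw [hp', hq'] at hpq'
        omega
      · have := h₀ q hq'
        rw [hp'] at hpq'
        omega
      · rw [if_neg (hne p hp'), if_pos hq']
        exact (hle p hp').2 (hq' ▸ hpq)
      · rw [if_neg (hne p hp'), if_neg (hne q hq')]
        exact hi p hp' q hq' hpq hpq'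

/-- The point set `P` matches the items in `T`, where `p` uses the items `p.1` and `|p.2|`. -/
structure IsMatch (T : Finset ℤ) (A : ℤ × ℤ → Prop) (C : ℤ → ℕ) (P : Finset (ℤ × ℤ)) : Prop where
  allowed : ∀ p ∈ P, A p
  abs_lt : ∀ p ∈ P, |p.2| < p.1
  mem : ∀ p ∈ P, p.1 ∈ T ∧ |p.2| ∈ T
  unique : ∀ t ∈ T, ∃! p, p ∈ P ∧ (p.1 = t ∨ |p.2| = t)
  good : Good C P

open Classical in
/-- The finite set of all matchings. -/
def matchings (T : Finset ℤ) (A : ℤ × ℤ → Prop) (C : ℤ → ℕ) : Finset (Finset (ℤ × ℤ)) :=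
  (T ×ˢ (T ∪ T.image Neg.neg)).powerset.filter (IsMatch T A C)

theorem mem_matchings {T : Finset ℤ} {A : ℤ × ℤ → Prop} {C : ℤ → ℕ} {P : Finset (ℤ × ℤ)} :
    P ∈ matchings T A C ↔ IsMatch T A C P := by
  classical
  rw [matchings, Finset.mem_filter, Finset.mem_powerset, and_iff_right_iff_imp]
  intro h p hp
  have h1 := h.mem p hp
  rw [Finset.mem_product, Finset.mem_union, Finset.mem_image]
  refine ⟨h1.1, ?_⟩
  rcases abs_choice p.2 with h2 | h2
  · exact Or.inl (h2 ▸ h1.2)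
  · exact Or.inr ⟨_, h1.2, by rw [h2, neg_neg]⟩

theorem isMatch_congr {T : Finset ℤ} {A B : ℤ × ℤ → Prop} {C : ℤ → ℕ} {P : Finset (ℤ × ℤ)}
    (h : ∀ p : ℤ × ℤ, |p.2| < p.1 → p.1 ∈ T → |p.2| ∈ T → (A p ↔ B p)) :
    IsMatch T A C P ↔ IsMatch T B C P :=
  ⟨fun H => ⟨fun p hp => (h p (H.abs_lt p hp) (H.mem p hp).1 (H.mem p hp).2).1 (H.allowed p hp),
    H.abs_lt, H.mem, H.unique, H.good⟩,
   fun H => ⟨fun p hp => (h p (H.abs_lt p hp) (H.mem p hp).1 (H.mem p hp).2).2 (H.allowed p hp),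
    H.abs_lt, H.mem, H.unique, H.good⟩⟩

theorem isMatch_insert {T : Finset ℤ} {A : ℤ × ℤ → Prop} {C : ℤ → ℕ} {P : Finset (ℤ × ℤ)}
    {a y : ℤ} (hA : A (a, y)) (hya : |y| < a) (ha : a ∈ T) (hy : |y| ∈ T)
    (htop : ∀ p : ℤ × ℤ, p.1 ∈ (T.erase a).erase |y| → |p.2| ∈ (T.erase a).erase |y| → A p → p.2 < y)
    (hP : (a, y) ∉ P) :
    IsMatch T A C (insert (a, y) P) ↔
      1 ≤ C a ∧ IsMatch ((T.erase a).erase |y|) A (cut C a) P := by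
  constructor
  · intro H
    have hmem : ∀ p ∈ P, p.1 ∈ (T.erase a).erase |y| ∧ |p.2| ∈ (T.erase a).erase |y| := by
      intro p hp
      have hpi : p ∈ insert (a, y) P := Finset.mem_insert_of_mem hp
      have h1 := H.mem p hpi
      have h2 : ∀ t ∈ T, (a = t ∨ |y| = t) → (p.1 = t ∨ |p.2| = t) → False := by
        intro t ht h3 h4
        have := (H.unique t ht).unique ⟨hpi, h4⟩ ⟨Finset.mem_insert_self _ _, h3⟩
        exact hP (this ▸ hp)
      simp only [Finset.mem_erase]
      refine ⟨⟨fun h => ?_, fun h => ?_, h1.1⟩, fun h => ?_, fun h => ?_, h1.2⟩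
      · exact h2 _ hy (Or.inr rfl) (Or.inl h)
      · exact h2 _ ha (Or.inl rfl) (Or.inl h)
      · exact h2 _ hy (Or.inr rfl) (Or.inr h)
      · exact h2 _ ha (Or.inl rfl) (Or.inr h)
    have hg := (good_insert (fun p hp => htop p (hmem p hp).1 (hmem p hp).2
      (H.allowed p (Finset.mem_insert_of_mem hp))) (fun p hp h => by
        have := (hmem p hp).1; simp only [Finset.mem_erase] at this; exact this.2.1 h)).1 H.good
    refine ⟨hg.1, fun p hp => H.allowed p (Finset.mem_insert_of_mem hp),
      fun p hp => H.abs_lt p (Finset.mem_insert_of_mem hp), hmem, fun t ht => ?_, hg.2⟩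
    simp only [Finset.mem_erase] at ht
    obtain ⟨p, ⟨hp, hpt⟩, hu⟩ := H.unique t ht.2.2
    rcases Finset.mem_insert.1 hp with rfl | hp
    · rcases hpt with h | h
      · exact absurd h.symm ht.2.1
      · exact absurd h.symm ht.1
    · exact ⟨p, ⟨hp, hpt⟩, fun q hq => hu q ⟨Finset.mem_insert_of_mem hq.1, hq.2⟩⟩
  · rintro ⟨hC, H⟩
    have hmem : ∀ p ∈ P, (p.1 ∈ T ∧ p.1 ≠ a ∧ p.1 ≠ |y|) ∧ |p.2| ∈ T ∧ |p.2| ≠ a ∧ |p.2| ≠ |y| := by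
      intro p hp
      have := H.mem p hp
      simp only [Finset.mem_erase] at this
      tauto
    refine ⟨fun p hp => ?_, fun p hp => ?_, fun p hp => ?_, fun t ht => ?_, ?_⟩
    · rcases Finset.mem_insert.1 hp with rfl | hp
      exacts [hA, H.allowed p hp]
    · rcases Finset.mem_insert.1 hp with rfl | hp
      exacts [hya, H.abs_lt p hp]
    · rcases Finset.mem_insert.1 hp with rfl | hp
      exacts [⟨ha, hy⟩, ⟨(hmem p hp).1.1, (hmem p hp).2.1⟩]
    · by_cases h : a = t ∨ |y| = t
      · refine ⟨(a, y), ⟨Finset.mem_insert_self _ _, h⟩, fun q hq => ?_⟩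
        rcases Finset.mem_insert.1 hq.1 with h1 | h1
        · exact h1
        · have h2 := hmem q h1
          rcases h with rfl | rfl <;> rcases hq.2 with h3 | h3
          · exact absurd h3 h2.1.2.1
          · exact absurd h3 h2.2.2.1
          · exact absurd h3 h2.1.2.2
          · exact absurd h3 h2.2.2.2
      · obtain ⟨p, hp, hu⟩ := H.unique t (by
          simp only [Finset.mem_erase]
          exact ⟨fun h' => h (Or.inr h'.symm), fun h' => h (Or.inl h'.symm), ht⟩)
        refine ⟨p, ⟨Finset.mem_insert_of_mem hp.1, hp.2⟩, fun q hq => ?_⟩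
        rcases Finset.mem_insert.1 hq.1 with h1 | h1
        · subst h1; exact absurd hq.2 h
        · exact hu q ⟨h1, hq.2⟩
    · exact (good_insert (fun p hp => htop p (H.mem p hp).1 (H.mem p hp).2 (H.allowed p hp))
        (fun p hp => (hmem p hp).1.2.1)).2 ⟨hC, H.good⟩

open Classical in
theorem card_matchings_filter {T T' : Finset ℤ} {A A' : ℤ × ℤ → Prop} {C : ℤ → ℕ}
    {a y : ℤ} (hA : A (a, y)) (hya : |y| < a) (ha : a ∈ T) (hy : |y| ∈ T)
    (hT : (T.erase a).erase |y| = T')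
    (htop : ∀ p : ℤ × ℤ, p.1 ∈ T' → |p.2| ∈ T' → A p → p.2 < y)
    (hA' : ∀ p : ℤ × ℤ, |p.2| < p.1 → p.1 ∈ T' → |p.2| ∈ T' → (A p ↔ A' p)) :
    ((matchings T A C).filter fun P => (a, y) ∈ P).card =
      if 1 ≤ C a then (matchings T' A' (cut C a)).card else 0 := by
  subst hT
  have key : ∀ P, (a, y) ∉ P → (IsMatch T A C (insert (a, y) P) ↔
      1 ≤ C a ∧ IsMatch ((T.erase a).erase |y|) A' (cut C a) P) := fun P hP => by
    rw [isMatch_insert hA hya ha hy htop hP, isMatch_congr hA']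
  have hnot : ∀ P ∈ matchings ((T.erase a).erase |y|) A' (cut C a), (a, y) ∉ P := by
    intro P hP h
    have := ((mem_matchings.1 hP).mem _ h).1
    simp at this
  split_ifs with hC
  · have h1 : ((matchings T A C).filter fun P => (a, y) ∈ P) =
        (matchings ((T.erase a).erase |y|) A' (cut C a)).image (insert (a, y)) := by
      ext P
      rw [Finset.mem_filter, Finset.mem_image, mem_matchings]
      constructor
      · rintro ⟨h1, h2⟩
        refine ⟨P.erase (a, y), ?_, Finset.insert_erase h2⟩
        rw [← Finset.insert_erase h2, key _ (Finset.notMem_erase _ _)] at h1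
        exact mem_matchings.2 h1.2
      · rintro ⟨Q, hQ, rfl⟩
        exact ⟨(key Q (hnot Q hQ)).2 ⟨hC, mem_matchings.1 hQ⟩, Finset.mem_insert_self _ _⟩
    rw [h1, Finset.card_image_of_injOn]
    intro P hP Q hQ h
    have h2 := congrArg (fun R => Finset.erase R (a, y)) h
    simpa [Finset.erase_insert (hnot P hP), Finset.erase_insert (hnot Q hQ)] using h2
  · rw [Finset.card_eq_zero, Finset.filter_eq_empty_iff]
    intro P hP h2
    rw [mem_matchings, ← Finset.insert_erase h2, key _ (Finset.notMem_erase _ _)] at hP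
    exact hC hP.1

open Classical in
theorem card_matchings_filter_exists {T : Finset ℤ} {A : ℤ × ℤ → Prop} {C : ℤ → ℕ} (O : Finset ℤ)
    {y : ℤ} (hy : |y| ∈ T) :
    ((matchings T A C).filter fun P => ∃ a ∈ O, (a, y) ∈ P).card =
      ∑ a ∈ O, ((matchings T A C).filter fun P => (a, y) ∈ P).card := by
  rw [← Finset.card_biUnion]
  · congr 1
    ext P
    simp only [Finset.mem_filter, Finset.mem_biUnion]
    tauto
  · intro a _ b _ hab
    rw [Function.onFun, Finset.disjoint_left]
    intro P h1 h2
    rw [Finset.mem_filter] at h1 h2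
    have := ((mem_matchings.1 h1.1).unique _ hy).unique ⟨h1.2, Or.inr rfl⟩ ⟨h2.2, Or.inr rfl⟩
    exact hab (congrArg Prod.fst this)

theorem sum_dels {O : List ℤ} (hO : O.Pairwise (· < ·)) (C : ℤ → ℕ) (F : List ℕ → ℤ) :
    ((dels (O.map C)).map F).sum =
      ∑ a ∈ O.toFinset, if 1 ≤ C a then F ((O.erase a).map (cut C a)) else 0 := by
  induction O generalizing F with
  | nil => simp [dels]
  | cons t O ih =>
    have h1 : ∀ a ∈ O, t < a := fun a ha => List.rel_of_pairwise_cons hO ha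
    have h2 : t ∉ O := fun h => lt_irrefl _ (h1 t h)
    have h3 := ih hO.of_cons fun cs => F (C t :: cs)
    rw [List.map_cons, dels, List.map_append, List.sum_append,
      List.map_map (l := dels (O.map C)), List.toFinset_cons, Finset.sum_insert (by simpa using h2)]
    refine congrArg₂ _ ?_ (h3.trans ?_)
    · split_ifs with hC
      · have : (O.map C).map (min (C t - 1)) = O.map (cut C t) := by
          rw [List.map_map]
          exact List.map_congr_left fun a ha => by simp [cut, h1 a ha]
        rw [this]
        simp
      · simp
    · refine Finset.sum_congr rfl fun a ha => ?_
      have ha' : t < a := h1 a (by simpa using ha)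
      rw [List.erase_cons_tail (by simpa using ha'.ne), List.map_cons]
      simp [cut, ha'.not_gt]

/-- The bounds `C` are at most `l` and decrease along `O`. -/
def Bounds (l : ℕ) (O : List ℤ) (C : ℤ → ℕ) : Prop :=
  (∀ a, C a ≤ l) ∧ ∀ a ∈ O, ∀ b ∈ O, a < b → C b ≤ C a

theorem Bounds.cut {O : List ℤ} {C : ℤ → ℕ} (h : Bounds l O C) (t : ℤ) :
    Bounds l (O.erase t) (cut C t) := by
  refine ⟨fun a => ?_, fun a ha b hb hab => ?_⟩
  · have := h.1 a
    unfold WeylWalk.cut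
    split_ifs
    · exact (min_le_right _ _).trans this
    · exact this
  · have := h.2 a (List.mem_of_mem_erase ha) b (List.mem_of_mem_erase hb) hab
    unfold WeylWalk.cut
    split_ifs <;> omega

theorem Bounds.pairwise {O : List ℤ} {C : ℤ → ℕ} (h : Bounds l O C) (hO : O.Pairwise (· < ·)) :
    (O.map C).Pairwise (fun a b => b ≤ a) := by
  rw [List.pairwise_map]
  exact hO.imp_of_mem fun ha hb hab => h.2 _ ha _ hb hab

theorem Bounds.map_le {O : List ℤ} {C : ℤ → ℕ} (h : Bounds l O C) : ∀ c ∈ O.map C, c ≤ l := by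
  intro c hc
  obtain ⟨a, _, rfl⟩ := List.mem_map.1 hc
  exact h.1 a

theorem matchings_empty {A : ℤ × ℤ → Prop} {C : ℤ → ℕ} : (matchings ∅ A C).card = 1 := by
  have : matchings ∅ A C = {∅} := by
    ext P
    rw [mem_matchings, Finset.mem_singleton]
    constructor
    · intro h
      rw [Finset.eq_empty_iff_forall_notMem]
      intro p hp
      simpa using (h.mem p hp).1
    · rintro rfl
      exact ⟨by simp, by simp, by simp, by simp, fun _ => 0, by simp, by simp⟩
  rw [this, Finset.card_singleton]

theorem card_matchings_bipartite {O R : List ℤ} {C : ℤ → ℕ} (hC : Bounds l O C)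
    (hlen : O.length = R.length) (hRO : (R ++ O).Pairwise (· < ·)) (hpos : ∀ t ∈ R, 0 < t) :
    ((matchings (R.toFinset ∪ O.toFinset) (fun p => p.1 ∈ O ∧ -p.2 ∈ R) C).card : ℤ) =
      walkSum (O.map C) (down^[R.length] (delta : Pt l → ℤ)) := by
  classical
  induction R generalizing O C with
  | nil =>
    obtain rfl : O = [] := List.length_eq_zero_iff.1 hlen
    simp [matchings_empty, walkSum, delta]
  | cons r R ih =>
    rw [List.length_cons, Function.iterate_succ_apply']
    have hO : O.Pairwise (· < ·) := (List.pairwise_append.1 hRO).2.1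
    have hR : (r :: R).Pairwise (· < ·) := (List.pairwise_append.1 hRO).1
    have hlt : ∀ s ∈ r :: R, ∀ t ∈ O, s < t := (List.pairwise_append.1 hRO).2.2
    have hr0 : 0 < r := hpos r (by simp)
    have hrR : ∀ s ∈ R, r < s := fun s hs => List.rel_of_pairwise_cons hR hs
    have habs : |-r| = r := by rw [abs_neg, abs_of_pos hr0]
    rw [walkSum_down (hC.pairwise hO) hC.map_le, sum_dels hO]
    have hall : matchings ((r :: R).toFinset ∪ O.toFinset) (fun p => p.1 ∈ O ∧ -p.2 ∈ r :: R) C =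
        (matchings ((r :: R).toFinset ∪ O.toFinset) (fun p => p.1 ∈ O ∧ -p.2 ∈ r :: R) C).filter
          fun P => ∃ a ∈ O.toFinset, (a, -r) ∈ P := by
      refine (Finset.filter_true_of_mem fun P hP => ?_).symm
      have H := mem_matchings.1 hP
      obtain ⟨p, ⟨hp, hpr⟩, _⟩ := H.unique r (by simp)
      have h1 := H.allowed p hp
      have h2 : p.2 = -r := by
        rcases hpr with h | h
        · exact absurd (hlt r (by simp) p.1 h1.1) (by omega)
        · have := hpos _ h1.2
          rw [abs_of_neg (by omega)] at h
          omega
      exact ⟨p.1, by simpa using h1.1, h2 ▸ hp⟩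
    rw [hall, card_matchings_filter_exists _ (by simp [habs]), Nat.cast_sum]
    refine Finset.sum_congr rfl fun a ha => ?_
    rw [List.mem_toFinset] at ha
    have hra : r < a := hlt r (by simp) a ha
    have hne : O.Nodup := hO.imp fun h => h.ne
    have herase : ∀ s, s ∈ O.erase a ↔ s ≠ a ∧ s ∈ O := fun s => hne.mem_erase_iff
    rw [card_matchings_filter (T' := R.toFinset ∪ (O.erase a).toFinset)
      (A' := fun p => p.1 ∈ O.erase a ∧ -p.2 ∈ R)]
    · split_ifs with h1
      · rw [ih (hC.cut a) (by rw [List.length_erase_of_mem ha, hlen]; simp) ?_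
          fun t ht => hpos t (by simp [ht])]
        rw [List.pairwise_append]
        exact ⟨hR.of_cons, hO.erase a, fun s hs t ht =>
          hlt s (by simp [hs]) t (List.mem_of_mem_erase ht)⟩
      · simp
    · exact ⟨ha, by simp⟩
    · rw [habs]; exact hra
    · simp [ha]
    · simp [habs]
    · ext s
      simp only [habs, Finset.mem_erase, Finset.mem_union, List.mem_toFinset, List.mem_cons, herase]
      have h1 := hrR s
      have h2 := hlt r (by simp) s
      have h3 := hlt a
      constructor
      · tauto
      · rintro (h | h)
        · refine ⟨(h1 h).ne', ?_, Or.inl (Or.inr h)⟩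
          rintro rfl
          exact absurd (hlt s (by simp [h]) s ha) (lt_irrefl _)
        · exact ⟨(h2 h.2).ne', h.1, Or.inr h.2⟩
    · rintro p hp1 hp2 ⟨h1, h2⟩
      rcases List.mem_cons.1 h2 with h | h
      · have h5 : |p.2| = r := by rw [← abs_neg, h, abs_of_pos hr0]
        rw [h5] at hp2
        simp only [Finset.mem_union, List.mem_toFinset, herase] at hp2
        rcases hp2 with h6 | h6
        · exact absurd (hrR r h6) (lt_irrefl _)
        · exact absurd (hlt r (by simp) r h6.2) (lt_irrefl _)
      · have := hrR _ h
        omega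
    · intro p _ hp1 hp2
      simp only [Finset.mem_union, List.mem_toFinset, herase] at hp1 hp2
      rw [herase]
      constructor
      · rintro ⟨h1, h2⟩
        refine ⟨⟨?_, h1⟩, ?_⟩
        · rintro rfl
          rcases hp1 with h | h
          · exact absurd (hlt _ (by simp [h]) _ ha) (lt_irrefl _)
          · exact h.1 rfl
        · rcases List.mem_cons.1 h2 with h | h
          · have h5 : |p.2| = r := by rw [← abs_neg, h, abs_of_pos hr0]
            rw [h5] at hp2
            rcases hp2 with h6 | h6
            · exact absurd (hrR r h6) (lt_irrefl _)
            · exact absurd (hlt r (by simp) r h6.2) (lt_irrefl _)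
          · exact h
      · rintro ⟨h1, h2⟩
        exact ⟨h1.2, by simp [h2]⟩

/-- The first `m` odd positive integers. -/
def odds (m : ℕ) : Finset ℤ := (Finset.range m).image fun i : ℕ => 2 * (i : ℤ) + 1

theorem mem_odds {m : ℕ} {t : ℤ} : t ∈ odds m ↔ ∃ i : ℕ, i < m ∧ 2 * (i : ℤ) + 1 = t := by
  simp [odds]

theorem odds_succ (m : ℕ) : odds (m + 1) = insert (2 * (m : ℤ) + 1) (odds m) := by
  rw [odds, Finset.range_add_one, Finset.image_insert, odds]

theorem bounds_of_mem_odds {m : ℕ} {t : ℤ} (h : t ∈ odds m) : 0 < t ∧ t < 2 * m := by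
  obtain ⟨i, hi, rfl⟩ := mem_odds.1 h
  omega

theorem Bounds.of_cons {t : ℤ} {O : List ℤ} {C : ℤ → ℕ} (h : Bounds l (t :: O) C) : Bounds l O C :=
  ⟨h.1, fun a ha b hb => h.2 a (by simp [ha]) b (by simp [hb])⟩

theorem card_matchings_evenFrom {O : List ℤ} {C : ℤ → ℕ} (hC : Bounds l O C)
    (hO : O.Pairwise (· < ·)) (hpos : ∀ t ∈ O, 0 < t) :
    ((matchings O.toFinset (fun p => 0 < p.2 → p.2 ∉ O) C).card : ℤ) =
      walkSum (O.map C) (evenFrom 0 : Pt l → ℤ) := by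
  classical
  induction hn : O.length using Nat.strong_induction_on generalizing O C with
  | _ n ih =>
  match O, hC, hO, hpos, hn with
  | [], hC, hO, hpos, hn => simp [matchings_empty, walkSum, evenFrom_rho]
  | t :: O, hC, hO, hpos, hn =>
    have ht : 0 < t := hpos t (by simp)
    have hlt : ∀ s ∈ O, t < s := fun s hs => List.rel_of_pairwise_cons hO hs
    have habs : |-t| = t := by rw [abs_neg, abs_of_pos ht]
    have hne : O.Nodup := hO.of_cons.imp fun h => h.ne
    have herase : ∀ a s, s ∈ O.erase a ↔ s ≠ a ∧ s ∈ O := fun a s => hne.mem_erase_iff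
    have hcs := hC.pairwise hO
    rw [List.map_cons] at hcs ⊢
    rw [walkSum_cons_evenFrom hcs hC.of_cons.map_le, sum_dels hO.of_cons]
    have hall : matchings (t :: O).toFinset (fun p => 0 < p.2 → p.2 ∉ t :: O) C =
        (matchings (t :: O).toFinset (fun p => 0 < p.2 → p.2 ∉ t :: O) C).filter
          fun P => ∃ a ∈ O.toFinset, (a, -t) ∈ P := by
      refine (Finset.filter_true_of_mem fun P hP => ?_).symm
      have H := mem_matchings.1 hP
      obtain ⟨p, ⟨hp, hpt⟩, _⟩ := H.unique t (by simp)
      have h1 := H.allowed p hp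
      have h2 := H.mem p hp
      have h3 := H.abs_lt p hp
      simp only [List.mem_toFinset, List.mem_cons] at h2
      have h4 : t ≤ |p.2| := by
        rcases h2.2 with h | h
        · exact h.ge
        · exact (hlt _ h).le
      have h5 : |p.2| = t := by
        rcases hpt with h | h <;> omega
      have h6 : p.2 = -t := by
        rcases abs_choice p.2 with h | h
        · have h7 : p.2 = t := by omega
          rw [h7] at h1
          exact absurd (List.mem_cons_self ..) (h1 ht)
        · omega
      refine ⟨p.1, ?_, h6 ▸ hp⟩
      rcases h2.1 with h | h
      · omega
      · simpa using h
    rw [hall, card_matchings_filter_exists _ (by simp [habs]), Nat.cast_sum]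
    refine Finset.sum_congr rfl fun a ha => ?_
    rw [List.mem_toFinset] at ha
    have hta := hlt a ha
    rw [card_matchings_filter (T' := (O.erase a).toFinset)
      (A' := fun p => 0 < p.2 → p.2 ∉ O.erase a)]
    · split_ifs with h1
      · refine ih _ ?_ (hC.of_cons.cut a) (hO.of_cons.erase a) (fun s hs => hpos s ?_) rfl
        · rw [List.length_erase_of_mem ha, ← hn, List.length_cons]
          omega
        · simp [List.mem_of_mem_erase hs]
      · simp
    · intro h
      dsimp only at h
      omega
    · rwa [habs]
    · simp [ha]
    · simp [habs]
    · ext s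
      simp only [habs, Finset.mem_erase, List.mem_toFinset, List.mem_cons, herase]
      have := hlt s
      constructor
      · tauto
      · rintro ⟨h1, h2⟩
        exact ⟨(this h2).ne', h1, Or.inr h2⟩
    · intro p _ hp2 hA
      simp only [List.mem_toFinset, herase] at hp2
      have h1 := hlt _ hp2.2
      rcases abs_choice p.2 with h | h
      · rw [h] at hp2 h1
        exact absurd (List.mem_cons_of_mem _ hp2.2) (hA (by omega))
      · omega
    · intro p _ _ hp2
      simp only [List.mem_toFinset] at hp2
      refine imp_congr_right fun h => ?_
      rw [abs_of_pos h] at hp2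
      simp [hp2, List.mem_of_mem_erase hp2]

theorem card_matchings_step {O : List ℤ} {C : ℤ → ℕ} {m : ℕ} (hC : Bounds l O C)
    (hO : O.Pairwise (· < ·)) (hm : ∀ t ∈ O, 2 * (m : ℤ) < t) (hCl : ∀ a ≤ 2 * (m : ℤ), C a = l) :
    ((matchings (O.toFinset ∪ odds m) (fun p => 0 < p.2 → p.2 ∉ O) C).card : ℤ) =
      walkSum (O.map C) (step^[m] (evenFrom 0 : Pt l → ℤ)) := by
  classical
  induction m generalizing O C with
  | zero => simpa [odds] using card_matchings_evenFrom hC hO (by simpa using hm)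
  | succ m ih =>
    push_cast at hm hCl
    obtain ⟨b, hb⟩ : ∃ b : ℤ, b = 2 * m + 1 := ⟨_, rfl⟩
    have hCb : C b = l := hCl b (by omega)
    have hb0 : 0 < b := by omega
    have habs : |b| = b := abs_of_pos hb0
    have hbO : ∀ t ∈ O, b < t := fun t ht => by have := hm t ht; omega
    have hodd : ∀ t ∈ odds m, 0 < t ∧ t < b := fun t ht => by
      have := bounds_of_mem_odds ht; omega
    have hne : O.Nodup := hO.imp fun h => h.ne
    have herase : ∀ a s, s ∈ O.erase a ↔ s ≠ a ∧ s ∈ O := fun a s => hne.mem_erase_iff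
    rw [Function.iterate_succ_apply', walkSum_step (hC.pairwise hO) hC.map_le, sum_dels hO,
      odds_succ, ← hb]
    rw [← Finset.card_filter_add_card_filter_not (fun P => ∃ a ∈ O.toFinset, (a, b) ∈ P), add_comm,
      Nat.cast_add]
    congr 1
    · have h1 : Bounds l (b :: O) C := by
        refine ⟨hC.1, fun a ha c hc hac => ?_⟩
        rcases List.mem_cons.1 ha with ha' | ha' <;> rcases List.mem_cons.1 hc with hc' | hc'
        · omega
        · rw [ha', hCb]; exact hC.1 c
        · have := hbO a ha'; omega
        · exact hC.2 a ha' c hc' hac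
      have h2 := ih h1 (List.pairwise_cons.2 ⟨hbO, hO⟩) (by
        intro t ht
        rcases List.mem_cons.1 ht with rfl | ht
        · omega
        · have := hm t ht; omega) (fun a ha => hCl a (by omega))
      rw [List.map_cons, hCb] at h2
      rw [← h2]
      congr 2
      ext P
      have hT : O.toFinset ∪ insert b (odds m) = (b :: O).toFinset ∪ odds m := by
        ext s
        simp
      rw [Finset.mem_filter, mem_matchings, mem_matchings, hT]
      constructor
      · rintro ⟨H, h3⟩
        refine ⟨fun p hp h4 h5 => ?_, H.abs_lt, H.mem, H.unique, H.good⟩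
        rcases List.mem_cons.1 h5 with h6 | h6
        · refine h3 ⟨p.1, ?_, h6 ▸ hp⟩
          have h7 := (H.mem p hp).1
          have h8 := H.abs_lt p hp
          rw [h6, habs] at h8
          simp only [Finset.mem_union, List.mem_toFinset, List.mem_cons] at h7
          rcases h7 with (h | h) | h
          · omega
          · simpa using h
          · have := hodd _ h; omega
        · exact H.allowed p hp h4 h6
      · intro H
        refine ⟨⟨fun p hp h4 h5 => H.allowed p hp h4 (List.mem_cons_of_mem _ h5),
          H.abs_lt, H.mem, H.unique, H.good⟩, ?_⟩
        rintro ⟨a, _, hab⟩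
        exact H.allowed _ hab hb0 (List.mem_cons_self ..)
    · rw [card_matchings_filter_exists _ (by simp [habs]), Nat.cast_sum]
      refine Finset.sum_congr rfl fun a ha => ?_
      rw [List.mem_toFinset] at ha
      have hba := hbO a ha
      rw [card_matchings_filter (T' := (O.erase a).toFinset ∪ odds m)
        (A' := fun p => 0 < p.2 → p.2 ∉ O.erase a)]
      · split_ifs with h1
        · refine ih (hC.cut a) (hO.erase a) (fun t ht => ?_) fun t ht => ?_
          · have := hm t (List.mem_of_mem_erase ht); omega
          · rw [cut, if_neg (by omega)]
            exact hCl t (by omega)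
        · simp
      · intro _ h
        exact lt_irrefl _ (hbO b h)
      · rwa [habs]
      · simp [ha]
      · simp [habs]
      · ext s
        simp only [habs, Finset.mem_erase, Finset.mem_union, Finset.mem_insert, List.mem_toFinset,
          herase]
        have h1 := hbO s
        have h2 := hodd s
        constructor
        · tauto
        · rintro (h | h)
          · exact ⟨(h1 h.2).ne', h.1, Or.inl h.2⟩
          · have := h2 h
            exact ⟨by omega, by omega, Or.inr (Or.inr h)⟩
      · intro p _ hp2 hA
        simp only [Finset.mem_union, List.mem_toFinset, herase] at hp2
        by_contra! h
        have h0 : 0 < p.2 := by omega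
        rw [abs_of_pos h0] at hp2
        rcases hp2 with h1 | h1
        · exact hA h0 h1.2
        · have := hodd _ h1; omega
      · intro p _ _ hp2
        refine imp_congr_right fun h => not_congr ?_
        simp only [Finset.mem_union, List.mem_toFinset, herase, abs_of_pos h] at hp2 ⊢
        constructor
        · intro h1
          refine ⟨?_, h1⟩
          rintro h2
          rcases hp2 with h3 | h3
          · exact h3.1 h2
          · have := hodd _ h3; omega
        · exact fun h => h.2

theorem lisLE_iff_labels {N : ℕ} {π : Equiv.Perm (Fin N)} {l : ℕ} :
    lisLE π l ↔ ∃ h : Fin N → ℕ, (∀ i, 1 ≤ h i ∧ h i ≤ l) ∧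
      ∀ i j, i < j → π i < π j → h i < h j := by
  classical
  constructor
  · intro H
    let Q : Fin N → ℕ → Prop := fun i k => ∃ f : Fin (k + 1) → Fin N,
      StrictMono f ∧ StrictMono (fun a => π (f a)) ∧ f (Fin.last k) = i
    have hQ0 : ∀ i, Q i 0 := fun i =>
      ⟨fun _ => i, Subsingleton.strictMono (α := Fin 1) _, Subsingleton.strictMono (α := Fin 1) _, rfl⟩
    have hspec : ∀ i, Q i (Nat.findGreatest (Q i) N) := fun i =>
      Nat.findGreatest_spec (Nat.zero_le _) (hQ0 i)
    refine ⟨fun i => Nat.findGreatest (Q i) N + 1, fun i => ⟨Nat.le_add_left _ _, ?_⟩, fun i j hij hπ => ?_⟩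
    · obtain ⟨f, hf, hf', _⟩ := hspec i
      exact H _ f hf hf'
    · have hs := hspec i
      dsimp only
      generalize Nat.findGreatest (Q i) N = k at hs ⊢
      obtain ⟨f, hf, hf', hl⟩ := hs
      have hmono : ∀ g : Fin N → Fin N, StrictMono (fun a => g (f a)) → g i < g j →
          StrictMono fun a => g (Fin.snoc (α := fun _ => Fin N) f j a) := by
        intro g hg hgij a b hab
        induction b using Fin.lastCases with
        | last =>
          induction a using Fin.lastCases with
          | last => exact absurd hab (lt_irrefl _)
          | cast a =>
            simp only [Fin.snoc_last, Fin.snoc_castSucc]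
            refine lt_of_le_of_lt (hg.monotone (Fin.le_last a)) ?_
            simpa [hl] using hgij
        | cast b =>
          induction a using Fin.lastCases with
          | last => exact absurd (hab.trans (Fin.castSucc_lt_last b)) (lt_irrefl _)
          | cast a =>
            simp only [Fin.snoc_castSucc]
            exact hg (by simpa using hab)
      have h1 := hmono id hf hij
      have h2 : k + 1 < N := by
        simpa using Fintype.card_le_of_injective _ h1.injective
      have : k + 1 ≤ Nat.findGreatest (Q j) N :=
        Nat.le_findGreatest (by omega) ⟨_, h1, hmono π hf' hπ, by simp⟩
      simpa using this
  · rintro ⟨h, hb, hi⟩ k f hf hf'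
    have h1 : StrictMono fun a => h (f a) := fun a b hab => hi _ _ (hf hab) (hf' hab)
    have h2 : (Finset.univ.image fun a => h (f a)) ⊆ Finset.Icc 1 l := by
      intro a ha
      obtain ⟨b, _, rfl⟩ := Finset.mem_image.1 ha
      exact Finset.mem_Icc.2 (hb _)
    simpa [Finset.card_image_of_injective _ h1.injective] using Finset.card_le_card h2

/-- The centred coordinates on `Fin (4 * n)`, turning `Fin.rev` into negation. -/
def coord (n : ℕ) (x : Fin (4 * n)) : ℤ := 2 * (x : ℤ) + 1 - 4 * n

theorem coord_strictMono (n : ℕ) : StrictMono (coord n) := fun x y h => by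
  have : (x : ℕ) < y := h
  unfold coord
  omega

theorem coord_rev {n : ℕ} (x : Fin (4 * n)) : coord n x.rev = -coord n x := by
  have := x.2
  unfold coord
  rw [Fin.val_rev]
  omega

theorem abs_coord_mem {n : ℕ} (x : Fin (4 * n)) : |coord n x| ∈ odds (2 * n) := by
  have := x.2
  rw [mem_odds]
  unfold coord
  rcases abs_cases (2 * (x : ℤ) + 1 - 4 * n) with h | h
  · exact ⟨x - 2 * n, by omega, by omega⟩
  · exact ⟨2 * n - 1 - x, by omega, by omega⟩

theorem exists_coord {n : ℕ} {u : ℤ} (hu : |u| ∈ odds (2 * n)) : ∃ x, coord n x = u := by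
  obtain ⟨i, hi, h⟩ := mem_odds.1 hu
  unfold coord
  rcases abs_cases u with h' | h'
  · exact ⟨⟨2 * n + i, by omega⟩, by push_cast; omega⟩
  · exact ⟨⟨2 * n - 1 - i, by omega⟩, by
      have : ((2 * n - 1 - i : ℕ) : ℤ) = 2 * n - 1 - i := by omega
      simp only [this]; omega⟩

/-- The symmetry conditions on the permutation `π`. -/
structure Symm {n : ℕ} (π : Equiv.Perm (Fin (4 * n))) : Prop where
  invol : ∀ x, π (π x) = x
  map_rev : ∀ x, π x.rev = (π x).rev
  ne : ∀ x, π x ≠ x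
  ne_rev : ∀ x, π x ≠ x.rev

theorem symm_iff {n : ℕ} {π : Equiv.Perm (Fin (4 * n))} :
    Symm π ↔ π = π⁻¹ ∧ π = Fin.revPerm * π⁻¹ * Fin.revPerm ∧
      (∀ x, π x ≠ x) ∧ ∀ x, π x ≠ Fin.revPerm x := by
  constructor
  · intro H
    have h1 : π = π⁻¹ := by
      rw [eq_inv_iff_mul_eq_one]
      ext x
      simp [H.invol]
    refine ⟨h1, ?_, H.ne, H.ne_rev⟩
    rw [← h1]
    ext x
    simp [H.map_rev]
  · rintro ⟨h1, h2, h3, h4⟩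
    refine ⟨fun x => ?_, fun x => ?_, h3, h4⟩
    · have := congrArg (fun σ : Equiv.Perm _ => σ * π) h1
      simpa using congrArg (fun σ : Equiv.Perm _ => σ x) this
    · rw [← h1] at h2
      have := congrArg (fun σ : Equiv.Perm _ => σ x.rev) h2
      simpa using this

/-- The representatives `(-u, v)` of the points `(u, v)` of the graph of `π` with `|v| < -u`. -/
def points {n : ℕ} (π : Equiv.Perm (Fin (4 * n))) : Finset (ℤ × ℤ) :=
  (Finset.univ.filter fun x => |coord n (π x)| < -coord n x).image
    fun x => (-coord n x, coord n (π x))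

theorem mem_points {n : ℕ} {π : Equiv.Perm (Fin (4 * n))} {t y : ℤ} :
    (t, y) ∈ points π ↔ |y| < t ∧ ∃ x, coord n x = -t ∧ coord n (π x) = y := by
  simp only [points, Finset.mem_image, Finset.mem_filter, Finset.mem_univ, true_and, Prod.mk.injEq]
  constructor
  · rintro ⟨x, h1, h2, h3⟩
    exact ⟨by rwa [← h2, ← h3], x, by omega, h3⟩
  · rintro ⟨h1, x, h2, h3⟩
    exact ⟨x, by rwa [h2, h3, neg_neg], by omega, h3⟩

/-- The point `(u, v)` belongs to the orbit of a point represented in `P`. -/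
def Orb (P : Finset (ℤ × ℤ)) (u v : ℤ) : Prop :=
  (-u, v) ∈ P ∨ (-v, u) ∈ P ∨ (u, -v) ∈ P ∨ (v, -u) ∈ P

theorem Orb.swap {P : Finset (ℤ × ℤ)} {u v : ℤ} (h : Orb P u v) : Orb P v u := by
  unfold Orb at *
  tauto

theorem Orb.neg {P : Finset (ℤ × ℤ)} {u v : ℤ} (h : Orb P u v) : Orb P (-u) (-v) := by
  unfold Orb at *
  simp only [neg_neg]
  tauto

theorem Symm.orb_points {n : ℕ} {π : Equiv.Perm (Fin (4 * n))} (H : Symm π) {u v : ℤ} :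
    Orb (points π) u v ↔ ∃ x, coord n x = u ∧ coord n (π x) = v := by
  have hs : ∀ u v, (∃ x, coord n x = u ∧ coord n (π x) = v) →
      ∃ x, coord n x = v ∧ coord n (π x) = u := by
    rintro u v ⟨x, h1, h2⟩
    exact ⟨π x, h2, by rw [H.invol, h1]⟩
  have hn : ∀ u v, (∃ x, coord n x = u ∧ coord n (π x) = v) →
      ∃ x, coord n x = -u ∧ coord n (π x) = -v := by
    rintro u v ⟨x, h1, h2⟩
    exact ⟨x.rev, by rw [coord_rev, h1], by rw [H.map_rev, coord_rev, h2]⟩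
  unfold Orb
  simp only [mem_points, neg_neg]
  constructor
  · rintro (h | h | h | h)
    · exact h.2
    · exact hs _ _ h.2
    · simpa using hn _ _ h.2
    · simpa using hn _ _ (hs _ _ h.2)
  · intro h
    have h2 := hs _ _ h
    have h3 := hn _ _ h
    have h4 := hn _ _ h2
    have hne : u ≠ v ∧ u ≠ -v := by
      obtain ⟨x, rfl, rfl⟩ := h
      refine ⟨fun h => H.ne x ((coord_strictMono n).injective h.symm), fun h => H.ne_rev x ?_⟩
      refine (coord_strictMono n).injective ?_
      rw [coord_rev]
      omega
    simp only [abs_lt, h, h2, h3, h4, and_true]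
    omega

theorem Symm.isMatch_points {n : ℕ} {π : Equiv.Perm (Fin (4 * n))} (H : Symm π) {A : ℤ × ℤ → Prop}
    (hA : ∀ p, A p) {C : ℤ → ℕ} (hg : Good C (points π)) :
    IsMatch (odds (2 * n)) A C (points π) := by
  refine ⟨fun p _ => hA p, fun p hp => (mem_points.1 hp).1, fun p hp => ?_, fun t ht => ?_, hg⟩
  · obtain ⟨h0, x, h1, h2⟩ := mem_points.1 hp
    have h3 := abs_coord_mem x
    rw [h1, abs_neg, abs_of_pos (lt_of_le_of_lt (abs_nonneg _) h0)] at h3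
    exact ⟨h3, h2 ▸ abs_coord_mem (π x)⟩
  · have ht0 := (bounds_of_mem_odds ht).1
    obtain ⟨x, hx⟩ := exists_coord (n := n) (u := -t) (by rwa [abs_neg, abs_of_pos ht0])
    have hex := H.orb_points.2 ⟨x, hx, rfl⟩
    have huniq : ∀ v, Orb (points π) (-t) v → v = coord n (π x) := by
      intro v hv
      obtain ⟨x', h1, h2⟩ := H.orb_points.1 hv
      rw [← h2, (coord_strictMono n).injective (h1.trans hx.symm)]
    have key : ∀ p ∈ points π, (p.1 = t ∨ |p.2| = t) →
        (p.1 = t ∧ p.2 = coord n (π x)) ∨ (p.2 = -t ∧ -p.1 = coord n (π x)) ∨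
          (p.2 = t ∧ p.1 = coord n (π x)) := by
      rintro ⟨a, b⟩ hp (rfl | h)
      · exact Or.inl ⟨rfl, huniq _ (Or.inl (by simpa using hp))⟩
      · rcases eq_or_eq_neg_of_abs_eq h with rfl | rfl
        · exact Or.inr (Or.inr ⟨rfl, huniq _ (Or.inr (Or.inr (Or.inr (by simpa using hp))))⟩)
        · exact Or.inr (Or.inl ⟨rfl, huniq _ (Or.inr (Or.inl (by simpa using hp)))⟩)
    refine existsUnique_of_exists_of_unique ?_ ?_
    · rcases hex with h | h | h | h
      · exact ⟨_, h, by simp⟩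
      · exact ⟨_, h, by simp [abs_of_pos ht0]⟩
      · have := (mem_points.1 h).1
        have := abs_nonneg (-coord n (π x))
        omega
      · exact ⟨_, h, by simp [abs_of_pos ht0]⟩
    · rintro p q ⟨hp, hpt⟩ ⟨hq, hqt⟩
      have hp1 := (mem_points.1 hp).1
      have hq1 := (mem_points.1 hq).1
      rw [abs_lt] at hp1 hq1
      have h1 := key p hp hpt
      have h2 := key q hq hqt
      ext <;> omega

theorem orb_functional {n : ℕ} {A : ℤ × ℤ → Prop} {C : ℤ → ℕ} {P : Finset (ℤ × ℤ)}
    (H : IsMatch (odds (2 * n)) A C P) {u : ℤ} (hu : |u| ∈ odds (2 * n)) : ∃! v, Orb P u v := by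
  have hu0 := (bounds_of_mem_odds hu).1
  obtain ⟨p, ⟨hp, hpu⟩, huniq⟩ := H.unique _ hu
  refine existsUnique_of_exists_of_unique ?_ ?_
  · rcases hpu with h | h
    · rcases abs_choice u with h' | h'
      · exact ⟨-p.2, Or.inr (Or.inr (Or.inl (by rw [← h', ← h, neg_neg]; exact hp)))⟩
      · exact ⟨p.2, Or.inl (by rw [← h', ← h]; exact hp)⟩
    · rcases abs_eq_abs.1 h with h' | h'
      · exact ⟨-p.1, Or.inr (Or.inl (by rw [neg_neg, ← h']; exact hp))⟩
      · exact ⟨p.1, Or.inr (Or.inr (Or.inr (by rw [← h']; exact hp)))⟩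
  · have key : ∀ v, Orb P u v → (p.1 = -u ∧ p.2 = v) ∨ (p.1 = -v ∧ p.2 = u) ∨
        (p.1 = u ∧ p.2 = -v) ∨ (p.1 = v ∧ p.2 = -u) := by
      rintro v (h | h | h | h)
      · have h1 := H.abs_lt _ h
        dsimp only at h1
        have h2 := huniq _ ⟨h, Or.inl (abs_of_neg (by have := abs_nonneg v; omega)).symm⟩
        exact Or.inl (by simp [← h2])
      · have h2 := huniq _ ⟨h, Or.inr rfl⟩
        exact Or.inr (Or.inl (by simp [← h2]))
      · have h1 := H.abs_lt _ h
        dsimp only at h1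
        have h2 := huniq _ ⟨h, Or.inl (abs_of_pos (by have := abs_nonneg (-v); omega)).symm⟩
        exact Or.inr (Or.inr (Or.inl (by simp [← h2])))
      · have h2 := huniq _ ⟨h, Or.inr (abs_neg _)⟩
        exact Or.inr (Or.inr (Or.inr (by simp [← h2])))
    intro v w hv hw
    have h1 := key v hv
    have h2 := key w hw
    have h3 := H.abs_lt p hp
    rw [abs_lt] at h3
    rcases abs_cases u with h4 | h4 <;> omega

theorem orb_mem {n : ℕ} {A : ℤ × ℤ → Prop} {C : ℤ → ℕ} {P : Finset (ℤ × ℤ)}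
    (H : IsMatch (odds (2 * n)) A C P) {u v : ℤ} (h : Orb P u v) :
    |v| ∈ odds (2 * n) ∧ |u| ≠ |v| := by
  rcases h with h | h | h | h <;>
  · have h1 := H.abs_lt _ h
    have h2 := H.mem _ h
    dsimp only at h1 h2
    try simp only [abs_neg] at h1 h2
    refine ⟨?_, ?_⟩
    · first
        | exact h2.2
        | rcases abs_cases v with h3 | h3
          · rw [h3.1]
            first
              | exact h2.1
              | exact absurd h1 (by have := abs_nonneg u; omega)
          · rw [h3.1]
            first
              | exact h2.1
              | exact absurd h1 (by have := abs_nonneg u; omega)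
    · rcases abs_cases v with h3 | h3 <;> rcases abs_cases u with h4 | h4 <;> omega

theorem exists_symm {n : ℕ} {A : ℤ × ℤ → Prop} {C : ℤ → ℕ} {P : Finset (ℤ × ℤ)}
    (H : IsMatch (odds (2 * n)) A C P) :
    ∃ π : Equiv.Perm (Fin (4 * n)), Symm π ∧ points π = P := by
  have h1 : ∀ x : Fin (4 * n), ∃ y : Fin (4 * n), Orb P (coord n x) (coord n y) := by
    intro x
    obtain ⟨v, hv⟩ := (orb_functional H (abs_coord_mem x)).exists
    obtain ⟨y, rfl⟩ := exists_coord (orb_mem H hv).1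
    exact ⟨y, hv⟩
  choose f hf using h1
  have huniq : ∀ x y, Orb P (coord n x) (coord n y) → f x = y := fun x y h =>
    (coord_strictMono n).injective ((orb_functional H (abs_coord_mem x)).unique (hf x) h)
  have hinv : Function.Involutive f := fun x => huniq _ _ (hf x).swap
  refine ⟨hinv.toPerm f, ⟨hinv, fun x => ?_, fun x => ?_, fun x => ?_⟩, ?_⟩
  · refine huniq _ _ ?_
    rw [coord_rev, coord_rev]
    exact (hf x).neg
  · intro h
    refine (orb_mem H (hf x)).2 ?_
    rw [show f x = x from h]
  · intro h
    refine (orb_mem H (hf x)).2 ?_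
    rw [show f x = x.rev from h, coord_rev, abs_neg]
  · ext ⟨t, y⟩
    rw [mem_points]
    constructor
    · rintro ⟨h0, x, h1, h2⟩
      have h3 := hf x
      have h4 : coord n (f x) = y := h2
      rw [h1, h4] at h3
      rw [abs_lt] at h0
      rcases h3 with h | h | h | h
      · simpa using h
      all_goals
        have h5 := H.abs_lt _ h
        dsimp only at h5
        rw [abs_lt] at h5
        omega
    · intro h
      have h0 := H.abs_lt _ h
      have h1 := (H.mem _ h).1
      dsimp only at h0 h1
      have ht := (bounds_of_mem_odds h1).1
      obtain ⟨x, hx⟩ := exists_coord (n := n) (u := -t) (by rwa [abs_neg, abs_of_pos ht])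
      refine ⟨h0, x, hx, ?_⟩
      refine (orb_functional H (abs_coord_mem x)).unique (hf x) (Or.inl ?_)
      rwa [hx, neg_neg]

theorem Symm.good_iff {n : ℕ} {π : Equiv.Perm (Fin (4 * n))} (H : Symm π) :
    Good (fun _ => l) (points π) ↔ lisLE π (2 * l) := by
  have hsm := coord_strictMono n
  rw [lisLE_iff_labels]
  constructor
  · rintro ⟨h, hb, hi⟩
    replace hb : ∀ p ∈ points π, 1 ≤ h p ∧ h p ≤ l := hb
    have hrep : ∀ x, let u := coord n x; let v := coord n (π x)
        (u + v < 0 ∧ (-min u v, max u v) ∈ points π) ∨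
          (0 < u + v ∧ (max u v, -min u v) ∈ points π) := by
      intro x u v
      have h1 : Orb (points π) u v := H.orb_points.2 ⟨x, rfl, rfl⟩
      rcases h1 with h | h | h | h <;>
      · have h2 := (mem_points.1 h).1
        rw [abs_lt] at h2
        rcases le_total u v with h3 | h3 <;> simp only [h3, min_eq_left, min_eq_right, max_eq_left, max_eq_right] <;> first
          | exact Or.inl ⟨by omega, h⟩
          | exact Or.inr ⟨by omega, h⟩
          | omega
    refine ⟨fun x => if coord n x + coord n (π x) < 0
      then h (-min (coord n x) (coord n (π x)), max (coord n x) (coord n (π x)))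
      else 2 * l + 1 - h (max (coord n x) (coord n (π x)), -min (coord n x) (coord n (π x))),
      fun x => ?_, fun x y hxy hπ => ?_⟩
    · dsimp only
      rcases hrep x with ⟨h1, h2⟩ | ⟨h1, h2⟩
      · rw [if_pos h1]
        have := hb _ h2
        omega
      · rw [if_neg (by omega)]
        have := hb _ h2
        omega
    · have hu := hsm hxy
      have hv := hsm hπ
      have hmin := min_lt_min hu hv
      have hmax := max_lt_max hu hv
      dsimp only
      rcases hrep x with ⟨h1, h2⟩ | ⟨h1, h2⟩ <;> rcases hrep y with ⟨h3, h4⟩ | ⟨h3, h4⟩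
      · rw [if_pos h1, if_pos h3]
        exact hi _ h2 _ h4 (neg_lt_neg hmin) hmax
      · rw [if_pos h1, if_neg (by omega)]
        have := hb _ h2
        have := hb _ h4
        omega
      · omega
      · rw [if_neg (by omega), if_neg (by omega)]
        have h5 := hi _ h4 _ h2 hmax (neg_lt_neg hmin)
        have := hb _ h2
        have := hb _ h4
        omega
  · rintro ⟨h, hb, hi⟩
    have hex : ∀ x, Function.extend (coord n) h 0 (coord n x) = h x := fun x =>
      hsm.injective.extend_apply _ _ _
    have hrep : ∀ p ∈ points π, ∃ x y, coord n x = -p.1 ∧ coord n (π x) = p.2 ∧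
        coord n y = -p.2 ∧ coord n (π y) = p.1 ∧ h x < h y := by
      intro p hp
      obtain ⟨h0, x, h1, h2⟩ := mem_points.1 hp
      rw [abs_lt] at h0
      have h3 : coord n (π x).rev = -p.2 := by rw [coord_rev, h2]
      have h4 : coord n (π (π x).rev) = p.1 := by rw [H.map_rev, H.invol, coord_rev, h1, neg_neg]
      refine ⟨x, (π x).rev, h1, h2, h3, h4, hi _ _ (hsm.lt_iff_lt.1 ?_) (hsm.lt_iff_lt.1 ?_)⟩ <;>
        omega
    refine ⟨fun p => min (Function.extend (coord n) h 0 (-p.1))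
      (2 * l + 1 - Function.extend (coord n) h 0 (-p.2)), fun p hp => ?_,
      fun p hp q hq hpq hpq' => ?_⟩
    · obtain ⟨x, y, h1, -, h3, -, h5⟩ := hrep p hp
      dsimp only
      rw [← h1, ← h3, hex, hex]
      have := hb x
      have := hb y
      omega
    · obtain ⟨x, y, h1, h2, h3, h4, -⟩ := hrep p hp
      obtain ⟨x', y', h1', h2', h3', h4', -⟩ := hrep q hq
      dsimp only
      rw [← h1, ← h3, ← h1', ← h3', hex, hex, hex, hex]
      have h5 : h x < h x' := hi _ _ (hsm.lt_iff_lt.1 (by omega)) (hsm.lt_iff_lt.1 (by omega))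
      have h6 : h y' < h y := hi _ _ (hsm.lt_iff_lt.1 (by omega)) (hsm.lt_iff_lt.1 (by omega))
      have := hb x'
      have := hb y
      omega

theorem fuCount_eq_card (n l : ℕ) {A : ℤ × ℤ → Prop} (hA : ∀ p, A p) :
    fuCount n (2 * l) = (matchings (odds (2 * n)) A fun _ => l).card := by
  rw [fuCount, ← Nat.card_eq_finsetCard]
  refine Nat.card_congr (Equiv.ofBijective
    (fun π => ⟨points π.1, mem_matchings.2 ?_⟩) ⟨?_, fun P => ?_⟩)
  · obtain ⟨π, h1, h2, h3, h4, h5⟩ := π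
    have H := symm_iff.2 ⟨h1, h2, h3, h4⟩
    exact H.isMatch_points hA (H.good_iff.2 h5)
  · rintro ⟨π, h1, h2, h3, h4, _⟩ ⟨σ, k1, k2, k3, k4, _⟩ h
    have H := symm_iff.2 ⟨h1, h2, h3, h4⟩
    have K := symm_iff.2 ⟨k1, k2, k3, k4⟩
    have hP : points π = points σ := congrArg Subtype.val h
    refine Subtype.ext (Equiv.ext fun x => ?_)
    obtain ⟨y, hy, hy'⟩ := K.orb_points.1 (hP ▸ H.orb_points.2 ⟨x, rfl, rfl⟩)
    rw [(coord_strictMono n).injective hy] at hy'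
    exact ((coord_strictMono n).injective hy').symm
  · obtain ⟨P, hP⟩ := P
    have hP' := mem_matchings.1 hP
    obtain ⟨π, H, rfl⟩ := exists_symm hP'
    obtain ⟨h1, h2, h3, h4⟩ := symm_iff.1 H
    exact ⟨⟨π, h1, h2, h3, h4, H.good_iff.1 hP'.good⟩, rfl⟩

/-- The point of index `i` in the graph of `π`, moved below the axis and mirrored. -/
def graphPoint {n : ℕ} (π : Equiv.Perm (Fin n)) (i : Fin n) : ℤ × ℤ :=
  (2 * n - (i : ℤ), ((π i : Fin n) : ℤ) - n)

theorem graphPoint_injective {n : ℕ} (π : Equiv.Perm (Fin n)) :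
    Function.Injective (graphPoint π) := by
  intro i j h
  have := congrArg Prod.fst h
  simp only [graphPoint] at this
  exact Fin.ext (by omega)

theorem good_graphPoint_iff {n : ℕ} {π : Equiv.Perm (Fin n)} :
    Good (fun _ => l) (Finset.univ.image (graphPoint π)) ↔ lisLE π l := by
  rw [lisLE_iff_labels]
  constructor
  · rintro ⟨h, hb, hi⟩
    have hm : ∀ i, graphPoint π i ∈ Finset.univ.image (graphPoint π) := fun i => by simp
    refine ⟨fun i => h (graphPoint π i), fun i => hb _ (hm i), fun i j hij hπ =>
      hi _ (hm i) _ (hm j) ?_ ?_⟩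
    · have : (i : ℕ) < j := hij
      simp only [graphPoint]
      omega
    · have : (π i : ℕ) < π j := hπ
      simp only [graphPoint]
      omega
  · rintro ⟨h, hb, hi⟩
    refine ⟨Function.extend (graphPoint π) h 0, fun p hp => ?_, fun p hp q hq h1 h2 => ?_⟩
    · obtain ⟨i, -, rfl⟩ := Finset.mem_image.1 hp
      rw [(graphPoint_injective π).extend_apply]
      exact hb i
    · obtain ⟨i, -, rfl⟩ := Finset.mem_image.1 hp
      obtain ⟨j, -, rfl⟩ := Finset.mem_image.1 hq
      rw [(graphPoint_injective π).extend_apply, (graphPoint_injective π).extend_apply]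
      simp only [graphPoint] at h1 h2
      refine hi i j ?_ ?_ <;>
      · rw [Fin.lt_def]
        omega

theorem isMatch_graphPoint {n : ℕ} (π : Equiv.Perm (Fin n)) {T : Finset ℤ} {A : ℤ × ℤ → Prop}
    (hT : ∀ t, t ∈ T ↔ 0 < t ∧ t ≤ 2 * n)
    (hA : ∀ p, A p ↔ (n < p.1 ∧ p.1 ≤ 2 * n) ∧ 0 < -p.2 ∧ -p.2 ≤ n) {C : ℤ → ℕ}
    (hg : Good C (Finset.univ.image (graphPoint π))) :
    IsMatch T A C (Finset.univ.image (graphPoint π)) := by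
  have habs : ∀ i, |(graphPoint π i).2| = n - ((π i : Fin n) : ℤ) := fun i => by
    have := (π i).2
    simp only [graphPoint]
    rw [abs_of_neg (by omega)]
    omega
  have hfst : ∀ i, (graphPoint π i).1 = 2 * n - (i : ℤ) := fun i => rfl
  refine ⟨fun p hp => ?_, fun p hp => ?_, fun p hp => ?_, fun t ht => ?_, hg⟩
  · obtain ⟨i, -, rfl⟩ := Finset.mem_image.1 hp
    rw [hA]
    have := i.2
    have := (π i).2
    simp only [graphPoint]
    omega
  · obtain ⟨i, -, rfl⟩ := Finset.mem_image.1 hp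
    have := i.2
    have := (π i).2
    rw [habs, hfst]
    omega
  · obtain ⟨i, -, rfl⟩ := Finset.mem_image.1 hp
    have := i.2
    have := (π i).2
    rw [hT, hT, habs, hfst]
    omega
  · rw [hT] at ht
    refine existsUnique_of_exists_of_unique ?_ ?_
    · by_cases h : t ≤ n
      · obtain ⟨j, hj⟩ : ∃ j : Fin n, (j : ℤ) = n - t := ⟨⟨(n - t).toNat, by omega⟩, by
          simp only; omega⟩
        refine ⟨graphPoint π (π.symm j), by simp, Or.inr ?_⟩
        rw [habs, Equiv.apply_symm_apply]
        omega
      · obtain ⟨j, hj⟩ : ∃ j : Fin n, (j : ℤ) = 2 * n - t := ⟨⟨(2 * n - t).toNat, by omega⟩, by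
          simp only; omega⟩
        refine ⟨graphPoint π j, by simp, Or.inl ?_⟩
        rw [hfst]
        omega
    · rintro p q ⟨hp, hpt⟩ ⟨hq, hqt⟩
      obtain ⟨i, -, rfl⟩ := Finset.mem_image.1 hp
      obtain ⟨j, -, rfl⟩ := Finset.mem_image.1 hq
      rw [habs, hfst] at hpt hqt
      have := i.2
      have := j.2
      have hij : i = j ∨ π i = π j := by
        rw [Fin.ext_iff, Fin.ext_iff]
        omega
      rcases hij with h | h
      · rw [h]
      · rw [π.injective h]

theorem exists_graphPoint {n : ℕ} {T : Finset ℤ} {A : ℤ × ℤ → Prop} {C : ℤ → ℕ}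
    {P : Finset (ℤ × ℤ)} (hT : ∀ t, t ∈ T ↔ 0 < t ∧ t ≤ 2 * n)
    (hA : ∀ p, A p ↔ (n < p.1 ∧ p.1 ≤ 2 * n) ∧ 0 < -p.2 ∧ -p.2 ≤ n) (H : IsMatch T A C P) :
    ∃ π : Equiv.Perm (Fin n), Finset.univ.image (graphPoint π) = P := by
  have hA' : ∀ p ∈ P, (n < p.1 ∧ p.1 ≤ 2 * n) ∧ 0 < -p.2 ∧ -p.2 ≤ n := fun p hp =>
    (hA p).1 (H.allowed p hp)
  have hex : ∀ i : Fin n, ∃ j : Fin n, (2 * n - (i : ℤ), (j : ℤ) - n) ∈ P := by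
    intro i
    have := i.2
    obtain ⟨p, ⟨hp, hpt⟩, -⟩ := H.unique (2 * n - (i : ℤ)) (by rw [hT]; omega)
    have h1 := hA' p hp
    have h2 : p.1 = 2 * n - (i : ℤ) := by
      rcases hpt with h | h
      · exact h
      · rw [abs_of_neg (by omega)] at h
        omega
    refine ⟨⟨(p.2 + n).toNat, by omega⟩, ?_⟩
    convert hp using 1
    ext
    · exact h2.symm
    · simp only
      omega
  choose f hf using hex
  have hinj : Function.Injective f := by
    intro i j hij
    have h1 := hf j
    rw [← hij] at h1
    have h2 := (H.unique _ (H.mem _ (hf i)).2).unique ⟨hf i, Or.inr rfl⟩ ⟨h1, Or.inr rfl⟩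
    have h3 := congrArg Prod.fst h2
    simp only at h3
    exact Fin.ext (by omega)
  refine ⟨Equiv.ofBijective f (Finite.injective_iff_bijective.1 hinj), ?_⟩
  ext p
  rw [Finset.mem_image]
  constructor
  · rintro ⟨i, -, rfl⟩
    exact hf i
  · intro hp
    have h1 := hA' p hp
    obtain ⟨i, hi⟩ : ∃ i : Fin n, (i : ℤ) = 2 * n - p.1 := ⟨⟨(2 * n - p.1).toNat, by omega⟩, by
      simp only; omega⟩
    exact ⟨i, Finset.mem_univ _, (H.unique _ (H.mem p hp).1).unique
      ⟨hf i, Or.inl (by simp only [graphPoint]; omega)⟩ ⟨hp, Or.inl rfl⟩⟩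

theorem permCount_eq_card (n l : ℕ) {T : Finset ℤ} {A : ℤ × ℤ → Prop}
    (hT : ∀ t, t ∈ T ↔ 0 < t ∧ t ≤ 2 * n)
    (hA : ∀ p, A p ↔ (n < p.1 ∧ p.1 ≤ 2 * n) ∧ 0 < -p.2 ∧ -p.2 ≤ n) :
    permCount n l = (matchings T A fun _ => l).card := by
  rw [permCount, ← Nat.card_eq_finsetCard]
  refine Nat.card_congr (Equiv.ofBijective
    (fun π => ⟨Finset.univ.image (graphPoint π.1), mem_matchings.2
      (isMatch_graphPoint π.1 hT hA (good_graphPoint_iff.2 π.2))⟩) ⟨?_, fun P => ?_⟩)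
  · rintro ⟨π, _⟩ ⟨σ, _⟩ h
    have hP : Finset.univ.image (graphPoint π) = Finset.univ.image (graphPoint σ) :=
      congrArg Subtype.val h
    refine Subtype.ext (Equiv.ext fun i => ?_)
    have h1 : graphPoint π i ∈ Finset.univ.image (graphPoint σ) := by
      rw [← hP]
      simp
    obtain ⟨j, -, hj⟩ := Finset.mem_image.1 h1
    simp only [graphPoint, Prod.mk.injEq] at hj
    have hij : j = i := Fin.ext (by omega)
    rw [hij] at hj
    exact Fin.ext (by dsimp only; omega)
  · obtain ⟨P, hP⟩ := P
    have hP' := mem_matchings.1 hP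
    obtain ⟨π, rfl⟩ := exists_graphPoint hT hA hP'
    exact ⟨⟨π, good_graphPoint_iff.1 hP'.good⟩, rfl⟩

theorem permCount_eq_walk (n l : ℕ) :
    (permCount n l : ℤ) = (up l)^[n] (down^[n] (delta : Pt l → ℤ)) (rho l) := by
  set O : List ℤ := (List.range n).map fun i : ℕ => (n : ℤ) + 1 + i with hO
  set R : List ℤ := (List.range n).map fun i : ℕ => (1 : ℤ) + i with hR
  have memO : ∀ t, t ∈ O ↔ n < t ∧ t ≤ 2 * n := by
    intro t
    simp only [hO, List.mem_map, List.mem_range]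
    constructor
    · rintro ⟨i, hi, rfl⟩
      omega
    · rintro ⟨h1, h2⟩
      exact ⟨(t - n - 1).toNat, by omega, by omega⟩
  have memR : ∀ t, t ∈ R ↔ 0 < t ∧ t ≤ n := by
    intro t
    simp only [hR, List.mem_map, List.mem_range]
    constructor
    · rintro ⟨i, hi, rfl⟩
      omega
    · rintro ⟨h1, h2⟩
      exact ⟨(t - 1).toNat, by omega, by omega⟩
  have hlenO : O.length = n := by simp [hO]
  have hlenR : R.length = n := by simp [hR]
  have hsort : (R ++ O).Pairwise (· < ·) := by
    refine List.pairwise_append.2 ⟨?_, ?_, fun a ha b hb => ?_⟩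
    · exact List.pairwise_map.2 (List.pairwise_lt_range.imp fun h => by omega)
    · exact List.pairwise_map.2 (List.pairwise_lt_range.imp fun h => by omega)
    · rw [memR] at ha
      rw [memO] at hb
      omega
  rw [permCount_eq_card n l (T := R.toFinset ∪ O.toFinset) (A := fun p => p.1 ∈ O ∧ -p.2 ∈ R)]
  · rw [card_matchings_bipartite (l := l) ⟨fun _ => le_rfl, fun _ _ _ _ _ => le_rfl⟩
      (hlenO.trans hlenR.symm) hsort fun t ht => ((memR t).1 ht).1, List.map_const', hlenO, hlenR,
      walkSum_replicate]
  · intro t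
    rw [Finset.mem_union, List.mem_toFinset, List.mem_toFinset, memO, memR]
    omega
  · intro p
    rw [memO, memR]

theorem fuCount_eq_walk (n l : ℕ) :
    (fuCount n (2 * l) : ℤ) = step^[2 * n] (evenFrom 0 : Pt l → ℤ) (rho l) := by
  rw [fuCount_eq_card n l (A := fun p => 0 < p.2 → p.2 ∉ ([] : List ℤ)) (by simp)]
  have := card_matchings_step (l := l) (O := []) (C := fun _ => l) (m := 2 * n)
    ⟨fun _ => le_rfl, fun _ _ _ _ _ => le_rfl⟩ List.Pairwise.nil (by simp) fun _ _ => rfl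
  simpa [walkSum] using this

end WeylWalk

/-- `f^u_{n,2l} = binom(2n,n) · f_{n,l}`. -/
theorem fuCount_eq_central_binomial_mul (n l : ℕ) :
    fuCount n (2 * l) = (2 * n).choose n * permCount n l := by
  have h := WeylWalk.fuCount_eq_walk n l
  rw [WeylWalk.step_iterate_eq, ← WeylWalk.permCount_eq_walk] at h
  exact_mod_cast h
end
end

section
/- For every nonnegative integer l and every real t, Σ_{n≥0} f^O_{n,l} · t^{2n}/(2n)! = E_{U∈O(l)} exp(t·Tr(U)); that is, the exponential generating function (in the variable t, with t^{2n}/(2n)! weights) of the numbers of fixed-point-free involutions of {1,…,2n} with longest increasing subsequence of length at most l equals the Haar expectation of exp(t·Tr(U)) over the orthogonal group O(l). -/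
open MeasureTheory Matrix

noncomputable section

/-- `f^O_{n,l}`: the number of fixed-point-free involutions of `{1,…,2n}` whose
longest increasing subsequence has length at most `l`. -/
def fpfInvCount (n l : ℕ) : ℕ :=
  Nat.card {π : Equiv.Perm (Fin (2 * n)) //
    π * π = 1 ∧ (∀ x, π x ≠ x) ∧ lisLE π l}

instance (l : ℕ) : MeasurableSpace (Matrix.orthogonalGroup (Fin l) ℝ) := borel _
instance (l : ℕ) : BorelSpace (Matrix.orthogonalGroup (Fin l) ℝ) := ⟨rfl⟩

/-- A permutation is a fixed-point-free involution, i.e. a perfect matching. -/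
def IsFpfInv {α : Type*} (π : Equiv.Perm α) : Prop :=
  (∀ x, π (π x) = x) ∧ ∀ x, π x ≠ x

theorem IsFpfInv.conj {α : Type*} {π : Equiv.Perm α} (hπ : IsFpfInv π) (τ : Equiv.Perm α) :
    IsFpfInv (τ * π * τ⁻¹) := by
  refine ⟨fun x => by simp [hπ.1], fun x h => hπ.2 (τ⁻¹ x) ?_⟩
  exact Equiv.Perm.eq_inv_iff_eq.2 h

/-- The invariant tensor attached to a matching: the indicator of the multi-indices
that are constant on its blocks. -/
def pairVec {α κ : Type*} [DecidableEq (α → κ)] (π : Equiv.Perm α) : (α → κ) → ℝ :=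
  fun i => if i ∘ π = i then 1 else 0

section Labels

variable {N : ℕ}

/-- One less than the length of the longest increasing subsequence of `π` ending at `i`. -/
def lisLabel (π : Equiv.Perm (Fin N)) (i : Fin N) : ℕ := by
  classical
  exact (Finset.univ.filter fun s : Finset (Fin N) =>
    (∀ x ∈ s, x < i ∧ π x < π i) ∧ StrictMonoOn π s).sup Finset.card

theorem card_le_lisLabel {π : Equiv.Perm (Fin N)} {i : Fin N} {s : Finset (Fin N)}
    (h1 : ∀ x ∈ s, x < i ∧ π x < π i) (h2 : StrictMonoOn π s) : s.card ≤ lisLabel π i := by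
  classical
  unfold lisLabel
  exact Finset.le_sup (f := Finset.card) (by simp only [Finset.mem_filter]; exact ⟨by simp, h1, h2⟩)

theorem exists_card_eq_lisLabel (π : Equiv.Perm (Fin N)) (i : Fin N) :
    ∃ s : Finset (Fin N), (∀ x ∈ s, x < i ∧ π x < π i) ∧ StrictMonoOn π s ∧
      s.card = lisLabel π i := by
  classical
  unfold lisLabel
  obtain ⟨s, hs, h⟩ := Finset.exists_mem_eq_sup (Finset.univ.filter fun s : Finset (Fin N) =>
    (∀ x ∈ s, x < i ∧ π x < π i) ∧ StrictMonoOn π s) ⟨∅, by simp [StrictMonoOn]⟩ Finset.card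
  simp only [Finset.mem_filter] at hs
  exact ⟨s, hs.2.1, hs.2.2, by rw [h]⟩

theorem strictMonoOn_insert {π : Equiv.Perm (Fin N)} {i : Fin N} {s : Finset (Fin N)}
    (h1 : ∀ x ∈ s, x < i ∧ π x < π i) (h2 : StrictMonoOn π s) :
    StrictMonoOn π (insert i s : Finset (Fin N)) := by
  intro x hx y hy hxy
  simp only [Finset.coe_insert, Set.mem_insert_iff, Finset.mem_coe] at hx hy
  rcases hx with rfl | hx <;> rcases hy with rfl | hy
  · exact absurd hxy (lt_irrefl _)
  · exact absurd hxy (h1 y hy).1.not_gt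
  · exact (h1 x hx).2
  · exact h2 hx hy hxy

theorem card_insert_of_forall_lt {i : Fin N} {s : Finset (Fin N)} (h : ∀ x ∈ s, x < i) :
    (insert i s).card = s.card + 1 :=
  Finset.card_insert_of_notMem fun hi => lt_irrefl _ (h i hi)

theorem lisLabel_lt {π : Equiv.Perm (Fin N)} {i j : Fin N} (hij : i < j) (hπ : π i < π j) :
    lisLabel π i < lisLabel π j := by
  obtain ⟨s, h1, h2, h3⟩ := exists_card_eq_lisLabel π i
  rw [← h3, ← Nat.succ_le_iff, Nat.succ_eq_add_one,
    ← card_insert_of_forall_lt fun x hx => (h1 x hx).1]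
  refine card_le_lisLabel (fun x hx => ?_) (strictMonoOn_insert h1 h2)
  rcases Finset.mem_insert.1 hx with rfl | hx
  · exact ⟨hij, hπ⟩
  · exact ⟨(h1 x hx).1.trans hij, (h1 x hx).2.trans hπ⟩

theorem lisLabel_apply {π : Equiv.Perm (Fin N)} (hπ : IsFpfInv π) (i : Fin N) :
    lisLabel π (π i) = lisLabel π i := by
  have key : ∀ i, lisLabel π i ≤ lisLabel π (π i) := by
    intro i
    obtain ⟨s, h1, h2, h3⟩ := exists_card_eq_lisLabel π i
    rw [← h3, ← Finset.card_map π.toEmbedding]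
    refine card_le_lisLabel (fun x hx => ?_) fun x hx y hy hxy => ?_
    · obtain ⟨y, hy, rfl⟩ := Finset.mem_map.1 hx
      simpa [hπ.1] using (h1 y hy).symm
    · obtain ⟨x, hx', rfl⟩ := Finset.mem_map.1 hx
      obtain ⟨y, hy', rfl⟩ := Finset.mem_map.1 hy
      simpa [hπ.1] using (h2.lt_iff_lt hx' hy').1 hxy
  exact le_antisymm (by simpa [hπ.1] using key (π i)) (key i)

theorem lisLabel_lt_of_lisLE {π : Equiv.Perm (Fin N)} {l : ℕ} (h : lisLE π l) (i : Fin N) :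
    lisLabel π i < l := by
  obtain ⟨s, h1, h2, h3⟩ := exists_card_eq_lisLabel π i
  have hc := card_insert_of_forall_lt fun x hx => (h1 x hx).1
  rw [h3] at hc
  refine h _ ((insert i s).orderEmbOfFin hc) (OrderEmbedding.strictMono _) fun a b hab => ?_
  exact strictMonoOn_insert h1 h2 (Finset.orderEmbOfFin_mem _ hc a)
    (Finset.orderEmbOfFin_mem _ hc b) (OrderEmbedding.strictMono _ hab)

/-- `π` is the lexicographically largest permutation preserving its labels. -/
theorem toLex_le_of_lisLabel_comp {π π' : Equiv.Perm (Fin N)} (hπ : IsFpfInv π)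
    (h : ∀ i, lisLabel π (π' i) = lisLabel π i) :
    toLex (π' : Fin N → Fin N) ≤ toLex (π : Fin N → Fin N) := by
  by_contra hlt
  obtain ⟨p, hp, hlt⟩ := not_le.1 hlt
  simp only [Pi.toLex_apply] at hp hlt
  set y := π' p
  have hq : lisLabel π (π y) = lisLabel π p := by rw [lisLabel_apply hπ, h]
  rcases lt_trichotomy (π y) p with hlt' | heq | hgt
  · have h1 := hp _ hlt'
    rw [hπ.1] at h1
    exact hlt'.ne (π'.injective h1.symm)
  · rw [← heq, hπ.1] at hlt
    exact lt_irrefl _ hlt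
  · have := lisLabel_lt hgt (by rwa [hπ.1])
    omega

end Labels

section Straightening

variable {N l : ℕ}

theorem linearIndependent_pairVec :
    LinearIndependent ℝ (fun π : {π : Equiv.Perm (Fin N) // IsFpfInv π ∧ lisLE π l} =>
      (pairVec π.1 : (Fin N → Fin l) → ℝ)) := by
  classical
  rw [Fintype.linearIndependent_iff]
  intro c hc
  by_contra! hne
  obtain ⟨π₀, hπ₀⟩ := hne
  obtain ⟨π, hπ, hmin⟩ := Finset.exists_min_image (Finset.univ.filter fun π => c π ≠ 0)
    (fun π => toLex (π.1 : Fin N → Fin N)) ⟨π₀, by simpa using hπ₀⟩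
  let w : Fin N → Fin l := fun i => ⟨lisLabel π.1 i, lisLabel_lt_of_lisLE π.2.2 i⟩
  have hw : ∀ π' : Equiv.Perm (Fin N), w ∘ π' = w ↔ ∀ i, lisLabel π.1 (π' i) = lisLabel π.1 i := by
    intro π'
    simp [funext_iff, w]
  have := congrFun hc w
  rw [Finset.sum_apply, Finset.sum_eq_single π] at this
  · simp only [Finset.mem_filter, Finset.mem_univ, true_and] at hπ
    have h1 := (hw π.1).2 (lisLabel_apply π.2.1)
    simp [pairVec, h1, hπ] at this
  · intro π' _ hne
    by_contra h0
    simp only [Pi.smul_apply, smul_eq_mul, mul_eq_zero, not_or, pairVec, ite_eq_right_iff,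
      one_ne_zero, imp_false, not_not] at h0
    have h1 := toLex_le_of_lisLabel_comp π.2.1 ((hw π'.1).1 h0.2)
    have h2 := hmin π' (by simpa using h0.1)
    exact hne (Subtype.ext (DFunLike.coe_injective (toLex.injective (le_antisymm h1 h2))))
  · simp

theorem pairVec_conj (π τ : Equiv.Perm (Fin N)) (i : Fin N → Fin l) :
    pairVec (τ * π * τ⁻¹) i = pairVec π (i ∘ τ) := by
  unfold pairVec
  congr 1
  rw [eq_iff_iff, funext_iff, funext_iff, ← τ.forall_congr_right]
  simp

/-- The antisymmetrization over `l + 1` legs of a tensor in dimension `l` vanishes. -/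
theorem sum_sign_viaEmbedding_eq_zero (e : Fin (l + 1) ↪ Fin N) (i : Fin N → Fin l)
    (v : (Fin N → Fin l) → ℝ) :
    ∑ σ : Equiv.Perm (Fin (l + 1)), ((Equiv.Perm.sign σ : ℤ) : ℝ) *
      v (i ∘ Equiv.Perm.viaEmbedding σ e) = 0 := by
  obtain ⟨a, b, hab, hi⟩ := Fintype.exists_ne_map_eq_of_card_lt (fun a => i (e a)) (by simp)
  have hswap : i ∘ Equiv.Perm.viaEmbedding (Equiv.swap a b) e = i := by
    funext x
    simp only [Function.comp_apply]
    by_cases hx : x ∈ Set.range e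
    · obtain ⟨c, rfl⟩ := hx
      rw [Equiv.Perm.viaEmbedding_apply]
      by_cases hca : c = a
      · subst hca; simpa using hi.symm
      by_cases hcb : c = b
      · subst hcb; simpa using hi
      rw [Equiv.swap_apply_of_ne_of_ne hca hcb]
    · rw [Equiv.Perm.viaEmbedding_apply_of_notMem _ _ _ hx]
  have h := Fintype.sum_equiv (Equiv.mulLeft (Equiv.swap a b))
    (fun σ => ((Equiv.Perm.sign σ : ℤ) : ℝ) * v (i ∘ Equiv.Perm.viaEmbedding σ e))
    (fun σ => -(((Equiv.Perm.sign σ : ℤ) : ℝ) * v (i ∘ Equiv.Perm.viaEmbedding σ e)))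
    (fun σ => by
      have : i ∘ Equiv.Perm.viaEmbedding (Equiv.swap a b * σ) e
          = i ∘ Equiv.Perm.viaEmbedding σ e := by
        have hm := map_mul (Equiv.Perm.viaEmbeddingHom e) (Equiv.swap a b) σ
        simp only [Equiv.Perm.viaEmbeddingHom_apply] at hm
        rw [hm, Equiv.Perm.coe_mul, ← Function.comp_assoc, hswap]
      simp [this, Equiv.Perm.sign_swap hab])
  rw [Finset.sum_neg_distrib] at h
  linarith

theorem toLex_lt_conj_viaEmbedding {π : Equiv.Perm (Fin N)} (hπ : IsFpfInv π) {k : ℕ}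
    {f : Fin k → Fin N} (hf : StrictMono f) (hπf : StrictMono fun a => π (f a))
    {e : Fin k ↪ Fin N} (he : ∀ a, e a = π (f a)) {σ : Equiv.Perm (Fin k)} (hσ : σ ≠ 1) :
    toLex (π : Fin N → Fin N) <
      toLex ((σ.viaEmbedding e * π * (σ.viaEmbedding e)⁻¹ : Equiv.Perm (Fin N)) :
        Fin N → Fin N) := by
  have hmono : StrictMono e := fun a b hab => by simpa [he] using hπf hab
  have hfe : ∀ b, f b ∉ Set.range e := by
    rintro b ⟨a, ha⟩
    have h1 : e b = f a := by rw [he, ← ha, he, hπ.1]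
    rcases lt_trichotomy a b with h | rfl | h
    · exact lt_asymm (hf h) (by rw [← ha, ← h1]; exact hmono h)
    · exact hπ.2 (f a) (by rw [← he, ha])
    · exact lt_asymm (hf h) (by rw [← ha, ← h1]; exact hmono h)
  have hinv : (σ.viaEmbedding e)⁻¹ = σ⁻¹.viaEmbedding e :=
    (map_inv (Equiv.Perm.viaEmbeddingHom e) σ).symm
  set ρ : Equiv.Perm (Fin N) := σ.viaEmbedding e * π * (σ.viaEmbedding e)⁻¹ with hρ
  have hρf : ∀ a, ρ (f a) = e (σ a) := fun a => by
    rw [hρ, hinv]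
    simp [Equiv.Perm.viaEmbedding_apply_of_notMem _ _ _ (hfe a), ← he,
      Equiv.Perm.viaEmbedding_apply]
  have hπe : ∀ a, π (e a) = f a := fun a => by rw [he, hπ.1]
  have hρe : ∀ a, ρ (e a) = f (σ⁻¹ a) := fun a => by
    rw [hρ, hinv]
    simp only [Equiv.Perm.mul_apply, Equiv.Perm.viaEmbedding_apply, hπe]
    exact Equiv.Perm.viaEmbedding_apply_of_notMem _ _ _ (hfe _)
  have hoff : ∀ x, x ∉ Set.range e → x ∉ Set.range f → ρ x = π x := fun x hx hx' => by
    rw [hρ, hinv]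
    simp only [Equiv.Perm.mul_apply, Equiv.Perm.viaEmbedding_apply_of_notMem _ _ _ hx]
    refine Equiv.Perm.viaEmbedding_apply_of_notMem _ _ _ ?_
    rintro ⟨a, ha⟩
    exact hx' ⟨a, π.injective (by rw [← ha, he])⟩
  have hne : ∃ a, σ a ≠ a := by
    by_contra! h
    exact hσ (Equiv.ext h)
  have hex : ∃ p, π p ≠ ρ p := by
    obtain ⟨a, ha⟩ := hne
    exact ⟨f a, by rw [hρf, ← he]; exact fun h => ha (e.injective h).symm⟩
  obtain ⟨p, hp, hmin⟩ := WellFounded.has_min (wellFounded_lt (α := Fin N)) {p | π p ≠ ρ p} hex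
  have hmin' : ∀ q < p, π q = ρ q := fun q hq => by
    by_contra h
    exact hmin q h hq
  refine ⟨p, hmin', ?_⟩
  change π p < ρ p
  have main : ∀ (σ : Equiv.Perm (Fin k)) (g g' : Fin k → Fin N), StrictMono g → StrictMono g' →
      (∀ a, π (g a) = g' a) → (∀ a, ρ (g a) = g' (σ a)) → ∀ a, p = g a → π p < ρ p := by
    intro σ g g' hg hg' h1 h2 a hpa
    subst hpa
    rw [h1, h2]
    refine hg' (lt_of_le_of_ne ?_ fun h => hp (by rw [h1, h2, ← h]))
    by_contra! hlt
    have := hmin' _ (hg hlt)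
    rw [h1, h2] at this
    exact hlt.ne (σ.injective (hg'.injective this.symm))
  by_cases hxf : p ∈ Set.range f
  · obtain ⟨a, ha⟩ := hxf
    exact main σ f e hf hmono (fun a => (he a).symm) hρf a ha.symm
  by_cases hxe : p ∈ Set.range e
  · obtain ⟨a, ha⟩ := hxe
    exact main σ⁻¹ e f hmono hf hπe hρe a ha.symm
  exact absurd (hoff p hxe hxf).symm hp

theorem pairVec_mem_span {π : Equiv.Perm (Fin N)} (hπ : IsFpfInv π) :
    (pairVec π : (Fin N → Fin l) → ℝ) ∈ Submodule.span ℝ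
      (Set.range fun π : {π : Equiv.Perm (Fin N) // IsFpfInv π ∧ lisLE π l} =>
        (pairVec π.1 : (Fin N → Fin l) → ℝ)) := by
  set S := Submodule.span ℝ
      (Set.range fun π : {π : Equiv.Perm (Fin N) // IsFpfInv π ∧ lisLE π l} =>
        (pairVec π.1 : (Fin N → Fin l) → ℝ)) with hS
  suffices H : ∀ (x : Lex (Fin N → Fin N)) (π : Equiv.Perm (Fin N)), IsFpfInv π →
      toLex (π : Fin N → Fin N) = x → (pairVec π : (Fin N → Fin l) → ℝ) ∈ S from H _ π hπ rfl
  have : Finite (Lex (Fin N → Fin N)) := inferInstanceAs (Finite (Fin N → Fin N))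
  intro x
  induction x using WellFoundedGT.induction with
  | ind x ih =>
  rintro π hπ rfl
  by_cases hl : lisLE π l
  · exact Submodule.subset_span ⟨⟨π, hπ, hl⟩, rfl⟩
  simp only [lisLE, not_forall, not_le] at hl
  obtain ⟨k, f₀, hf₀, hπf₀, hk⟩ := hl
  have hcast := Fin.strictMono_castLE (show l + 1 ≤ k from hk)
  let f : Fin (l + 1) → Fin N := fun a => f₀ (Fin.castLE hk a)
  have hf : StrictMono f := hf₀.comp hcast
  have hπf : StrictMono fun a => π (f a) := hπf₀.comp hcast
  let e : Fin (l + 1) ↪ Fin N := ⟨fun a => π (f a), hπf.injective⟩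
  let ρ : Equiv.Perm (Fin (l + 1)) → Equiv.Perm (Fin N) := fun σ =>
    σ.viaEmbedding e * π * (σ.viaEmbedding e)⁻¹
  have hone : Equiv.Perm.viaEmbedding 1 e = 1 := map_one (Equiv.Perm.viaEmbeddingHom e)
  have hsum : ∑ σ, ((Equiv.Perm.sign σ : ℤ) : ℝ) • (pairVec (ρ σ) : (Fin N → Fin l) → ℝ) = 0 := by
    funext i
    have := sum_sign_viaEmbedding_eq_zero e i (pairVec π)
    simpa [Finset.sum_apply, ρ, pairVec_conj] using this
  rw [← Finset.add_sum_erase _ _ (Finset.mem_univ 1)] at hsum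
  have hρ1 : ρ 1 = π := by simp [ρ, hone]
  rw [hρ1, Equiv.Perm.sign_one, Units.val_one, Int.cast_one, one_smul] at hsum
  rw [eq_neg_of_add_eq_zero_left hsum]
  refine S.neg_mem (S.sum_mem fun σ hσ => S.smul_mem _ ?_)
  exact ih _ (toLex_lt_conj_viaEmbedding hπ hf hπf (fun _ => rfl) (Finset.ne_of_mem_erase hσ)) _
    (hπ.conj _) rfl

/-- The span of the tensors of all matchings has dimension the number of matchings with
longest increasing subsequence at most `l`. -/
theorem finrank_span_pairVec :
    Module.finrank ℝ (Submodule.span ℝ (Set.range fun π : {π : Equiv.Perm (Fin N) // IsFpfInv π} =>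
      (pairVec π.1 : (Fin N → Fin l) → ℝ))) =
      Nat.card {π : Equiv.Perm (Fin N) // IsFpfInv π ∧ lisLE π l} := by
  classical
  rw [Nat.card_eq_fintype_card, ← finrank_span_eq_card (linearIndependent_pairVec (l := l))]
  have : Submodule.span ℝ (Set.range fun π : {π : Equiv.Perm (Fin N) // IsFpfInv π} =>
      (pairVec π.1 : (Fin N → Fin l) → ℝ)) = Submodule.span ℝ
      (Set.range fun π : {π : Equiv.Perm (Fin N) // IsFpfInv π ∧ lisLE π l} =>
        (pairVec π.1 : (Fin N → Fin l) → ℝ)) := by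
    refine le_antisymm (Submodule.span_le.2 ?_) (Submodule.span_mono ?_)
    · rintro _ ⟨π, rfl⟩
      exact pairVec_mem_span π.2
    · rintro _ ⟨π, rfl⟩
      exact ⟨⟨π.1, π.2.1⟩, rfl⟩
  rw [this]

end Straightening

section Wick

open ProbabilityTheory

theorem integrable_pow_mul_gaussianPDFReal (n : ℕ) :
    Integrable fun x : ℝ => x ^ n * gaussianPDFReal 0 1 x := by
  have := (integrable_rpow_mul_exp_neg_mul_sq (b := 1 / 2) (by norm_num) (s := n)
    (by linarith [n.cast_nonneg (α := ℝ)])).const_mul (√(2 * Real.pi * 1))⁻¹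
  refine this.congr (Filter.Eventually.of_forall fun x => ?_)
  simp only [gaussianPDFReal, Real.rpow_natCast, NNReal.coe_one]
  rw [show -(x - 0) ^ 2 / (2 * 1) = -(1 / 2) * x ^ 2 by ring]
  ring

theorem hasDerivAt_gaussianPDFReal (x : ℝ) :
    HasDerivAt (gaussianPDFReal 0 1) (-x * gaussianPDFReal 0 1 x) x := by
  unfold gaussianPDFReal
  have h : HasDerivAt (fun x : ℝ => -(x - 0) ^ 2 / (2 * ((1 : NNReal) : ℝ))) (-x) x := by
    refine (((((hasDerivAt_id x).sub_const 0).pow 2).neg).div_const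
      (2 * ((1 : NNReal) : ℝ))).congr_deriv ?_
    norm_num
    ring
  refine (h.exp.const_mul (√(2 * Real.pi * ((1 : NNReal) : ℝ)))⁻¹).congr_deriv ?_
  ring

theorem integral_pow_add_two_gaussianReal (n : ℕ) :
    ∫ x, x ^ (n + 2) ∂gaussianReal 0 1 = (n + 1) * ∫ x, x ^ n ∂gaussianReal 0 1 := by
  simp only [integral_gaussianReal_eq_integral_smul (one_ne_zero : (1 : NNReal) ≠ 0), smul_eq_mul]
  have hu : ∀ x : ℝ, HasDerivAt (fun x : ℝ => x ^ (n + 1)) ((n + 1 : ℝ) * x ^ n) x := fun x => by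
    simpa using hasDerivAt_pow (n + 1) x
  have h := integral_mul_deriv_eq_deriv_mul_of_integrable (u := fun x : ℝ => x ^ (n + 1))
    (v := gaussianPDFReal 0 1) (u' := fun x => (n + 1 : ℝ) * x ^ n)
    (v' := fun x => -x * gaussianPDFReal 0 1 x)
    (fun x _ => hu x) (fun x _ => hasDerivAt_gaussianPDFReal x)
    ((integrable_pow_mul_gaussianPDFReal (n + 2)).neg.congr
      (Filter.Eventually.of_forall fun x => by simp; ring))
    (((integrable_pow_mul_gaussianPDFReal n).const_mul (n + 1 : ℝ)).congr
      (Filter.Eventually.of_forall fun x => by simp; ring))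
    (integrable_pow_mul_gaussianPDFReal (n + 1))
  rw [← neg_inj, ← integral_neg, ← integral_const_mul, ← integral_neg]
  rw [← integral_neg] at h
  refine Eq.trans ?_ (h.trans ?_)
  · exact integral_congr_ae (Filter.Eventually.of_forall fun x => by ring)
  · exact integral_congr_ae (Filter.Eventually.of_forall fun x => by ring)

theorem integrable_pow_gaussianReal (n : ℕ) :
    Integrable (fun x : ℝ => x ^ n) (gaussianReal 0 1) :=
  integrable_pow_of_mem_interior_integrableExpSet (X := id)
    (by simp [integrableExpSet_id_gaussianReal]) n

theorem integral_pow_gaussianReal_odd (m : ℕ) :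
    ∫ x, x ^ (2 * m + 1) ∂gaussianReal 0 1 = 0 := by
  induction m with
  | zero => simp
  | succ m ih => rw [show 2 * (m + 1) + 1 = 2 * m + 1 + 2 by ring,
      integral_pow_add_two_gaussianReal, ih, mul_zero]

theorem integral_pow_gaussianReal_even (m : ℕ) :
    (∫ x, x ^ (2 * m) ∂gaussianReal 0 1) * (2 ^ m * m.factorial) = (2 * m).factorial := by
  induction m with
  | zero => simp
  | succ m ih =>
    rw [show 2 * (m + 1) = 2 * m + 2 by ring, integral_pow_add_two_gaussianReal]
    simp only [Nat.factorial_succ, pow_succ, Nat.cast_mul]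
    rw [← ih]
    push_cast
    ring

theorem IsFpfInv.cycleType {α : Type*} [Fintype α] [DecidableEq α] {π : Equiv.Perm α}
    (hπ : IsFpfInv π) :
    ∃ m, π.cycleType = Multiset.replicate m 2 ∧ Fintype.card α = 2 * m := by
  have h2 : ∀ n ∈ π.cycleType, n = 2 := fun n hn => by
    have h1 : orderOf π ∣ 2 := orderOf_dvd_of_pow_eq_one (by ext x; simp [pow_two, hπ.1])
    exact le_antisymm (Nat.le_of_dvd two_pos ((Equiv.Perm.dvd_of_mem_cycleType hn).trans h1))
      (Equiv.Perm.two_le_of_mem_cycleType hn)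
  have hr := Multiset.eq_replicate_card.2 h2
  have hs := π.sum_cycleType
  have hsupp : π.support = Finset.univ := by ext x; simp [hπ.2 x]
  rw [hr, hsupp, Multiset.sum_replicate, Finset.card_univ] at hs
  exact ⟨_, hr, by rw [← hs, smul_eq_mul, mul_comm]⟩

theorem isFpfInv_of_cycleType {α : Type*} [Fintype α] [DecidableEq α] {π : Equiv.Perm α} {m : ℕ}
    (h : π.cycleType = Multiset.replicate m 2) (hm : Fintype.card α = 2 * m) : IsFpfInv π := by
  have h1 : π ^ 2 = 1 := by
    rw [← orderOf_dvd_iff_pow_eq_one, ← π.lcm_cycleType, h, Multiset.lcm_dvd]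
    intro b hb
    rw [Multiset.eq_of_mem_replicate hb]
  have hsupp : π.support = Finset.univ := by
    rw [← Finset.card_eq_iff_eq_univ, ← π.sum_cycleType, h, hm]
    simp [mul_comm]
  refine ⟨fun x => by simpa [pow_two] using DFunLike.congr_fun h1 x, fun x => ?_⟩
  rw [← Equiv.Perm.mem_support, hsupp]
  exact Finset.mem_univ x

theorem natCard_isFpfInv (α : Type*) [Fintype α] :
    (Nat.card {π : Equiv.Perm α // IsFpfInv π} : ℝ) =
      ∫ x, x ^ Fintype.card α ∂gaussianReal 0 1 := by
  classical
  rcases Nat.even_or_odd' (Fintype.card α) with ⟨m, hm | hm⟩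
  · have h1 : Nat.card {π : Equiv.Perm α // IsFpfInv π} =
        (Finset.univ.filter fun π : Equiv.Perm α => π.cycleType = Multiset.replicate m 2).card := by
      rw [Nat.card_eq_fintype_card, Fintype.card_subtype]
      congr 1
      ext π
      simp only [Finset.mem_filter, Finset.mem_univ, true_and]
      refine ⟨fun h => ?_, fun h => isFpfInv_of_cycleType h hm⟩
      obtain ⟨m', h, hm'⟩ := h.cycleType
      rw [h, show m' = m by omega]
    have h2 := Equiv.Perm.card_of_cycleType_mul_eq α (Multiset.replicate m 2)
    rw [if_pos ⟨by simp [hm, mul_comm], fun a ha => (Multiset.eq_of_mem_replicate ha).ge⟩] at h2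
    have h3 : ∏ n ∈ (Multiset.replicate m 2).toFinset,
        ((Multiset.replicate m 2).count n).factorial = m.factorial := by
      rcases Nat.eq_zero_or_pos m with rfl | hpos
      · simp
      · rw [Multiset.toFinset_replicate, if_neg hpos.ne']
        simp
    rw [h3, ← h1, Multiset.sum_replicate, Multiset.prod_replicate, hm, smul_eq_mul,
      mul_comm m 2, Nat.sub_self, Nat.factorial_zero, one_mul] at h2
    have h4 := integral_pow_gaussianReal_even m
    rw [hm]
    refine mul_right_cancel₀ (b := (2 ^ m * m.factorial : ℝ)) (by positivity) ?_
    rw [h4, ← h2]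
    push_cast
    ring
  · rw [hm, integral_pow_gaussianReal_odd, Nat.cast_eq_zero, Nat.card_eq_zero]
    refine Or.inl ⟨fun π => ?_⟩
    obtain ⟨m', -, hm'⟩ := π.2.cycleType
    omega

/-- The permutation obtained by gluing permutations of the fibres of `p`. -/
def permOfFibers {α ι : Type*} (p : α → ι) (g : ∀ v, Equiv.Perm {a // p a = v}) :
    Equiv.Perm α :=
  (Equiv.sigmaFiberEquiv p).permCongr (Equiv.sigmaCongrRight g)

theorem permOfFibers_apply {α ι : Type*} {p : α → ι} (g : ∀ v, Equiv.Perm {a // p a = v})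
    {x : α} {v : ι} (h : p x = v) : permOfFibers p g x = g v ⟨x, h⟩ := by
  subst h
  rfl

theorem comp_permOfFibers {α ι : Type*} (p : α → ι) (g : ∀ v, Equiv.Perm {a // p a = v}) :
    p ∘ permOfFibers p g = p := by
  funext x
  rw [Function.comp_apply, permOfFibers_apply g rfl]
  exact (g (p x) ⟨x, rfl⟩).2

/-- Matchings preserving `p` are families of matchings of the fibres of `p`. -/
def fpfInvFiberEquiv {α ι : Type*} (p : α → ι) :
    {π : Equiv.Perm α // IsFpfInv π ∧ p ∘ π = p} ≃
      ∀ v, {ρ : Equiv.Perm {a // p a = v} // IsFpfInv ρ} where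
  toFun π v := ⟨π.1.subtypePerm fun a => by rw [← Function.comp_apply (f := p), π.2.2],
    fun x => Subtype.ext (π.2.1.1 x), fun x h => π.2.1.2 x (congrArg Subtype.val h)⟩
  invFun g := ⟨permOfFibers p fun v => (g v).1, ⟨fun x => by
      rw [permOfFibers_apply (p := p) (v := p x) _ (congrFun (comp_permOfFibers p _) x)]
      exact congrArg Subtype.val ((g (p x)).2.1 ⟨x, rfl⟩),
    fun x h => (g (p x)).2.2 ⟨x, rfl⟩ (Subtype.ext h)⟩, comp_permOfFibers p _⟩
  left_inv π := by
    ext x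
    rfl
  right_inv g := by
    ext v x
    exact permOfFibers_apply (fun v => (g v).1) x.2

theorem prod_apply_eq_prod_pow {α ι : Type*} [Fintype α] [Fintype ι] [DecidableEq ι]
    (p : α → ι) (g : ι → ℝ) : ∏ a, g (p a) = ∏ v, g v ^ Fintype.card {a // p a = v} := by
  rw [← Finset.prod_fiberwise' _ p]
  simp [Fintype.card_subtype]

/-- Wick's formula for independent standard Gaussians. -/
theorem integral_prod_gaussianReal {α ι : Type*} [Fintype α] [Fintype ι] (p : α → ι) :
    ∫ g : ι → ℝ, ∏ a, g (p a) ∂Measure.pi (fun _ => gaussianReal 0 1) =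
      Nat.card {π : Equiv.Perm α // IsFpfInv π ∧ p ∘ π = p} := by
  classical
  simp only [prod_apply_eq_prod_pow p]
  rw [integral_fintype_prod_eq_prod (f := fun v x => x ^ Fintype.card {a // p a = v}),
    Nat.card_congr (fpfInvFiberEquiv p), Nat.card_pi, Nat.cast_prod]
  simp only [natCard_isFpfInv]

theorem integrable_prod_gaussianReal {α ι : Type*} [Fintype α] [Fintype ι] (p : α → ι) :
    Integrable (fun g : ι → ℝ => ∏ a, g (p a)) (Measure.pi fun _ => gaussianReal 0 1) := by
  classical
  simp only [prod_apply_eq_prod_pow p]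
  exact Integrable.fintype_prod (f := fun v x => x ^ Fintype.card {a // p a = v})
    fun v => integrable_pow_gaussianReal _

instance isOpenPosMeasure_gaussianReal : (gaussianReal 0 1).IsOpenPosMeasure :=
  (gaussianReal_absolutelyContinuous' 0 one_ne_zero).isOpenPosMeasure

end Wick

section TensorPower

variable {α κ : Type*} [Fintype α]

/-- The tensor power of a matrix, acting on functions of multi-indices. -/
def tensorPow (α : Type*) [Fintype α] (G : Matrix κ κ ℝ) : Matrix (α → κ) (α → κ) ℝ :=
  Matrix.of fun i j => ∏ a, G (i a) (j a)

theorem tensorPow_apply (G : Matrix κ κ ℝ) (i j : α → κ) :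
    tensorPow α G i j = ∏ a, G (i a) (j a) := rfl

theorem tensorPow_transpose (G : Matrix κ κ ℝ) : tensorPow α Gᵀ = (tensorPow α G)ᵀ := rfl

theorem tensorPow_one [DecidableEq κ] : tensorPow α (1 : Matrix κ κ ℝ) = 1 := by
  ext i j
  simp only [tensorPow_apply, Matrix.one_apply, Finset.prod_ite_zero, Finset.prod_const_one,
    Finset.mem_univ, true_imp_iff, funext_iff]

theorem continuous_tensorPow : Continuous (tensorPow α : Matrix κ κ ℝ → _) := by
  refine continuous_matrix fun i j => ?_
  simp only [tensorPow_apply]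
  fun_prop

variable [DecidableEq α]

open Classical in
theorem sum_pairVec_mul_pairVec [DecidableEq κ] (i j : α → κ) :
    ∑ π : {π : Equiv.Perm α // IsFpfInv π}, (pairVec π.1 i : ℝ) * pairVec π.1 j =
      Nat.card {π : Equiv.Perm α // IsFpfInv π ∧
        (fun a => (i a, j a)) ∘ π = fun a => (i a, j a)} := by
  have h : ∀ π : Equiv.Perm α, (pairVec π i : ℝ) * pairVec π j =
      if (fun a => (i a, j a)) ∘ π = fun a => (i a, j a) then 1 else 0 := fun π => by
    have h' : ((fun a => (i a, j a)) ∘ π = fun a => (i a, j a)) ↔ i ∘ π = i ∧ j ∘ π = j := by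
      simp [funext_iff, forall_and]
    simp only [pairVec, h', ite_and, mul_ite, mul_one, mul_zero]
    split_ifs <;> rfl
  simp only [h]
  rw [Finset.sum_boole, ← Fintype.card_subtype, ← Nat.card_eq_fintype_card]
  exact congrArg _ (Nat.card_congr (Equiv.subtypeSubtypeEquivSubtypeInter IsFpfInv
    fun π : Equiv.Perm α => (fun a => (i a, j a)) ∘ π = fun a => (i a, j a)))

variable [Fintype κ]

theorem tensorPow_mul (G H : Matrix κ κ ℝ) :
    tensorPow α (G * H) = tensorPow α G * tensorPow α H := by
  ext i j
  simp only [tensorPow_apply, Matrix.mul_apply, Finset.prod_univ_sum, Fintype.piFinset_univ,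
    Finset.prod_mul_distrib]

theorem trace_tensorPow (G : Matrix κ κ ℝ) :
    (tensorPow α G).trace = G.trace ^ Fintype.card α := by
  simp only [Matrix.trace, Matrix.diag, tensorPow_apply]
  rw [← Fintype.piFinset_univ, ← Finset.prod_univ_sum (fun _ => Finset.univ) fun _ c => G c c,
    Finset.prod_const, Finset.card_univ]

theorem dotProduct_tensorPow_eq_sum (x : (α → κ) → ℝ) (G : Matrix κ κ ℝ) :
    x ⬝ᵥ tensorPow α G *ᵥ x = ∑ i, ∑ j, x i * x j * ∏ a, G (i a) (j a) := by
  simp only [dotProduct, mulVec, tensorPow_apply, Finset.mul_sum]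
  exact Finset.sum_congr rfl fun i _ => Finset.sum_congr rfl fun j _ => by ring

open ProbabilityTheory in
theorem integrable_dotProduct_tensorPow (x : (α → κ) → ℝ) :
    Integrable (fun g : κ × κ → ℝ => x ⬝ᵥ tensorPow α (Matrix.of fun c d => g (c, d)) *ᵥ x)
      (Measure.pi fun _ => gaussianReal 0 1) := by
  simp only [dotProduct_tensorPow_eq_sum]
  exact integrable_finsetSum _ fun i _ => integrable_finsetSum _ fun j _ =>
    (integrable_prod_gaussianReal fun a => (i a, j a)).const_mul _

variable [DecidableEq κ]

theorem exists_polar {G : Matrix κ κ ℝ} (hG : G.det ≠ 0) :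
    ∃ U T : Matrix κ κ ℝ, Uᵀ * U = 1 ∧ G = U * (Tᵀ * T) := by
  open scoped MatrixOrder Matrix.Norms.L2Operator in
  have hA : (Gᵀ * G).PosSemidef := posSemidef_conjTranspose_mul_self G
  set S := CFC.sqrt (Gᵀ * G) with hS
  have hSS : S * S = Gᵀ * G := CFC.sqrt_mul_sqrt_self _ hA.nonneg
  have hSp : S.PosSemidef := (CFC.sqrt_nonneg (Gᵀ * G)).posSemidef
  have hST : Sᵀ = S := hSp.1
  have hdet : IsUnit S.det := by
    refine isUnit_iff_ne_zero.2 fun h => hG ?_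
    have := congrArg Matrix.det hSS
    simpa [Matrix.det_mul, h] using this.symm
  obtain ⟨T, hT⟩ := CStarAlgebra.nonneg_iff_eq_star_mul_self.mp hSp.nonneg
  refine ⟨G * S⁻¹, T, ?_, ?_⟩
  · rw [Matrix.transpose_mul, Matrix.transpose_nonsing_inv, hST, Matrix.mul_assoc,
      ← Matrix.mul_assoc Gᵀ, ← hSS, Matrix.mul_assoc S, Matrix.mul_nonsing_inv _ hdet, mul_one,
      Matrix.nonsing_inv_mul _ hdet]
  · have hT' : Tᵀ * T = S := hT.symm
    rw [hT', Matrix.nonsing_inv_mul_cancel_right _ _ hdet]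

theorem dotProduct_tensorPow_nonneg_of_det_ne_zero {x : (α → κ) → ℝ}
    (hx : ∀ U : Matrix κ κ ℝ, U * Uᵀ = 1 → tensorPow α U *ᵥ x = x) {G : Matrix κ κ ℝ}
    (hG : G.det ≠ 0) : 0 ≤ x ⬝ᵥ tensorPow α G *ᵥ x := by
  obtain ⟨U, T, hU, rfl⟩ := exists_polar hG
  have h := hx Uᵀ (by rwa [Matrix.transpose_transpose])
  rw [tensorPow_mul, tensorPow_mul, ← Matrix.mulVec_mulVec, Matrix.dotProduct_mulVec,
    ← Matrix.mulVec_transpose, ← tensorPow_transpose, h, ← Matrix.mulVec_mulVec,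
    Matrix.dotProduct_mulVec, tensorPow_transpose, Matrix.vecMul_transpose]
  exact Finset.sum_nonneg fun i _ => mul_self_nonneg _

theorem dotProduct_tensorPow_nonneg {x : (α → κ) → ℝ}
    (hx : ∀ U : Matrix κ κ ℝ, U * Uᵀ = 1 → tensorPow α U *ᵥ x = x) (G : Matrix κ κ ℝ) :
    0 ≤ x ⬝ᵥ tensorPow α G *ᵥ x := by
  have hcont : Continuous fun ε : ℝ => x ⬝ᵥ tensorPow α (G + ε • 1) *ᵥ x :=
    continuous_const.dotProduct
      ((continuous_tensorPow.comp (by fun_prop)).matrix_mulVec continuous_const)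
  have hev : ∀ᶠ ε : ℝ in nhdsWithin 0 {0}ᶜ, 0 ≤ x ⬝ᵥ tensorPow α (G + ε • 1) *ᵥ x := by
    have hroots : ∀ᶠ ε : ℝ in nhdsWithin 0 {0}ᶜ, ε ∉ (-G).charpoly.roots.toFinset := by
      have h := (((-G).charpoly.roots.toFinset.erase 0).finite_toSet.isClosed.isOpen_compl).mem_nhds
        (x := (0 : ℝ)) (by simp)
      filter_upwards [nhdsWithin_le_nhds h, self_mem_nhdsWithin] with ε h1 h2 h3
      exact h1 (Finset.mem_coe.2 (Finset.mem_erase.2 ⟨h2, h3⟩))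
    filter_upwards [hroots] with ε hε
    refine dotProduct_tensorPow_nonneg_of_det_ne_zero hx fun h => hε ?_
    rw [Multiset.mem_toFinset, Polynomial.mem_roots (Matrix.charpoly_monic _).ne_zero,
      Polynomial.IsRoot, Matrix.eval_charpoly, ← h]
    congr 1
    rw [sub_neg_eq_add, add_comm, Matrix.smul_one_eq_diagonal]
    rfl
  have := ge_of_tendsto (hcont.continuousAt.tendsto.mono_left nhdsWithin_le_nhds) hev
  simpa using this

open ProbabilityTheory

open Classical in
theorem integral_dotProduct_tensorPow (x : (α → κ) → ℝ) :
    ∫ g : κ × κ → ℝ, x ⬝ᵥ tensorPow α (Matrix.of fun c d => g (c, d)) *ᵥ x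
      ∂(Measure.pi fun _ => gaussianReal 0 1) =
      ∑ π : {π : Equiv.Perm α // IsFpfInv π}, (pairVec π.1 ⬝ᵥ x) ^ 2 := by
  have hint : ∀ i j : α → κ, Integrable (fun g : κ × κ → ℝ => x i * x j * ∏ a, g (i a, j a))
      (Measure.pi fun _ => gaussianReal 0 1) := fun i j =>
    (integrable_prod_gaussianReal fun a => (i a, j a)).const_mul _
  have hwick : ∀ i j : α → κ, ∫ g : κ × κ → ℝ, x i * x j * ∏ a, g (i a, j a)
      ∂(Measure.pi fun _ => gaussianReal 0 1) =
      ∑ π : {π : Equiv.Perm α // IsFpfInv π}, x i * x j * (pairVec π.1 i * pairVec π.1 j) :=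
    fun i j => by
      rw [integral_const_mul, integral_prod_gaussianReal fun a => (i a, j a),
        ← sum_pairVec_mul_pairVec, Finset.mul_sum]
  simp only [dotProduct_tensorPow_eq_sum, Matrix.of_apply]
  rw [integral_finsetSum _ fun i _ => integrable_finsetSum _ fun j _ => hint i j]
  simp only [fun i => integral_finsetSum Finset.univ fun j _ => hint i j, hwick]
  rw [Finset.sum_congr rfl fun i _ => Finset.sum_comm, Finset.sum_comm]
  refine Finset.sum_congr rfl fun π _ => ?_
  rw [pow_two, dotProduct, Finset.sum_mul_sum]
  exact Finset.sum_congr rfl fun i _ => Finset.sum_congr rfl fun j _ => by ring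

/-- First fundamental theorem for the orthogonal group: an invariant tensor orthogonal to all
matching tensors vanishes. -/
theorem eq_zero_of_forall_pairVec_dotProduct {x : (α → κ) → ℝ}
    (hx : ∀ U : Matrix κ κ ℝ, U * Uᵀ = 1 → tensorPow α U *ᵥ x = x)
    (h0 : ∀ π : Equiv.Perm α, IsFpfInv π → pairVec π ⬝ᵥ x = 0) : x = 0 := by
  have hzero := integral_dotProduct_tensorPow x
  rw [Finset.sum_eq_zero fun π _ => by
    rw [sq_eq_zero_iff]
    convert h0 π.1 π.2] at hzero
  have hcont : Continuous fun g : κ × κ → ℝ =>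
      x ⬝ᵥ tensorPow α (Matrix.of fun c d => g (c, d)) *ᵥ x := continuous_const.dotProduct
    ((continuous_tensorPow.comp
      (continuous_matrix fun c d => continuous_apply (c, d))).matrix_mulVec continuous_const)
  have hae := (integral_eq_zero_iff_of_nonneg
    (fun g => dotProduct_tensorPow_nonneg hx _) (integrable_dotProduct_tensorPow x)).1 hzero
  have hq := (hcont.ae_eq_iff_eq _ continuous_const).1 hae
  have h1 : x ⬝ᵥ tensorPow α (1 : Matrix κ κ ℝ) *ᵥ x = 0 :=
    congrFun hq fun c => (1 : Matrix κ κ ℝ) c.1 c.2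
  rwa [tensorPow_one, Matrix.one_mulVec, dotProduct_self_eq_zero] at h1

end TensorPower

section Matching

variable {α : Type*} [Fintype α] [LinearOrder α] {κ : Type*}

theorem IsFpfInv.prod_eq_prod_lt {π : Equiv.Perm α} (hπ : IsFpfInv π) (F : α → ℝ) :
    ∏ a, F a = ∏ a : {a // a < π a}, F a * F (π a) := by
  rw [← Finset.prod_filter_mul_prod_filter_not Finset.univ fun a => a < π a,
    Finset.prod_mul_distrib]
  congr 1
  · exact Finset.prod_subtype _ (by simp) _
  · rw [← Finset.prod_subtype (Finset.univ.filter fun a => a < π a) (by simp) fun a => F (π a)]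
    refine Finset.prod_nbij' π π (fun a ha => ?_) (fun a ha => ?_) (fun a _ => hπ.1 a)
      (fun a _ => hπ.1 a) fun a _ => by rw [hπ.1]
    · simpa [hπ.1] using lt_of_le_of_ne (not_lt.1 (Finset.mem_filter.1 ha).2) (hπ.2 a)
    · simpa [hπ.1] using (Finset.mem_filter.1 ha).2.le

/-- Multi-indices constant on the blocks of a matching are determined by their values on the
openers of the blocks. -/
def IsFpfInv.openerEquiv {π : Equiv.Perm α} (hπ : IsFpfInv π) :
    {j : α → κ // j ∘ π = j} ≃ ({a // a < π a} → κ) where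
  toFun j a := j.1 a
  invFun f := ⟨fun a => if h : a < π a then f ⟨a, h⟩ else f ⟨π a, by
      rw [hπ.1]; exact lt_of_le_of_ne (not_lt.1 h) (hπ.2 a)⟩, by
    funext a
    rcases lt_or_gt_of_ne (hπ.2 a) with h | h
    · simp [hπ.1, h, h.not_gt]
    · simp [hπ.1, h, h.not_gt]⟩
  left_inv j := by
    ext a
    by_cases h : a < π a
    · simp [h]
    · simpa [h] using congrFun j.2 a
  right_inv f := by
    ext a
    simp [a.2]

theorem tensorPow_mulVec_pairVec [Fintype κ] [DecidableEq κ] {U : Matrix κ κ ℝ}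
    (hU : U * Uᵀ = 1) {π : Equiv.Perm α} (hπ : IsFpfInv π) :
    tensorPow α U *ᵥ pairVec π = pairVec π := by
  ext i
  have h1 : (tensorPow α U *ᵥ pairVec π) i =
      ∑ j : {j : α → κ // j ∘ π = j}, ∏ a, U (i a) (j.1 a) := by
    simp only [mulVec, dotProduct, pairVec, mul_ite, mul_one, mul_zero, tensorPow_apply]
    rw [← Finset.sum_filter]
    exact Finset.sum_subtype _ (by simp) _
  have h2 : ∀ j : {j : α → κ // j ∘ π = j}, ∏ a, U (i a) (j.1 a) =
      ∏ a : {a // a < π a}, U (i a) (hπ.openerEquiv j a) * U (i (π a)) (hπ.openerEquiv j a) :=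
    fun j => by
      rw [hπ.prod_eq_prod_lt]
      refine Finset.prod_congr rfl fun a _ => ?_
      rw [show j.1 (π a) = j.1 a from congrFun j.2 a]
      rfl
  have h3 : i ∘ π = i ↔ ∀ a : {a // a < π a}, i a = i (π a) := by
    refine ⟨fun h a => (congrFun h a).symm, fun h => funext fun a => ?_⟩
    rcases lt_or_gt_of_ne (hπ.2 a) with ha | ha
    · simpa [hπ.1] using h ⟨π a, by rwa [hπ.1]⟩
    · exact (h ⟨a, ha⟩).symm
  have h4 : ∀ c d, ∑ k, U c k * U d k = if c = d then 1 else 0 := fun c d => by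
    rw [← Matrix.one_apply, ← hU, Matrix.mul_apply]
    rfl
  simp only [h1, h2, pairVec, h3]
  rw [Equiv.sum_comp hπ.openerEquiv fun f =>
      ∏ a : {a // a < π a}, U (i a) (f a) * U (i (π a)) (f a),
    ← Fintype.piFinset_univ,
    ← Finset.prod_univ_sum (fun _ => Finset.univ) fun (a : {a // a < π a}) k =>
      U (i a) k * U (i (π a)) k]
  simp only [h4, Finset.prod_ite_zero, Finset.prod_const_one, Finset.mem_univ, true_imp_iff]

end Matching

section Haar

variable {l : ℕ}

theorem abs_entry_le_one (U : Matrix.orthogonalGroup (Fin l) ℝ) (c d : Fin l) :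
    |(U : Matrix (Fin l) (Fin l) ℝ) c d| ≤ 1 := by
  have h := congrFun (congrFun (Matrix.mem_orthogonalGroup_iff _ _ |>.1 U.2) c) c
  rw [Matrix.mul_apply, Matrix.one_apply_eq] at h
  rw [abs_le_one_iff_mul_self_le_one, ← h]
  exact Finset.single_le_sum (f := fun k => (U : Matrix (Fin l) (Fin l) ℝ) c k * U.1 c k)
    (fun k _ => mul_self_nonneg _) (Finset.mem_univ d)

/-- The tensors invariant under all orthogonal matrices. -/
def invariantTensors (N l : ℕ) : Submodule ℝ ((Fin N → Fin l) → ℝ) where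
  carrier := {x | ∀ U : Matrix (Fin l) (Fin l) ℝ, U * Uᵀ = 1 → tensorPow (Fin N) U *ᵥ x = x}
  add_mem' hx hy U hU := by rw [Matrix.mulVec_add, hx U hU, hy U hU]
  zero_mem' U _ := Matrix.mulVec_zero _
  smul_mem' c x hx U hU := by rw [Matrix.mulVec_smul, hx U hU]

theorem finrank_invariantTensors (N l : ℕ) :
    Module.finrank ℝ (invariantTensors N l) =
      Nat.card {π : Equiv.Perm (Fin N) // IsFpfInv π ∧ lisLE π l} := by
  classical
  rw [← finrank_span_pairVec]
  let B : Matrix {π : Equiv.Perm (Fin N) // IsFpfInv π} (Fin N → Fin l) ℝ :=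
    Matrix.of fun π => pairVec π.1
  apply le_antisymm
  · have hB : Module.finrank ℝ (Submodule.span ℝ (Set.range
        fun π : {π : Equiv.Perm (Fin N) // IsFpfInv π} => (pairVec π.1 : (Fin N → Fin l) → ℝ))) =
        B.rank := by
      rw [Matrix.rank_eq_finrank_span_row]
      rfl
    rw [hB, Matrix.rank]
    have hinj : Function.Injective (B.mulVecLin.domRestrict (invariantTensors N l)) := by
      rw [← LinearMap.ker_eq_bot, LinearMap.ker_eq_bot']
      intro x hx
      refine Subtype.ext (eq_zero_of_forall_pairVec_dotProduct x.2 fun π hπ => ?_)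
      exact congrFun hx ⟨π, hπ⟩
    rw [← LinearMap.finrank_range_of_inj hinj]
    exact Submodule.finrank_mono (LinearMap.range_domRestrict_le_range _ _)
  · refine Submodule.finrank_mono (Submodule.span_le.2 ?_)
    rintro _ ⟨π, rfl⟩ U hU
    exact tensorPow_mulVec_pairVec hU π.2

variable (μ : Measure (Matrix.orthogonalGroup (Fin l) ℝ)) [IsProbabilityMeasure μ]

theorem integrable_tensorPow (N : ℕ) (i j : Fin N → Fin l) :
    Integrable (fun U : Matrix.orthogonalGroup (Fin l) ℝ =>
      tensorPow (Fin N) (U : Matrix (Fin l) (Fin l) ℝ) i j) μ := by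
  refine Integrable.of_bound (C := 1) ?_ (Filter.Eventually.of_forall fun U => ?_)
  · exact ((continuous_tensorPow.comp continuous_subtype_val).matrix_elem i j).aestronglyMeasurable
  · rw [tensorPow_apply, Real.norm_eq_abs, Finset.abs_prod]
    exact Finset.prod_le_one (fun _ _ => abs_nonneg _) fun _ _ => abs_entry_le_one U _ _

/-- The Haar average of the tensor powers of orthogonal matrices. -/
def averageTensorPow (N : ℕ) : Matrix (Fin N → Fin l) (Fin N → Fin l) ℝ :=
  Matrix.of fun i j => ∫ U, tensorPow (Fin N) (U : Matrix (Fin l) (Fin l) ℝ) i j ∂μ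

theorem tensorPow_mul_averageTensorPow [μ.IsHaarMeasure] (N : ℕ)
    {V : Matrix (Fin l) (Fin l) ℝ} (hV : V * Vᵀ = 1) :
    tensorPow (Fin N) V * averageTensorPow μ N = averageTensorPow μ N := by
  ext i j
  have hV' : V ∈ Matrix.orthogonalGroup (Fin l) ℝ := (Matrix.mem_orthogonalGroup_iff _ _).2 hV
  simp only [averageTensorPow, Matrix.mul_apply, Matrix.of_apply, ← integral_const_mul]
  rw [← integral_finsetSum _ fun k _ => (integrable_tensorPow μ N k j).const_mul _]
  simp only [← Matrix.mul_apply, ← tensorPow_mul]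
  exact integral_mul_left_eq_self (fun U : Matrix.orthogonalGroup (Fin l) ℝ =>
    tensorPow (Fin N) (U : Matrix (Fin l) (Fin l) ℝ) i j) ⟨V, hV'⟩

theorem averageTensorPow_mulVec (N : ℕ) {x : (Fin N → Fin l) → ℝ} (hx : x ∈ invariantTensors N l) :
    averageTensorPow μ N *ᵥ x = x := by
  ext i
  simp only [averageTensorPow, Matrix.mulVec, dotProduct, Matrix.of_apply, ← integral_mul_const]
  rw [← integral_finsetSum _ fun k _ => (integrable_tensorPow μ N i k).mul_const _]
  have : ∀ U : Matrix.orthogonalGroup (Fin l) ℝ,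
      ∑ k, tensorPow (Fin N) (U : Matrix (Fin l) (Fin l) ℝ) i k * x k = x i := fun U =>
    congrFun (hx U ((Matrix.mem_orthogonalGroup_iff _ _).1 U.2)) i
  simp [this]

theorem integral_trace_pow [μ.IsHaarMeasure] (N : ℕ) :
    ∫ U, (U : Matrix (Fin l) (Fin l) ℝ).trace ^ N ∂μ =
      Nat.card {π : Equiv.Perm (Fin N) // IsFpfInv π ∧ lisLE π l} := by
  have htr : ∫ U, (U : Matrix (Fin l) (Fin l) ℝ).trace ^ N ∂μ = (averageTensorPow μ N).trace := by
    simp only [averageTensorPow, Matrix.trace, Matrix.diag, Matrix.of_apply]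
    rw [← integral_finsetSum _ fun k _ => integrable_tensorPow μ N k k]
    refine integral_congr_ae (Filter.Eventually.of_forall fun U => ?_)
    have := trace_tensorPow (α := Fin N) (U : Matrix (Fin l) (Fin l) ℝ)
    rw [Fintype.card_fin] at this
    exact this.symm
  have hproj : LinearMap.IsProj (invariantTensors N l) (averageTensorPow μ N).toLin' := by
    refine ⟨fun x V hV => ?_, fun x hx => averageTensorPow_mulVec μ N hx⟩
    rw [Matrix.toLin'_apply, Matrix.mulVec_mulVec, tensorPow_mul_averageTensorPow μ N hV]
  rw [htr, ← Matrix.trace_toLin'_eq, hproj.trace, finrank_invariantTensors]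

end Haar

theorem IsFpfInv.two_dvd {N : ℕ} {π : Equiv.Perm (Fin N)} (hπ : IsFpfInv π) : 2 ∣ N := by
  obtain ⟨m, -, hm⟩ := hπ.cycleType
  exact ⟨m, by simpa using hm⟩

theorem fpfInvCount_eq (n l : ℕ) :
    fpfInvCount n l = Nat.card {π : Equiv.Perm (Fin (2 * n)) // IsFpfInv π ∧ lisLE π l} := by
  refine Nat.card_congr (Equiv.subtypeEquivRight fun π => ?_)
  rw [IsFpfInv, and_assoc, Equiv.ext_iff]
  rfl

theorem hasSum_integral_exp_trace {l : ℕ} (t : ℝ)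
    (μ : Measure (Matrix.orthogonalGroup (Fin l) ℝ)) [IsProbabilityMeasure μ] :
    HasSum (fun N : ℕ => ∫ U, (t * (U : Matrix (Fin l) (Fin l) ℝ).trace) ^ N / N.factorial ∂μ)
      (∫ U, Real.exp (t * (U : Matrix (Fin l) (Fin l) ℝ).trace) ∂μ) := by
  have hcont : Continuous fun U : Matrix.orthogonalGroup (Fin l) ℝ =>
      (U : Matrix (Fin l) (Fin l) ℝ).trace := continuous_subtype_val.matrix_trace
  have hbound : ∀ U : Matrix.orthogonalGroup (Fin l) ℝ,
      |(U : Matrix (Fin l) (Fin l) ℝ).trace| ≤ l := fun U => by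
    refine (Finset.abs_sum_le_sum_abs _ _).trans ?_
    simpa using Finset.sum_le_sum fun c (_ : c ∈ Finset.univ) => abs_entry_le_one U c c
  refine hasSum_integral_of_dominated_convergence
    (fun N _ => (|t| * l) ^ N / N.factorial) (fun N => ?_) (fun N => ?_) ?_ ?_ ?_
  · exact (((continuous_const.mul hcont).pow N).div_const _).aestronglyMeasurable
  · refine Filter.Eventually.of_forall fun U => ?_
    rw [Real.norm_eq_abs, abs_div, abs_pow, abs_mul, Nat.abs_cast]
    gcongr
    exact hbound U
  · exact Filter.Eventually.of_forall fun U => Real.summable_pow_div_factorial _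
  · exact integrable_const _
  · refine Filter.Eventually.of_forall fun U => ?_
    rw [Real.exp_eq_exp_ℝ]
    exact NormedSpace.expSeries_div_hasSum_exp _

/-- `Σ_{n≥0} f^O_{n,l} · t^{2n}/(2n)! = E_{U∈O(l)} exp(t·Tr(U))`. -/
theorem fpfInv_egf_eq_orthogonal_exp_trace (l : ℕ) (t : ℝ)
    (μ : Measure (Matrix.orthogonalGroup (Fin l) ℝ))
    [μ.IsHaarMeasure] [IsProbabilityMeasure μ] :
    ∑' n : ℕ, (fpfInvCount n l : ℝ) * t ^ (2 * n) / (Nat.factorial (2 * n) : ℝ) =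
      ∫ U, Real.exp (t * Matrix.trace (U : Matrix (Fin l) (Fin l) ℝ)) ∂μ := by
  have h := hasSum_integral_exp_trace t μ
  have hterm : ∀ N : ℕ,
      ∫ U, (t * (U : Matrix (Fin l) (Fin l) ℝ).trace) ^ N / N.factorial ∂μ =
        (Nat.card {π : Equiv.Perm (Fin N) // IsFpfInv π ∧ lisLE π l} : ℝ) * t ^ N / N.factorial :=
    fun N => by
      simp only [mul_pow]
      rw [integral_div, integral_const_mul, integral_trace_pow, mul_comm]
  simp only [hterm] at h
  have hinj : Function.Injective fun n : ℕ => 2 * n := mul_right_injective₀ two_ne_zero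
  rw [← h.tsum_eq]
  simp only [fpfInvCount_eq]
  refine hinj.tsum_eq (f := fun N : ℕ => (Nat.card {π : Equiv.Perm (Fin N) //
    IsFpfInv π ∧ lisLE π l} : ℝ) * t ^ N / N.factorial)
    (Function.support_subset_iff'.2 fun N hN => ?_)
  have : IsEmpty {π : Equiv.Perm (Fin N) // IsFpfInv π ∧ lisLE π l} :=
    ⟨fun π => hN (π.2.1.two_dvd.imp fun _ => Eq.symm)⟩
  simp
end
end
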